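/- arXiv:1711.02337 — 2 statements merged into one kernel-verified Lean document; each statement's English description precedes it below -/
import Mathlib

section
/- For all positive integers n and k, det(d_{n+i+j−2}(q))_{i,j=1}^k = q^{k(k−1)/2} · d_{n,k}(q) as an identity of polynomials in q, where d_m(q) = Σ_{D∈Dyck_{2m}} q^{v(D)} and d_{n,k}(q) = Σ over tuples (D_1 < D_2 < ⋯ < D_k) ∈ Dyck^k_{2n} of q^{v(D_1)+⋯+v(D_k)}. -/
open Finset

attribute [local instance 10] Classical.propDecidable

noncomputable section

namespace Paper

/-! ### Words and permutation statistics (all words are 1-based). -/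

/-- The word (one-line notation, 1-based) of a permutation of `{1, …, N}`:
`word π i = π(i)` for `1 ≤ i ≤ N`, and `0` otherwise. -/
def word {N : ℕ} (π : Equiv.Perm (Fin N)) (i : ℕ) : ℕ :=
  if h : 1 ≤ i ∧ i ≤ N then (π ⟨i - 1, by omega⟩ : ℕ) + 1 else 0

/-- The major index of a word of length `N`: the sum of the descents. -/
def majW (N : ℕ) (w : ℕ → ℕ) : ℕ :=
  ∑ i ∈ Finset.Icc 1 (N - 1), if w (i + 1) < w i then i else 0

/-- The number of inversions of a word of length `N`. -/
def invW (N : ℕ) (w : ℕ → ℕ) : ℕ :=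
  (((Finset.Icc 1 N) ×ˢ (Finset.Icc 1 N)).filter
    fun p => p.1 < p.2 ∧ w p.2 < w p.1).card

/-- The number of descents of a word of length `m`. -/
def desW (m : ℕ) (w : ℕ → ℕ) : ℕ :=
  ((Finset.Icc 1 (m - 1)).filter fun i => w (i + 1) < w i).card

/-- The number of ascents of a word of length `m`. -/
def ascW (m : ℕ) (w : ℕ → ℕ) : ℕ :=
  ((Finset.Icc 1 (m - 1)).filter fun i => w i < w (i + 1)).card

/-- The number of non-descents of a word of length `m`. -/
def ndesW (m : ℕ) (w : ℕ → ℕ) : ℕ :=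
  ((Finset.Icc 1 m).filter fun i => i = m ∨ w i < w (i + 1)).card

/-- The number of non-ascents of a word of length `m`. -/
def nascW (m : ℕ) (w : ℕ → ℕ) : ℕ :=
  ((Finset.Icc 1 m).filter fun i => i = m ∨ ¬ w i < w (i + 1)).card

/-- `π_e = π₂π₄⋯`, the subword of even-position entries, as a 1-based word. -/
def evenWord {N : ℕ} (π : Equiv.Perm (Fin N)) (j : ℕ) : ℕ := word π (2 * j)

/-- `π_o = π₁π₃⋯`, the subword of odd-position entries, as a 1-based word. -/
def oddWord {N : ℕ} (π : Equiv.Perm (Fin N)) (j : ℕ) : ℕ := word π (2 * j - 1)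

/-- A word of length `N` is alternating: `w₁ < w₂ > w₃ < w₄ > ⋯`. -/
def IsAltW (N : ℕ) (w : ℕ → ℕ) : Prop :=
  ∀ i ∈ Finset.Icc 1 (N - 1), (i % 2 = 1 → w i < w (i + 1)) ∧ (i % 2 = 0 → w (i + 1) < w i)

/-- A word of length `N` is reverse alternating: `w₁ > w₂ < w₃ > w₄ < ⋯`. -/
def IsRaltW (N : ℕ) (w : ℕ → ℕ) : Prop :=
  ∀ i ∈ Finset.Icc 1 (N - 1), (i % 2 = 1 → w (i + 1) < w i) ∧ (i % 2 = 0 → w i < w (i + 1))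

/-- `Alt_N`, the set of alternating permutations of `{1, …, N}`. -/
def altPerms (N : ℕ) : Finset (Equiv.Perm (Fin N)) :=
  Finset.univ.filter fun π => IsAltW N (word π)

/-- `Ralt_N`, the set of reverse alternating permutations of `{1, …, N}`. -/
def raltPerms (N : ℕ) : Finset (Equiv.Perm (Fin N)) :=
  Finset.univ.filter fun π => IsRaltW N (word π)

/-- `κ_N = (1)(2,3)(4,5)⋯`, acting on the 1-based values `{1, …, N}`. -/
def kappaNat (N j : ℕ) : ℕ :=
  if j % 2 = 0 ∧ 2 ≤ j ∧ j + 1 ≤ N then j + 1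
  else if j % 2 = 1 ∧ 3 ≤ j ∧ j ≤ N then j - 1
  else j

/-- `η_N = (1,2)(3,4)⋯`, acting on the 1-based values `{1, …, N}`. -/
def etaNat (N j : ℕ) : ℕ :=
  if j % 2 = 1 ∧ j + 1 ≤ N then j + 1
  else if j % 2 = 0 ∧ 2 ≤ j ∧ j ≤ N then j - 1
  else j

/-- `maj(π⁻¹)`. -/
def majInv (N : ℕ) (π : Equiv.Perm (Fin N)) : ℕ := majW N (word π.symm)

/-- `maj(κ_N π⁻¹)`. -/
def majKappaInv (N : ℕ) (π : Equiv.Perm (Fin N)) : ℕ :=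
  majW N fun i => kappaNat N (word π.symm i)

/-- `maj(η_N π⁻¹)`. -/
def majEtaInv (N : ℕ) (π : Equiv.Perm (Fin N)) : ℕ :=
  majW N fun i => etaNat N (word π.symm i)

/-- The reversal permutation `i ↦ N + 1 - i` of `Fin N`. -/
def revPerm (N : ℕ) : Equiv.Perm (Fin N) :=
  ⟨Fin.rev, Fin.rev, fun i => Fin.rev_rev i, fun i => Fin.rev_rev i⟩

/-- `φ(π)ᵢ = (N+1) - π_{N+1-i}`. -/
def phiMap {N : ℕ} (π : Equiv.Perm (Fin N)) : Equiv.Perm (Fin N) :=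
  ((revPerm N).trans π).trans (revPerm N)

/-! ### Lattice paths.

A path with `L` unit steps is encoded by `s : Fin L → Bool` (`true` = up-step `(1,1)`,
`false` = down-step `(1,-1)`). -/

/-- The vertical displacement of the `j`-th step. -/
def stepVal {L : ℕ} (s : Fin L → Bool) (j : ℕ) : ℤ :=
  if h : j < L then (if s ⟨j, h⟩ then 1 else -1) else 0

/-- The height of the path after `i` steps. -/
def pht {L : ℕ} (s : Fin L → Bool) (i : ℕ) : ℤ := ∑ j ∈ Finset.range i, stepVal s j

/-- A Dyck path: stays (weakly) above the `x`-axis and ends at height `0`. -/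
def IsDyck {L : ℕ} (s : Fin L → Bool) : Prop :=
  (∀ i ∈ Finset.range (L + 1), 0 ≤ pht s i) ∧ pht s L = 0

/-- The Dyck paths with `L` steps. -/
def dyckPaths (L : ℕ) : Finset (Fin L → Bool) := Finset.univ.filter fun s => IsDyck s

/-- The (indices of the) valleys of a path: a down-step followed by an up-step. -/
def valleys {L : ℕ} (s : Fin L → Bool) : Finset ℕ :=
  (Finset.Icc 1 (L - 1)).filter fun i => stepVal s (i - 1) = -1 ∧ stepVal s i = 1

/-- The (indices of the) peaks of a path: an up-step followed by a down-step. -/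
def peaks {L : ℕ} (s : Fin L → Bool) : Finset ℕ :=
  (Finset.Icc 1 (L - 1)).filter fun i => stepVal s (i - 1) = 1 ∧ stepVal s i = -1

/-- The (indices of the) high peaks of a path: peaks of height at least `2`. -/
def highPeaks {L : ℕ} (s : Fin L → Bool) : Finset ℕ :=
  (peaks s).filter fun i => 2 ≤ pht s i

/-- The height over abscissa `x` of a path starting at `(-m, 0)`. -/
def aht (m : ℕ) {L : ℕ} (s : Fin L → Bool) (x : ℤ) : ℤ := pht s (x + m).toNat

/-- `D₁ < D₂`, for `D₁` starting at `(-m₁,0)` and `D₂` at `(-m₂,0)`, `m₁ ≤ m₂`: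
strictly below on the common range of abscissas. -/
def PathLT (m₁ m₂ : ℕ) {L₁ L₂ : ℕ} (s₁ : Fin L₁ → Bool) (s₂ : Fin L₂ → Bool) : Prop :=
  ∀ x ∈ Finset.Icc (-(m₁ : ℤ)) (m₁ : ℤ), aht m₁ s₁ x < aht m₂ s₂ x

/-- `D₁ ≤ D₂`: weakly below, sharing no step. -/
def PathLE (m₁ m₂ : ℕ) {L₁ L₂ : ℕ} (s₁ : Fin L₁ → Bool) (s₂ : Fin L₂ → Bool) : Prop :=
  (∀ x ∈ Finset.Icc (-(m₁ : ℤ)) (m₁ : ℤ), aht m₁ s₁ x ≤ aht m₂ s₂ x) ∧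
    ∀ x ∈ Finset.Icc (-(m₁ : ℤ)) ((m₁ : ℤ) - 1),
      ¬(aht m₁ s₁ x = aht m₂ s₂ x ∧ aht m₁ s₁ (x + 1) = aht m₂ s₂ (x + 1))

/-- The abscissas of the common lattice points of two paths. -/
def interPts (m₁ m₂ : ℕ) {L₁ L₂ : ℕ} (s₁ : Fin L₁ → Bool) (s₂ : Fin L₂ → Bool) : Finset ℤ :=
  (Finset.Icc (-(m₁ : ℤ)) (m₁ : ℤ)).filter fun x => aht m₁ s₁ x = aht m₂ s₂ x

/-- `Dyck^k_{2n}`: tuples `(D₁, …, D_k)` with `D_i ∈ Dyck((-n-2i+2,0) → (n+2i-2,0))`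
(0-based: `D_i` has half-length `n + 2i`). -/
abbrev DyckTuple (n k : ℕ) := ∀ i : Fin k, Fin (2 * (n + 2 * (i : ℕ))) → Bool

/-- The tuples `(D₁ ≤ D₂ ≤ ⋯ ≤ D_k) ∈ Dyck^k_{2n}`. -/
def weakTuples (n k : ℕ) : Finset (DyckTuple n k) :=
  Finset.univ.filter fun D =>
    (∀ i : Fin k, IsDyck (D i)) ∧
      ∀ (i : ℕ) (h : i + 1 < k),
        PathLE (n + 2 * i) (n + 2 * (i + 1)) (D ⟨i, by omega⟩) (D ⟨i + 1, h⟩)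

/-- The tuples `(D₁ < D₂ < ⋯ < D_k) ∈ Dyck^k_{2n}`. -/
def strictTuples (n k : ℕ) : Finset (DyckTuple n k) :=
  Finset.univ.filter fun D =>
    (∀ i : Fin k, IsDyck (D i)) ∧
      ∀ (i : ℕ) (h : i + 1 < k),
        PathLT (n + 2 * i) (n + 2 * (i + 1)) (D ⟨i, by omega⟩) (D ⟨i + 1, h⟩)

/-- The lattice points of a path starting at `(-m, 0)`, as a finite subset of `ℤ × ℤ`. -/
def pathPoints (m : ℕ) {L : ℕ} (s : Fin L → Bool) : Finset (ℤ × ℤ) :=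
  (Finset.range (L + 1)).image fun t : ℕ => (-(m : ℤ) + (t : ℤ), pht s t)

/-- The non-valley lattice points of a path starting at `(-m, 0)`. -/
def nonValleyPoints (m : ℕ) {L : ℕ} (s : Fin L → Bool) : Finset (ℤ × ℤ) :=
  ((Finset.range (L + 1)).filter fun t => t ∉ valleys s).image
    fun t : ℕ => (-(m : ℤ) + (t : ℤ), pht s t)

section Weights

variable {F : Type*} [Field F]

/-- The `i`-th lattice point (in `ℤ × ℕ`) of a path starting at `(a, 0)`. -/
def ptOf (a : ℤ) {L : ℕ} (s : Fin L → Bool) (i : ℕ) : ℤ × ℕ := (a + i, (pht s i).toNat)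

/-- `wt_V(D) = ∏_{p ∈ D} wt(p) · ∏_{p ∈ V(D)} w̃t(p)` for a path starting at `(a, 0)`. -/
def wtVal (wt wte : ℤ × ℕ → F) (a : ℤ) {L : ℕ} (s : Fin L → Bool) : F :=
  (∏ i ∈ Finset.range (L + 1), wt (ptOf a s i)) * ∏ i ∈ valleys s, wte (ptOf a s i)

/-- `wt_HP(D) = ∏_{p ∈ D} wt(p) · ∏_{p ∈ HP(D)} w̃t(p)` for a path starting at `(a, 0)`. -/
def wtHigh (wt wte : ℤ × ℕ → F) (a : ℤ) {L : ℕ} (s : Fin L → Bool) : F :=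
  (∏ i ∈ Finset.range (L + 1), wt (ptOf a s i)) * ∏ i ∈ highPeaks s, wte (ptOf a s i)

/-- `∏_{p ∈ D₁ ∩ D₂} f(p)`, for `D₁` starting at `(-m₁,0)` and `D₂` at `(-m₂,0)`. -/
def interProd (f : ℤ × ℕ → F) (m₁ m₂ : ℕ) {L₁ L₂ : ℕ}
    (s₁ : Fin L₁ → Bool) (s₂ : Fin L₂ → Bool) : F :=
  ∏ x ∈ interPts m₁ m₂ s₁ s₂, f (x, (aht m₁ s₁ x).toNat)

/-- The sum over `(D₁ ≤ ⋯ ≤ D_k) ∈ Dyck^k_{2n}` of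
`wt_V(D₁)⋯wt_V(D_k) ∏_{i=1}^{k-1} ∏_{p ∈ D_i ∩ D_{i+1}} (1 - w̃t(p)⁻¹)`. -/
def weakSum (wt wte : ℤ × ℕ → F) (n k : ℕ) : F :=
  ∑ D ∈ weakTuples n k,
    (∏ i : Fin k, wtVal wt wte (-(n : ℤ) - 2 * (i : ℕ)) (D i)) *
      ∏ j : Fin (k - 1),
        interProd (fun p => 1 - (wte p)⁻¹) (n + 2 * (j : ℕ)) (n + 2 * ((j : ℕ) + 1))
          (D ⟨(j : ℕ), by have := j.isLt; omega⟩)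
          (D ⟨(j : ℕ) + 1, by have := j.isLt; omega⟩)

/-- The sum over `(D₁ < ⋯ < D_k) ∈ Dyck^k_{2n}` of `wt_V(D₁)⋯wt_V(D_k)`. -/
def strictSum (wt wte : ℤ × ℕ → F) (n k : ℕ) : F :=
  ∑ D ∈ strictTuples n k, ∏ i : Fin k, wtVal wt wte (-(n : ℤ) - 2 * (i : ℕ)) (D i)

end Weights

/-! ### Schröder paths.

A path with `L` steps is encoded by `st : Fin L → Fin 3`
(`0` = up-step `(1,1)`, `1` = down-step `(1,-1)`, `2` = horizontal step `(2,0)`). -/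

/-- The horizontal displacement of the `j`-th step. -/
def stepX {L : ℕ} (st : Fin L → Fin 3) (j : ℕ) : ℕ :=
  if h : j < L then (if st ⟨j, h⟩ = 2 then 2 else 1) else 0

/-- The vertical displacement of the `j`-th step. -/
def stepY {L : ℕ} (st : Fin L → Fin 3) (j : ℕ) : ℤ :=
  if h : j < L then (if st ⟨j, h⟩ = 0 then 1 else if st ⟨j, h⟩ = 1 then -1 else 0) else 0

/-- The horizontal position (relative to the start) after `j` steps. -/
def xpos {L : ℕ} (st : Fin L → Fin 3) (j : ℕ) : ℕ := ∑ t ∈ Finset.range j, stepX st t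

/-- The height after `j` steps. -/
def ypos {L : ℕ} (st : Fin L → Fin 3) (j : ℕ) : ℤ := ∑ t ∈ Finset.range j, stepY st t

/-- A (little) Schröder path of horizontal span `2m`: nonnegative heights, ends at
height `0`, and no horizontal step on the `x`-axis. -/
def IsSch (m : ℕ) {L : ℕ} (st : Fin L → Fin 3) : Prop :=
  xpos st L = 2 * m ∧ (∀ j ∈ Finset.range (L + 1), 0 ≤ ypos st j) ∧ ypos st L = 0 ∧
    ∀ j ∈ Finset.range L, stepX st j = 2 → ypos st j ≠ 0

/-- The height of a Schröder path over the relative abscissa `x` (midpoints of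
horizontal steps get the height of that horizontal step). -/
def schHeight {L : ℕ} (st : Fin L → Fin 3) (x : ℕ) : ℤ :=
  ∑ t ∈ Finset.range L, if xpos st (t + 1) ≤ x then stepY st t else 0

/-- The relative abscissa `x` is the midpoint of a horizontal step. -/
def IsHMid {L : ℕ} (st : Fin L → Fin 3) (x : ℕ) : Prop :=
  ∃ j ∈ Finset.range L, stepX st j = 2 ∧ xpos st j + 1 = x

/-- The number of horizontal steps of a Schröder path. -/
def hsCount {L : ℕ} (st : Fin L → Fin 3) : ℕ :=
  ((Finset.range L).filter fun j => stepX st j = 2).card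

/-- `wt_Sch(c, S) = c^{hs(S)} ∏_{p ∈ S} wt(p)` for a Schröder path starting at `(a,0)`. -/
def wtSch {F : Type*} [Field F] (wt : ℤ × ℕ → F) (c : F) (a : ℤ) {L : ℕ}
    (st : Fin L → Fin 3) : F :=
  c ^ hsCount st * ∏ j ∈ Finset.range (L + 1), wt (a + xpos st j, (ypos st j).toNat)

/-- `φ_V(S) = D`: the Dyck path `D` (with `L'` steps) is obtained from the Schröder
path `S` by replacing each horizontal step by a down-step followed by an up-step. -/
def PhiVEq {L L' : ℕ} (st : Fin L → Fin 3) (s : Fin L' → Bool) : Prop :=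
  ∀ x ∈ Finset.range (L' + 1),
    pht s x = schHeight st x - (if IsHMid st x then 1 else 0)

/-- `φ_HP(S) = D`: the Dyck path `D` is obtained from the Schröder path `S` by
replacing each horizontal step by an up-step followed by a down-step. -/
def PhiHPEq {L L' : ℕ} (st : Fin L → Fin 3) (s : Fin L' → Bool) : Prop :=
  ∀ x ∈ Finset.range (L' + 1),
    pht s x = schHeight st x + (if IsHMid st x then 1 else 0)

/-! ### Young diagrams, excited and pleasant diagrams, reverse plane partitions. -/

/-- The cells (1-based, matrix coordinates) of the staircase `δ_m = (m-1, m-2, …, 1)`. -/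
def deltaCells (m : ℕ) : Finset (ℕ × ℕ) :=
  ((Finset.Icc 1 m) ×ˢ (Finset.Icc 1 m)).filter fun c => c.1 + c.2 ≤ m

/-- An excited move inside the Young diagram `lam`. -/
def ExcitedStep (lam : Finset (ℕ × ℕ)) (D D' : Finset (ℕ × ℕ)) : Prop :=
  ∃ i j : ℕ, (i, j) ∈ D ∧ (i + 1, j) ∉ D ∧ (i, j + 1) ∉ D ∧ (i + 1, j + 1) ∉ D ∧
    (i + 1, j + 1) ∈ lam ∧ D' = insert (i + 1, j + 1) (D.erase (i, j))

/-- `D` is an excited diagram of `lam/mu`. -/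
def IsExcited (lam mu D : Finset (ℕ × ℕ)) : Prop :=
  Relation.ReflTransGen (ExcitedStep lam) mu D

/-- `P` is a pleasant diagram of `lam/mu`: a subset of `lam \ D` for an excited diagram `D`. -/
def IsPleasant (lam mu : Finset (ℕ × ℕ)) (P : Finset (ℕ × ℕ)) : Prop :=
  ∃ D, IsExcited lam mu D ∧ P ⊆ lam \ D

/-- `p(lam/mu)`, the number of pleasant diagrams of `lam/mu`. -/
def pleasantCount (lam mu : Finset (ℕ × ℕ)) : ℕ :=
  Set.ncard {P : Finset (ℕ × ℕ) | IsPleasant lam mu P}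

/-- A reverse plane partition on the skew shape `shape`: a filling by nonnegative
integers (vanishing off the shape) weakly increasing along rows and columns. -/
def IsRPP (shape : Finset (ℕ × ℕ)) (f : ℕ × ℕ → ℕ) : Prop :=
  (∀ c, c ∉ shape → f c = 0) ∧
    (∀ i j : ℕ, (i, j) ∈ shape → (i, j + 1) ∈ shape → f (i, j) ≤ f (i, j + 1)) ∧
    ∀ i j : ℕ, (i, j) ∈ shape → (i + 1, j) ∈ shape → f (i, j) ≤ f (i + 1, j)

/-- `∑_{π ∈ RPP(shape)} q^{|π|}` as a formal power series in `q`. -/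
def rppGF (shape : Finset (ℕ × ℕ)) : PowerSeries ℚ :=
  PowerSeries.mk fun N =>
    (Set.ncard {f : ℕ × ℕ → ℕ | IsRPP shape f ∧ ∑ c ∈ shape, f c = N} : ℚ)

/-- `(q; q)_m = ∏_{i=1}^m (1 - q^i)` as a formal power series. -/
def pochPS (m : ℕ) : PowerSeries ℚ :=
  ∏ i ∈ Finset.Icc 1 m, (1 - (PowerSeries.X : PowerSeries ℚ) ^ i)

/-- `E*_N(q) = ∑_{π ∈ Alt_N} q^{maj(κ_N π⁻¹)}` as a formal power series. -/
def EstarPS (N : ℕ) : PowerSeries ℚ :=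
  ∑ π ∈ altPerms N, (PowerSeries.X : PowerSeries ℚ) ^ majKappaInv N π

/-- `E*_m(q)/(q;q)_m` for `m ≥ 0`, and `0` for `m < 0`. -/
def EstarEntry (m : ℤ) : PowerSeries ℚ :=
  if m < 0 then 0 else EstarPS m.toNat * (pochPS m.toNat)⁻¹

/-- The Gaussian binomial coefficient `[N choose M]_q` as a formal power series. -/
def gaussPS (N M : ℕ) : PowerSeries ℚ :=
  pochPS N * (pochPS M * pochPS (N - M))⁻¹


/-! ### Lattice paths as height functions

Dyck and Schröder paths from `(-l, 0)` to `(r, 0)` are encoded by their height functions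
`ℤ → ℤ`, extended by an infinite ascent on the left and an infinite descent on the right.
A point over which the height has the wrong parity is the midpoint of a horizontal step. -/

/-- The point of `g` over `x` is the midpoint of a horizontal step. -/
def IsMid (R : ℤ) (g : ℤ → ℤ) (x : ℤ) : Prop := (g x + x + R) % 2 = 1

/-- Admissible endpoints for paths living over the window `[-R, R]`. -/
structure Admissible (R l r : ℤ) : Prop where
  left_nonneg : 0 ≤ l
  right_nonneg : 0 ≤ r
  left_le : l ≤ R
  right_le : r ≤ R
  left_parity : l % 2 = R % 2
  right_parity : r % 2 = R % 2

/-- `g` is the height function of a little Schröder path from `(-l, 0)` to `(r, 0)`. -/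
structure IsSchHeight (R l r : ℤ) (g : ℤ → ℤ) : Prop where
  left : ∀ x, x ≤ -l → g x = l + x
  right : ∀ x, r ≤ x → g x = r - x
  nonneg : ∀ x, -l ≤ x → x ≤ r → 0 ≤ g x
  step : ∀ x, g (x + 1) ≤ g x + 1 ∧ g x ≤ g (x + 1) + 1
  mid : ∀ x, IsMid R g x → g (x - 1) = g x ∧ g (x + 1) = g x ∧ 1 ≤ g x

/-- `g` is the height function of a Dyck path from `(-l, 0)` to `(r, 0)`. -/
def IsDyckHeight (R l r : ℤ) (g : ℤ → ℤ) : Prop :=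
  IsSchHeight R l r g ∧ ∀ x, ¬ IsMid R g x

theorem finite_isSchHeight (R l r : ℤ) : {g | IsSchHeight R l r g}.Finite := by
  have hfin : (Set.univ.pi fun _ : Set.Icc (-l) r => Set.Icc (0 : ℤ) (l + r)).Finite :=
    Set.Finite.pi fun _ => Set.finite_Icc _ _
  refine Set.Finite.of_finite_image
    (f := fun g (x : Set.Icc (-l) r) => g x) (hfin.subset ?_) ?_
  · rintro _ ⟨g, hg, rfl⟩ x -
    replace hg : IsSchHeight R l r g := hg
    have hx := x.2
    refine ⟨hg.nonneg _ hx.1 hx.2, ?_⟩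
    have key : ∀ m : ℕ, g (-l + m) ≤ m := by
      intro m
      induction m with
      | zero => simpa using (hg.left (-l) le_rfl).le
      | succ m ih =>
        have := (hg.step (-l + m)).1
        push_cast
        rw [← add_assoc]
        omega
    have h := key (x.1 + l).toNat
    have hx1 := hx.1
    have hx2 := hx.2
    have e : -l + ((x.1 + l).toNat : ℤ) = x.1 := by omega
    rw [e] at h
    change g x.1 ≤ _
    omega
  · intro g hg g' hg' h
    funext x
    by_cases h1 : x ≤ -l
    · rw [hg.left x h1, hg'.left x h1]
    · by_cases h2 : r ≤ x
      · rw [hg.right x h2, hg'.right x h2]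
      · exact congrFun h ⟨x, by constructor <;> omega⟩

/-- The little Schröder paths from `(-l, 0)` to `(r, 0)`. -/
def schHeights (R l r : ℤ) : Finset (ℤ → ℤ) := (finite_isSchHeight R l r).toFinset

/-- The Dyck paths from `(-l, 0)` to `(r, 0)`. -/
def dyckHeights (R l r : ℤ) : Finset (ℤ → ℤ) :=
  (schHeights R l r).filter fun g => ∀ x, ¬ IsMid R g x

theorem mem_schHeights {R l r : ℤ} {g : ℤ → ℤ} :
    g ∈ schHeights R l r ↔ IsSchHeight R l r g := by
  simp [schHeights]

theorem mem_dyckHeights {R l r : ℤ} {g : ℤ → ℤ} :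
    g ∈ dyckHeights R l r ↔ IsDyckHeight R l r g := by
  simp [dyckHeights, mem_schHeights, IsDyckHeight]

/-- The midpoints of the horizontal steps. -/
def midSet (R : ℤ) (g : ℤ → ℤ) : Finset ℤ := (Icc (-R) R).filter (IsMid R g)

/-- The valleys of a height function. -/
def valleySet (R : ℤ) (g : ℤ → ℤ) : Finset ℤ :=
  (Icc (-R) R).filter fun x => g (x - 1) = g x + 1 ∧ g (x + 1) = g x + 1

/-- The peaks of a height function. -/
def peakSet (R : ℤ) (g : ℤ → ℤ) : Finset ℤ :=
  (Icc (-R) R).filter fun x => g (x - 1) = g x - 1 ∧ g (x + 1) = g x - 1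

/-- The indicator function of a set of abscissas. -/
def bump (A : Finset ℤ) (x : ℤ) : ℤ := if x ∈ A then 1 else 0

theorem bump_eq_one_iff {A : Finset ℤ} {x : ℤ} : bump A x = 1 ↔ x ∈ A := by
  simp [bump]

theorem bump_cases (A : Finset ℤ) (x : ℤ) : bump A x = 1 ∨ bump A x = 0 := by
  by_cases h : x ∈ A <;> simp [bump, h]

/-- `g` lies strictly below `h`. -/
def Below (g h : ℤ → ℤ) : Prop := ∀ x, g x < h x

section Geometry

variable {R l r : ℤ}

theorem IsSchHeight.mem_midSet {g : ℤ → ℤ} (ha : Admissible R l r) (hg : IsSchHeight R l r g)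
    (x : ℤ) : x ∈ midSet R g ↔ IsMid R g x := by
  obtain ⟨_, _, _, _, _, _⟩ := ha
  simp only [midSet, mem_filter, mem_Icc, and_iff_right_iff_imp, IsMid]
  intro h
  by_contra hx
  by_cases h1 : x ≤ -l
  · have := hg.left x h1; omega
  · have := hg.right x (by omega); omega

theorem IsSchHeight.sub_bump {g : ℤ → ℤ} (ha : Admissible R l r) (hg : IsSchHeight R l r g) :
    IsDyckHeight R l r (g - bump (midSet R g)) := by
  have hm := hg.mem_midSet ha
  obtain ⟨_, _, _, _, _, _⟩ := ha
  have hc : ∀ x, (bump (midSet R g) x = 1 ↔ IsMid R g x) ∧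
      (bump (midSet R g) x = 1 ∨ bump (midSet R g) x = 0) :=
    fun x => ⟨bump_eq_one_iff.trans (hm x), bump_cases _ _⟩
  have hmid := hg.mid
  simp only [IsMid] at hc hmid
  refine ⟨⟨fun x hx => ?_, fun x hx => ?_, fun x hx hx' => ?_, fun x => ?_, fun x hx => ?_⟩,
    fun x => ?_⟩
  · have := hg.left x hx; have := hc x; simp only [Pi.sub_apply]; omega
  · have := hg.right x hx; have := hc x; simp only [Pi.sub_apply]; omega
  · have := hg.nonneg x hx hx'; have := hc x; have := hmid x
    simp only [Pi.sub_apply]; omega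
  · have := hg.step x; have := hc x; have := hmid x; have := hc (x + 1)
    have h := hmid (x + 1)
    simp only [Pi.sub_apply, add_sub_cancel_right] at h ⊢
    omega
  · have := hc x; simp only [IsMid, Pi.sub_apply] at hx; omega
  · have := hc x; simp only [IsMid, Pi.sub_apply]; omega

theorem IsSchHeight.add_bump {g : ℤ → ℤ} (ha : Admissible R l r) (hg : IsSchHeight R l r g) :
    IsDyckHeight R l r (g + bump (midSet R g)) := by
  have hm := hg.mem_midSet ha
  obtain ⟨_, _, _, _, _, _⟩ := ha
  have hc : ∀ x, (bump (midSet R g) x = 1 ↔ IsMid R g x) ∧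
      (bump (midSet R g) x = 1 ∨ bump (midSet R g) x = 0) :=
    fun x => ⟨bump_eq_one_iff.trans (hm x), bump_cases _ _⟩
  have hmid := hg.mid
  simp only [IsMid] at hc hmid
  refine ⟨⟨fun x hx => ?_, fun x hx => ?_, fun x hx hx' => ?_, fun x => ?_, fun x hx => ?_⟩,
    fun x => ?_⟩
  · have := hg.left x hx; have := hc x; simp only [Pi.add_apply]; omega
  · have := hg.right x hx; have := hc x; simp only [Pi.add_apply]; omega
  · have := hg.nonneg x hx hx'; have := hc x; have := hmid x
    simp only [Pi.add_apply]; omega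
  · have := hg.step x; have := hc x; have := hmid x; have := hc (x + 1)
    have h := hmid (x + 1)
    simp only [Pi.add_apply, add_sub_cancel_right] at h ⊢
    omega
  · have := hc x; simp only [IsMid, Pi.add_apply] at hx; omega
  · have := hc x; simp only [IsMid, Pi.add_apply]; omega

theorem IsSchHeight.midSet_subset_valleySet {g : ℤ → ℤ} (ha : Admissible R l r)
    (hg : IsSchHeight R l r g) : midSet R g ⊆ valleySet R (g - bump (midSet R g)) := by
  intro x hx
  have hm := hg.mem_midSet ha
  refine mem_filter.2 ⟨(mem_filter.1 hx).1, ?_⟩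
  have h := hg.mid x ((hm x).1 hx)
  have h0 := (hm x).1 hx
  have := bump_eq_one_iff.trans (hm x)
  have := bump_eq_one_iff.trans (hm (x - 1))
  have := bump_eq_one_iff.trans (hm (x + 1))
  have := bump_cases (midSet R g) x
  have := bump_cases (midSet R g) (x - 1)
  have := bump_cases (midSet R g) (x + 1)
  simp only [IsMid, Pi.sub_apply] at *
  omega

theorem IsSchHeight.midSet_subset_peakSet {g : ℤ → ℤ} (ha : Admissible R l r)
    (hg : IsSchHeight R l r g) : midSet R g ⊆ peakSet R (g + bump (midSet R g)) := by
  intro x hx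
  have hm := hg.mem_midSet ha
  refine mem_filter.2 ⟨(mem_filter.1 hx).1, ?_⟩
  have h := hg.mid x ((hm x).1 hx)
  have h0 := (hm x).1 hx
  have := bump_eq_one_iff.trans (hm x)
  have := bump_eq_one_iff.trans (hm (x - 1))
  have := bump_eq_one_iff.trans (hm (x + 1))
  have := bump_cases (midSet R g) x
  have := bump_cases (midSet R g) (x - 1)
  have := bump_cases (midSet R g) (x + 1)
  simp only [IsMid, Pi.add_apply] at *
  omega

theorem IsDyckHeight.midSet_add_bump {D : ℤ → ℤ} (hD : IsDyckHeight R l r D) {A : Finset ℤ}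
    (hA : A ⊆ Icc (-R) R) : midSet R (D + bump A) = A := by
  ext x
  have h := hD.2 x
  have := bump_cases A x
  have hx : bump A x = 1 → x ∈ Icc (-R) R := fun h => hA (bump_eq_one_iff.1 h)
  rw [← bump_eq_one_iff (A := A)]
  simp only [midSet, mem_filter, IsMid, Pi.add_apply, mem_Icc] at *
  omega

theorem IsDyckHeight.midSet_sub_bump {D : ℤ → ℤ} (hD : IsDyckHeight R l r D) {A : Finset ℤ}
    (hA : A ⊆ Icc (-R) R) : midSet R (D - bump A) = A := by
  ext x
  have h := hD.2 x
  have := bump_cases A x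
  have hx : bump A x = 1 → x ∈ Icc (-R) R := fun h => hA (bump_eq_one_iff.1 h)
  rw [← bump_eq_one_iff (A := A)]
  simp only [midSet, mem_filter, IsMid, Pi.sub_apply, mem_Icc] at *
  omega

theorem IsDyckHeight.isSchHeight_add_bump {D : ℤ → ℤ} (ha : Admissible R l r)
    (hD : IsDyckHeight R l r D) {A : Finset ℤ} (hA : A ⊆ valleySet R D) :
    IsSchHeight R l r (D + bump A) := by
  obtain ⟨_, _, _, _, _, _⟩ := ha
  obtain ⟨hS, hD⟩ := hD
  have hv : ∀ x, bump A x = 1 → D (x - 1) = D x + 1 ∧ D (x + 1) = D x + 1 :=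
    fun x hx => (mem_filter.1 (hA (bump_eq_one_iff.1 hx))).2
  have hc := bump_cases A
  simp only [IsMid] at hD
  refine ⟨fun x hx => ?_, fun x hx => ?_, fun x hx hx' => ?_, fun x => ?_, fun x hx => ?_⟩
  · have := hS.left x hx; have := hc x; have := hv x; have := hS.left (x - 1) (by omega)
    simp only [Pi.add_apply]; omega
  · have := hS.right x hx; have := hc x; have := hv x; have := hS.right (x + 1) (by omega)
    simp only [Pi.add_apply]; omega
  · have := hS.nonneg x hx hx'; have := hc x
    simp only [Pi.add_apply]; omega
  · have := hS.step x; have := hc x; have := hv x; have := hc (x + 1)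
    have h := hv (x + 1)
    simp only [Pi.add_apply, add_sub_cancel_right] at h ⊢
    omega
  · have := hc x; have := hv x; have := hD x; have := hc (x + 1); have h1 := hv (x + 1)
    have := hc (x - 1); have h2 := hv (x - 1)
    simp only [IsMid, Pi.add_apply, add_sub_cancel_right, sub_add_cancel] at hx h1 h2 ⊢
    have : -l ≤ x := by
      by_contra h
      have := hS.left x (by omega); have := hS.left (x - 1) (by omega); omega
    have : x ≤ r := by
      by_contra h
      have := hS.right x (by omega); have := hS.right (x + 1) (by omega); omega
    have := hS.nonneg x ‹_› ‹_›
    omega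

theorem IsDyckHeight.isSchHeight_sub_bump {X D : ℤ → ℤ} (ha : Admissible R (l - 2) (r - 2))
    (hX : IsDyckHeight R (l - 2) (r - 2) X) (hD : IsDyckHeight R l r D) (hXD : Below X D)
    {A : Finset ℤ} (hA : A ⊆ peakSet R D) :
    IsSchHeight R l r (D - bump A) := by
  obtain ⟨_, _, _, _, _, _⟩ := ha
  obtain ⟨hS, hD⟩ := hD
  have hv : ∀ x, bump A x = 1 → D (x - 1) = D x - 1 ∧ D (x + 1) = D x - 1 :=
    fun x hx => (mem_filter.1 (hA (bump_eq_one_iff.1 hx))).2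
  have hc := bump_cases A
  simp only [IsMid] at hD
  have high : ∀ x, bump A x = 1 → 2 ≤ D x := by
    intro x hx
    have h := hv x hx
    have a1 := hS.left (x - 1)
    have a2 := hS.right (x + 1)
    have a0 := hS.left x
    have a3 := hS.right x
    have b1 := hX.1.nonneg (x - 1)
    have b2 := hX.1.nonneg (x + 1)
    have b0 := hX.1.nonneg x
    have c1 := hXD (x - 1)
    have c2 := hXD (x + 1)
    have c0 := hXD x
    have e0 := hD x
    have a4 := hS.left (x + 1)
    have a5 := hS.right (x - 1)
    have d1 := hS.nonneg (x - 1)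
    have d2 := hS.nonneg (x + 1)
    by_contra hcon
    omega
  refine ⟨fun x hx => ?_, fun x hx => ?_, fun x hx hx' => ?_, fun x => ?_, fun x hx => ?_⟩
  · have := hS.left x hx; have := hc x; have := high x
    simp only [Pi.sub_apply]; omega
  · have := hS.right x hx; have := hc x; have := high x
    simp only [Pi.sub_apply]; omega
  · have := hS.nonneg x hx hx'; have := hc x; have := high x
    simp only [Pi.sub_apply]; omega
  · have := hS.step x; have := hc x; have := hv x; have := hc (x + 1)
    have h := hv (x + 1)
    simp only [Pi.sub_apply, add_sub_cancel_right] at h ⊢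
    omega
  · have := hc x; have := hv x; have := hD x; have := hc (x + 1); have h1 := hv (x + 1)
    have := hc (x - 1); have h2 := hv (x - 1); have := high x
    simp only [IsMid, Pi.sub_apply, add_sub_cancel_right, sub_add_cancel] at hx h1 h2 ⊢
    omega

end Geometry

section Counting

variable {R l r : ℤ} {𝔸 : Type*} [CommRing 𝔸]

theorem sum_Icc_sub_telescope (f : ℤ → ℤ) (a : ℤ) (m : ℕ) :
    ∑ x ∈ Icc a (a + m), (f x - f (x + 1)) = f a - f (a + m + 1) := by
  induction m with
  | zero => simp
  | succ m ih =>
    have e : Icc a (a + (m + 1 : ℕ)) = insert (a + m + 1) (Icc a (a + m)) := by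
      ext x
      simp only [mem_Icc, mem_insert]
      push_cast
      omega
    rw [e, sum_insert (by simp [mem_Icc, add_assoc]), ih]
    push_cast
    ring_nf

theorem IsDyckHeight.step_cases {D : ℤ → ℤ} (hD : IsDyckHeight R l r D) (x : ℤ) :
    D (x + 1) = D x + 1 ∨ D (x + 1) = D x - 1 := by
  have h := hD.1.step x
  have h0 := hD.2 x
  have h1 := hD.2 (x + 1)
  simp only [IsMid] at h0 h1
  omega

theorem IsDyckHeight.card_peakSet {D : ℤ → ℤ} (ha : Admissible R l r)
    (hD : IsDyckHeight R l r D) : (peakSet R D).card = (valleySet R D).card + 1 := by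
  obtain ⟨_, _, _, _, _, _⟩ := ha
  have key : ∑ x ∈ Icc (-R) R, ((D x - D (x - 1)) - (D (x + 1) - D (x + 1 - 1))) = 2 := by
    have h := sum_Icc_sub_telescope (fun x => D x - D (x - 1)) (-R) (2 * R).toNat
    have e : -R + ((2 * R).toNat : ℤ) = R := by omega
    rw [e] at h
    rw [h, add_sub_cancel_right, hD.1.left (-R) (by omega), hD.1.left (-R - 1) (by omega),
      hD.1.right R (by omega), hD.1.right (R + 1) (by omega)]
    ring
  have hs : ∀ x ∈ Icc (-R) R, (D x - D (x - 1)) - (D (x + 1) - D (x + 1 - 1)) =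
      2 * ((if D (x - 1) = D x - 1 ∧ D (x + 1) = D x - 1 then (1 : ℤ) else 0) -
        if D (x - 1) = D x + 1 ∧ D (x + 1) = D x + 1 then 1 else 0) := by
    intro x _
    have h1 := hD.step_cases x
    have h2 := hD.step_cases (x - 1)
    rw [sub_add_cancel] at h2
    rw [add_sub_cancel_right]
    split_ifs <;> omega
  rw [sum_congr rfl hs, ← mul_sum, sum_sub_distrib, ← Finset.natCast_card_filter,
    ← Finset.natCast_card_filter] at key
  change 2 * (((peakSet R D).card : ℤ) - ((valleySet R D).card : ℤ)) = 2 at key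
  omega

theorem sum_schHeights_eq_sum_valleySet (ha : Admissible R l r) (q : 𝔸)
    (φ : (ℤ → ℤ) → 𝔸) :
    ∑ g ∈ schHeights R l r, (q - 1) ^ (midSet R g).card * φ g =
      ∑ D ∈ dyckHeights R l r, ∑ A ∈ (valleySet R D).powerset,
        (q - 1) ^ A.card * φ (D + bump A) := by
  rw [sum_sigma']
  refine sum_bij' (fun g _ => ⟨g - bump (midSet R g), midSet R g⟩)
    (fun p _ => p.1 + bump p.2) ?_ ?_ ?_ ?_ ?_
  · intro g hg
    rw [mem_schHeights] at hg
    simp only [mem_sigma, mem_dyckHeights, mem_powerset]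
    exact ⟨hg.sub_bump ha, hg.midSet_subset_valleySet ha⟩
  · rintro ⟨D, A⟩ h
    simp only [mem_sigma, mem_dyckHeights, mem_powerset] at h
    exact mem_schHeights.2 (h.1.isSchHeight_add_bump ha h.2)
  · intro g _
    simp
  · rintro ⟨D, A⟩ h
    simp only [mem_sigma, mem_dyckHeights, mem_powerset] at h
    have e := h.1.midSet_add_bump (h.2.trans (filter_subset _ _))
    simp [e]
  · intro g _
    simp

theorem sum_schHeights_eq_sum_peakSet {X : ℤ → ℤ} (ha : Admissible R l r)
    (ha' : Admissible R (l - 2) (r - 2)) (hX : IsDyckHeight R (l - 2) (r - 2) X) (q : 𝔸)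
    (φ : (ℤ → ℤ) → 𝔸) :
    ∑ g ∈ schHeights R l r with Below X g, (q - 1) ^ (midSet R g).card * φ g =
      ∑ D ∈ dyckHeights R l r with Below X D, ∑ A ∈ (peakSet R D).powerset,
        (q - 1) ^ A.card * φ (D - bump A) := by
  rw [sum_sigma']
  refine sum_bij' (fun g _ => ⟨g + bump (midSet R g), midSet R g⟩)
    (fun p _ => p.1 - bump p.2) ?_ ?_ ?_ ?_ ?_
  · intro g hg
    rw [mem_filter, mem_schHeights] at hg
    simp only [mem_sigma, mem_filter, mem_dyckHeights, mem_powerset]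
    refine ⟨⟨hg.1.add_bump ha, fun x => ?_⟩, hg.1.midSet_subset_peakSet ha⟩
    have := hg.2 x
    have := bump_cases (midSet R g) x
    simp only [Pi.add_apply]
    omega
  · rintro ⟨D, A⟩ h
    simp only [mem_sigma, mem_filter, mem_dyckHeights, mem_powerset] at h
    refine mem_filter.2 ⟨mem_schHeights.2 (hX.isSchHeight_sub_bump ha' h.1.1 h.1.2 h.2),
      fun x => ?_⟩
    have h1 := h.1.2 x
    have := bump_cases A x
    have h2 := hX.2 x
    have h3 := h.1.1.2 x
    simp only [IsMid, Pi.sub_apply] at h2 h3 ⊢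
    omega
  · intro g _
    simp
  · rintro ⟨D, A⟩ h
    simp only [mem_sigma, mem_filter, mem_dyckHeights, mem_powerset] at h
    have e := h.1.1.midSet_sub_bump (h.2.trans (filter_subset _ _))
    simp [e]
  · intro g _
    simp

theorem sum_powerset_pow (q : 𝔸) {ι : Type*} (V : Finset ι) :
    ∑ A ∈ V.powerset, (q - 1) ^ A.card = q ^ V.card := by
  simpa using sum_pow_mul_eq_add_pow (q - 1) 1 V

theorem sum_powerset_superset_pow (q : 𝔸) {ι : Type*} [DecidableEq ι] (T V : Finset ι) :
    ∑ A ∈ V.powerset with T ⊆ A, (q - 1) ^ A.card =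
      if T ⊆ V then (q - 1) ^ T.card * q ^ (V.card - T.card) else 0 := by
  split_ifs with h
  · rw [← card_sdiff_of_subset h, ← sum_powerset_pow q (V \ T), mul_sum]
    refine sum_bij' (fun A _ => A \ T) (fun B _ => B ∪ T) ?_ ?_ ?_ ?_ ?_
    · intro A hA
      simp only [mem_filter, mem_powerset] at hA ⊢
      exact sdiff_subset_sdiff hA.1 le_rfl
    · intro B hB
      simp only [mem_filter, mem_powerset] at hB ⊢
      exact ⟨union_subset (hB.trans sdiff_subset) h, subset_union_right⟩
    · intro A hA
      simp only [mem_filter, mem_powerset] at hA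
      exact sdiff_union_of_subset hA.2
    · intro B hB
      rw [mem_powerset] at hB
      rw [union_sdiff_right]
      exact sdiff_eq_self_of_disjoint (disjoint_of_subset_left hB sdiff_disjoint)
    · intro A hA
      simp only [mem_filter, mem_powerset] at hA
      rw [← pow_add, card_sdiff_of_subset hA.2,
        Nat.add_sub_cancel' (card_le_card hA.2)]
  · rw [filter_eq_empty_iff.2 fun A hA hT => h (hT.trans (mem_powerset.1 hA)), sum_empty]

end Counting

section Flip

variable {R c : ℤ} {𝔸 : Type*} [CommRing 𝔸]

theorem IsDyckHeight.add_bump_below_iff {l r l' r' : ℤ} {D Y : ℤ → ℤ}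
    (hD : IsDyckHeight R l r D) (hY : IsDyckHeight R l' r' Y) (A : Finset ℤ) :
    Below (D + bump A) Y ↔ Below D Y := by
  refine forall_congr' fun x => ?_
  have h1 := hD.2 x
  have h2 := hY.2 x
  have := bump_cases A x
  simp only [IsMid, Pi.add_apply] at *
  omega

/-- The contact set of two paths over the window. -/
def contactSet (R : ℤ) (D Y : ℤ → ℤ) : Finset ℤ := (Icc (-R) R).filter fun x => D x = Y x

theorem below_of_outside {g h : ℤ → ℤ} (hc : 0 ≤ c) (hg : IsSchHeight R c c g)
    (hh : IsSchHeight R (c + 2) (c + 2) h) {x : ℤ} (hx : x ∉ Icc (-c) c) : g x < h x := by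
  rw [mem_Icc] at hx
  by_cases h1 : x ≤ -c
  · rw [hg.left x h1]
    by_cases h2 : x ≤ -(c + 2)
    · rw [hh.left x h2]; omega
    · have := hh.nonneg x (by omega) (by omega); omega
  · have h1 : c ≤ x := by omega
    rw [hg.right x h1]
    by_cases h2 : c + 2 ≤ x
    · rw [hh.right x h2]; omega
    · have := hh.nonneg x (by omega) (by omega); omega

theorem IsDyckHeight.sub_bump_below_iff {D Y : ℤ → ℤ} (ha : Admissible R c c)
    (hD : IsDyckHeight R c c D) (hY : IsDyckHeight R (c + 2) (c + 2) Y) (A : Finset ℤ) :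
    Below (D - bump A) Y ↔ (∀ x, D x ≤ Y x) ∧ contactSet R D Y ⊆ A := by
  have hp : ∀ x, D x < Y x ∨ D x = Y x ∨ Y x + 2 ≤ D x := by
    intro x
    have h1 := hD.2 x
    have h2 := hY.2 x
    simp only [IsMid] at h1 h2
    omega
  constructor
  · intro h
    refine ⟨fun x => ?_, fun x hx => ?_⟩
    · have := h x; have := hp x; have := bump_cases A x
      simp only [Pi.sub_apply] at *; omega
    · have e := (mem_filter.1 hx).2
      have := h x; have := bump_cases A x
      rw [← bump_eq_one_iff]
      simp only [Pi.sub_apply] at *; omega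
  · rintro ⟨h, hA⟩ x
    have h1 := h x
    have := bump_cases A x
    have hR := ha.left_le
    have h0 := ha.left_nonneg
    simp only [Pi.sub_apply]
    by_cases hx : x ∈ Icc (-R) R
    · by_cases e : D x = Y x
      · have := bump_eq_one_iff.2 (hA (mem_filter.2 ⟨hx, e⟩)); omega
      · omega
    · have hx' : x ∉ Icc (-c) c := fun h' => hx (Icc_subset_Icc (neg_le_neg hR) hR h')
      have := below_of_outside h0 hD.1 hY.1 hx'
      omega

theorem IsDyckHeight.below_add_bump_iff {D Y : ℤ → ℤ} (ha : Admissible R c c)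
    (hD : IsDyckHeight R c c D) (hY : IsDyckHeight R (c + 2) (c + 2) Y) (A : Finset ℤ) :
    Below D (Y + bump A) ↔ (∀ x, D x ≤ Y x) ∧ contactSet R D Y ⊆ A := by
  rw [← hD.sub_bump_below_iff ha hY]
  refine forall_congr' fun x => ?_
  simp only [Pi.add_apply, Pi.sub_apply]
  omega

theorem IsDyckHeight.contactSet_subset_iff {D Y : ℤ → ℤ} (ha : Admissible R c c)
    (hD : IsDyckHeight R c c D) (hY : IsDyckHeight R (c + 2) (c + 2) Y) :
    contactSet R D Y ⊆ peakSet R D ↔ contactSet R D Y ⊆ valleySet R Y := by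
  have hT : ∀ x, D x = Y x → x ∈ contactSet R D Y := fun x e => by
    refine mem_filter.2 ⟨?_, e⟩
    by_contra hx
    have hR := ha.left_le
    exact (below_of_outside ha.left_nonneg hD.1 hY.1
      fun h => hx (Icc_subset_Icc (neg_le_neg hR) hR h)).ne e
  constructor
  · intro hs x hx
    obtain ⟨hx', e⟩ := mem_filter.1 hx
    refine mem_filter.2 ⟨hx', ?_⟩
    have p := (mem_filter.1 (hs hx)).2
    have p1 := fun e => (mem_filter.1 (hs (hT (x + 1) e))).2
    have p2 := fun e => (mem_filter.1 (hs (hT (x - 1) e))).2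
    have s1 := hY.step_cases x
    have s2 := hY.step_cases (x - 1)
    rw [sub_add_cancel] at s2 p2
    rw [add_sub_cancel_right] at p1
    omega
  · intro hs x hx
    obtain ⟨hx', e⟩ := mem_filter.1 hx
    refine mem_filter.2 ⟨hx', ?_⟩
    have p := (mem_filter.1 (hs hx)).2
    have p1 := fun e => (mem_filter.1 (hs (hT (x + 1) e))).2
    have p2 := fun e => (mem_filter.1 (hs (hT (x - 1) e))).2
    have s1 := hD.step_cases x
    have s2 := hD.step_cases (x - 1)
    rw [sub_add_cancel] at s2 p2
    rw [add_sub_cancel_right] at p1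
    omega

/-- The weighted count of the ways to lift valleys of `D` to horizontal steps so that the
resulting Schröder path lies strictly above `X`. -/
def liftWeight (R : ℤ) (q : 𝔸) (X D : ℤ → ℤ) : 𝔸 :=
  ∑ A ∈ (valleySet R D).powerset with Below X (D + bump A), (q - 1) ^ A.card

theorem sum_dyckHeights_liftWeight {X : ℤ → ℤ} (ha : Admissible R c c)
    (ha' : Admissible R (c - 2) (c - 2)) (hX : IsDyckHeight R (c - 2) (c - 2) X) (q : 𝔸) :
    ∑ D ∈ dyckHeights R c c, liftWeight R q X D =
      q * ∑ D ∈ dyckHeights R c c with Below X D, q ^ (valleySet R D).card := by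
  have h1 := sum_schHeights_eq_sum_valleySet ha q fun g => if Below X g then 1 else 0
  have h2 := sum_schHeights_eq_sum_peakSet ha ha' hX q fun _ => 1
  simp only [mul_ite, mul_one, mul_zero, ← sum_filter] at h1 h2
  simp only [liftWeight]
  rw [← h1, h2, mul_sum]
  refine sum_congr rfl fun D hD => ?_
  rw [sum_powerset_pow, (mem_dyckHeights.1 (mem_filter.1 hD).1).card_peakSet ha, pow_succ']

theorem sum_dyckHeights_liftWeight_below {X Y : ℤ → ℤ} (ha : Admissible R c c)
    (ha' : Admissible R (c - 2) (c - 2)) (hX : IsDyckHeight R (c - 2) (c - 2) X)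
    (hY : IsDyckHeight R (c + 2) (c + 2) Y) (q : 𝔸) :
    ∑ D ∈ dyckHeights R c c with Below D Y, liftWeight R q X D * q ^ (valleySet R Y).card =
      q * ∑ D ∈ dyckHeights R c c with Below X D,
        q ^ (valleySet R D).card * liftWeight R q D Y := by
  have h1 := sum_schHeights_eq_sum_valleySet ha q fun g =>
    if Below X g then if Below g Y then 1 else 0 else 0
  have h2 := sum_schHeights_eq_sum_peakSet ha ha' hX q fun g => if Below g Y then 1 else 0
  rw [sum_filter] at h2
  simp only [mul_ite, mul_one, mul_zero] at h1 h2
  have h3 : ∑ D ∈ dyckHeights R c c with Below D Y, liftWeight R q X D =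
      ∑ D ∈ dyckHeights R c c, ∑ A ∈ (valleySet R D).powerset,
        if Below X (D + bump A) then
          if Below (D + bump A) Y then (q - 1) ^ A.card else 0 else 0 := by
    rw [sum_filter]
    refine sum_congr rfl fun D hD => ?_
    simp only [(mem_dyckHeights.1 hD).add_bump_below_iff hY, liftWeight, sum_filter]
    split_ifs <;> simp
  rw [← sum_mul, h3, ← h1, h2, sum_mul, mul_sum]
  refine sum_congr rfl fun D hD => ?_
  have hD := mem_dyckHeights.1 (mem_filter.1 hD).1
  simp only [hD.sub_bump_below_iff ha hY, liftWeight, hD.below_add_bump_iff ha hY]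
  by_cases hle : ∀ x, D x ≤ Y x
  · have hiff := hD.contactSet_subset_iff ha hY
    simp only [hle, implies_true, true_and]
    rw [← sum_filter, sum_powerset_superset_pow, sum_powerset_superset_pow]
    by_cases hp : contactSet R D Y ⊆ peakSet R D
    · have hv := hiff.1 hp
      rw [if_pos hp, if_pos hv, ← mul_assoc q, ← pow_succ', ← hD.card_peakSet ha, mul_assoc,
        ← pow_add, mul_left_comm, ← pow_add]
      congr 2
      have := card_le_card hp
      have := card_le_card hv
      omega
    · rw [if_neg hp, if_neg fun h => hp (hiff.2 h)]
      simp
  · simp [hle]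

end Flip

section Chains

variable {R : ℤ} {𝔸 : Type*} [CommRing 𝔸]

/-- The entries of the tuple `p` increase strictly. -/
def BelowChain {k : ℕ} (p : Fin k → ℤ → ℤ) : Prop :=
  ∀ (i : ℕ) (h : i + 1 < k), Below (p ⟨i, by omega⟩) (p ⟨i + 1, h⟩)

/-- The weighted count of chains `X < D₁ < ⋯ < D_m` with `D_i ∈ s (c + 2 (i - 1))`. -/
def chainSum (s : ℤ → Finset (ℤ → ℤ)) (w : (ℤ → ℤ) → 𝔸) : ℕ → ℤ → (ℤ → ℤ) → 𝔸
  | 0, _, _ => 1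
  | m + 1, c, X => ∑ D ∈ s c with Below X D, w D * chainSum s w m (c + 2) D

theorem sum_piFinset_cons {m : ℕ} {α : Type*} (s : Fin (m + 1) → Finset α)
    (f : (Fin (m + 1) → α) → 𝔸) :
    ∑ p ∈ Fintype.piFinset s, f p =
      ∑ a ∈ s 0, ∑ p ∈ Fintype.piFinset (fun i : Fin m => s i.succ), f (Fin.cons a p) := by
  rw [sum_sigma']
  refine sum_bij' (fun p _ => ⟨p 0, Fin.tail p⟩) (fun x _ => Fin.cons x.1 x.2) ?_ ?_ ?_ ?_ ?_
  · intro p hp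
    simp only [Fintype.mem_piFinset, mem_sigma] at hp ⊢
    exact ⟨hp 0, fun i => hp i.succ⟩
  · rintro ⟨a, p⟩ h
    simp only [Fintype.mem_piFinset, mem_sigma] at h ⊢
    exact Fin.cases h.1 h.2
  · intro p _
    simp
  · rintro ⟨a, p⟩ _
    simp
  · intro p _
    simp

theorem belowChain_cons {m : ℕ} {D : ℤ → ℤ} {p : Fin (m + 1) → ℤ → ℤ} :
    BelowChain (Fin.cons D p : Fin (m + 2) → ℤ → ℤ) ↔ Below D (p 0) ∧ BelowChain p := by
  constructor
  · intro h
    have h0 := h 0 (by omega)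
    exact ⟨h0, fun i hi => h (i + 1) (by omega)⟩
  · rintro ⟨h, hp⟩ i hi
    cases i with
    | zero => exact h
    | succ i => exact hp i (by omega)

theorem sum_belowChain_eq_chainSum (s : ℤ → Finset (ℤ → ℤ)) (w : (ℤ → ℤ) → 𝔸) (m : ℕ)
    (c : ℤ) (P : (ℤ → ℤ) → Prop) :
    ∑ p ∈ Fintype.piFinset (fun i : Fin (m + 1) => s (c + 2 * ((i : ℕ) : ℤ)))
        with P (p 0) ∧ BelowChain p, ∏ i, w (p i) =
      ∑ D ∈ s c with P D, w D * chainSum s w m (c + 2) D := by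
  induction m generalizing c P with
  | zero =>
    have h : ∀ p : Fin 1 → ℤ → ℤ, BelowChain p := fun p i hi => by omega
    rw [sum_filter, sum_piFinset_cons, sum_filter]
    simp [h, chainSum]
  | succ m ih =>
    rw [sum_filter, sum_piFinset_cons, sum_filter]
    have e : (fun i : Fin (m + 1) => s (c + 2 * (((i.succ : Fin (m + 2)) : ℕ) : ℤ))) =
        fun i : Fin (m + 1) => s (c + 2 + 2 * ((i : ℕ) : ℤ)) := by
      funext i
      congr 1
      push_cast [Fin.val_succ]
      ring
    rw [e]
    simp only [Fin.val_zero, Nat.cast_zero, mul_zero, add_zero]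
    refine sum_congr rfl fun D _ => ?_
    simp only [Fin.cons_zero, belowChain_cons, Fin.prod_univ_succ (n := m + 1), Fin.cons_succ]
    split_ifs with h
    · simp only [h, true_and]
      rw [← sum_filter, ← mul_sum, ih]
      rfl
    · simp [h]

/-- The weighted count of chains of Schröder paths above a given path. -/
abbrev schChainSum (R : ℤ) (q : 𝔸) : ℕ → ℤ → (ℤ → ℤ) → 𝔸 :=
  chainSum (fun c => schHeights R c c) fun g => (q - 1) ^ (midSet R g).card

/-- The weighted count of chains of Dyck paths above a given path. -/
abbrev dyckChainSum (R : ℤ) (q : 𝔸) : ℕ → ℤ → (ℤ → ℤ) → 𝔸 :=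
  chainSum (fun c => dyckHeights R c c) fun g => q ^ (valleySet R g).card

theorem IsDyckHeight.add_bump_below_sch_iff {l r l' r' : ℤ} {D S : ℤ → ℤ}
    (hD : IsDyckHeight R l r D) (hS : IsSchHeight R l' r' S) {A : Finset ℤ}
    (hA : A ⊆ valleySet R D) : Below (D + bump A) S ↔ Below D S := by
  constructor
  · intro h x
    have := h x
    have := bump_cases A x
    simp only [Pi.add_apply] at *
    omega
  · intro h x
    have h0 := h x
    have h1 := h (x + 1)
    have hp := hD.2 x
    have hm := hS.mid x
    have hv : bump A x = 1 → D (x + 1) = D x + 1 :=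
      fun hx => (mem_filter.1 (hA (bump_eq_one_iff.1 hx))).2.2
    have := bump_cases A x
    simp only [Pi.add_apply, IsMid] at *
    omega

theorem schChainSum_add_bump {l r c : ℤ} {D : ℤ → ℤ} (hD : IsDyckHeight R l r D)
    {A : Finset ℤ} (hA : A ⊆ valleySet R D) (q : 𝔸) (m : ℕ) :
    schChainSum R q m c (D + bump A) = schChainSum R q m c D := by
  cases m with
  | zero => rfl
  | succ m =>
    refine sum_congr (filter_congr fun S hS => ?_) fun _ _ => rfl
    exact hD.add_bump_below_sch_iff (mem_schHeights.1 hS) hA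

theorem schChainSum_succ {c : ℤ} (ha : Admissible R c c) (X : ℤ → ℤ) (q : 𝔸) (m : ℕ) :
    schChainSum R q (m + 1) c X =
      ∑ D ∈ dyckHeights R c c, liftWeight R q X D * schChainSum R q m (c + 2) D := by
  have h := sum_schHeights_eq_sum_valleySet ha q fun g =>
    if Below X g then schChainSum R q m (c + 2) g else 0
  simp only [mul_ite, mul_zero, ← sum_filter] at h
  refine h.trans (sum_congr rfl fun D hD => ?_)
  rw [liftWeight, sum_mul]
  refine sum_congr rfl fun A hA => ?_
  rw [schChainSum_add_bump (mem_dyckHeights.1 hD) (mem_powerset.1 (mem_filter.1 hA).1)]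

theorem Admissible.mono {c c' : ℤ} (ha : Admissible R c' c') (h0 : 0 ≤ c) (h : c ≤ c')
    (hp : c % 2 = c' % 2) : Admissible R c c := by
  obtain ⟨_, _, _, _, _, _⟩ := ha
  constructor <;> omega

theorem schChainSum_succ_eq_sum_dyckHeights {c : ℤ} {X : ℤ → ℤ} (q : 𝔸) (m : ℕ)
    (hc : 2 ≤ c) (ha : Admissible R (c + 2 * m) (c + 2 * m))
    (hX : IsDyckHeight R (c - 2) (c - 2) X) :
    schChainSum R q (m + 1) c X = q ^ (m + 1) *
      ∑ D ∈ dyckHeights R c c with Below X D,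
        q ^ (valleySet R D).card * schChainSum R q m (c + 2) D := by
  have hac : Admissible R c c := ha.mono (by omega) (by omega) (by omega)
  have hac' : Admissible R (c - 2) (c - 2) := ha.mono (by omega) (by omega) (by omega)
  induction m generalizing c X with
  | zero =>
    rw [schChainSum_succ hac]
    simp [schChainSum, chainSum, sum_dyckHeights_liftWeight hac hac' hX]
  | succ m ih =>
    have ha2 : Admissible R (c + 2 + 2 * m) (c + 2 + 2 * m) := by
      convert ha using 1 <;> push_cast <;> ring
    have hac2 : Admissible R (c + 2) (c + 2) := ha2.mono (by omega) (by omega) (by omega)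
    rw [schChainSum_succ hac]
    have h1 : ∀ D ∈ dyckHeights R c c, schChainSum R q (m + 1) (c + 2) D = q ^ (m + 1) *
        ∑ Y ∈ dyckHeights R (c + 2) (c + 2) with Below D Y,
          q ^ (valleySet R Y).card * schChainSum R q m (c + 2 + 2) Y := fun D hD => by
      have e : c + 2 - 2 = c := by ring
      exact ih (by omega) ha2 (by rw [e]; exact mem_dyckHeights.1 hD) hac2 (by rw [e]; exact hac)
    have h2 : ∀ Y ∈ dyckHeights R (c + 2) (c + 2), _ := fun Y hY =>
      sum_dyckHeights_liftWeight_below hac hac' hX (mem_dyckHeights.1 hY) q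
    calc ∑ D ∈ dyckHeights R c c, liftWeight R q X D * schChainSum R q (m + 1) (c + 2) D
        = q ^ (m + 1) * ∑ Y ∈ dyckHeights R (c + 2) (c + 2),
            (∑ D ∈ dyckHeights R c c with Below D Y,
              liftWeight R q X D * q ^ (valleySet R Y).card) *
              schChainSum R q m (c + 2 + 2) Y := by
          simp only [sum_filter, sum_mul]
          rw [sum_comm, mul_sum]
          refine sum_congr rfl fun D hD => ?_
          rw [h1 D hD, sum_filter, mul_sum, mul_sum, mul_sum]
          refine sum_congr rfl fun Y _ => ?_
          split_ifs <;> ring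
      _ = q ^ (m + 2) * ∑ Y ∈ dyckHeights R (c + 2) (c + 2),
            (∑ D ∈ dyckHeights R c c with Below X D,
              q ^ (valleySet R D).card * liftWeight R q D Y) *
              schChainSum R q m (c + 2 + 2) Y := by
          rw [mul_sum, mul_sum]
          refine sum_congr rfl fun Y hY => ?_
          rw [h2 Y hY]
          ring
      _ = _ := by
          congr 1
          simp only [sum_mul]
          rw [sum_comm]
          refine sum_congr rfl fun D _ => ?_
          rw [schChainSum_succ hac2, mul_sum]
          refine sum_congr rfl fun Y _ => ?_
          ring

theorem schChainSum_eq_dyckChainSum {c : ℤ} {X : ℤ → ℤ} (q : 𝔸) (m : ℕ)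
    (hc : 2 ≤ c) (ha : Admissible R (c - 2 + 2 * m) (c - 2 + 2 * m))
    (hX : IsDyckHeight R (c - 2) (c - 2) X) :
    schChainSum R q m c X = q ^ (m + 1).choose 2 * dyckChainSum R q m c X := by
  induction m generalizing c X with
  | zero => simp [schChainSum, dyckChainSum, chainSum]
  | succ m ih =>
    have ha1 : Admissible R (c + 2 * m) (c + 2 * m) := by
      convert ha using 1 <;> push_cast <;> ring
    rw [schChainSum_succ_eq_sum_dyckHeights q m hc ha1 hX]
    have e : c + 2 - 2 = c := by ring
    have h1 : ∀ D ∈ dyckHeights R c c, schChainSum R q m (c + 2) D =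
        q ^ (m + 1).choose 2 * dyckChainSum R q m (c + 2) D := fun D hD =>
      ih (by omega) (by rw [e]; exact ha1) (by rw [e]; exact mem_dyckHeights.1 hD)
    have hch : (m + 1 + 1).choose 2 = m + 1 + (m + 1).choose 2 := by
      rw [Nat.choose_succ_succ' (m + 1) 1, Nat.choose_one_right]
    rw [hch, pow_add q (m + 1) ((m + 1).choose 2), mul_assoc]
    congr 1
    change _ = _ * ∑ D ∈ dyckHeights R c c with Below X D, _ * dyckChainSum R q m (c + 2) D
    rw [mul_sum]
    refine sum_congr rfl fun D hD => ?_
    rw [h1 D (mem_filter.1 hD).1]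
    ring

theorem sum_sch_belowChain_eq_sum_dyck_belowChain {c : ℤ} (q : 𝔸) (m : ℕ)
    (hc : 0 ≤ c) (ha : Admissible R (c + 2 * m) (c + 2 * m)) :
    ∑ p ∈ Fintype.piFinset (fun i : Fin (m + 1) =>
          schHeights R (c + 2 * ((i : ℕ) : ℤ)) (c + 2 * ((i : ℕ) : ℤ)))
        with BelowChain p, ∏ i, (q - 1) ^ (midSet R (p i)).card =
      q ^ (m + 1).choose 2 * ∑ p ∈ Fintype.piFinset (fun i : Fin (m + 1) =>
          dyckHeights R (c + 2 * ((i : ℕ) : ℤ)) (c + 2 * ((i : ℕ) : ℤ)))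
        with BelowChain p, ∏ i, q ^ (valleySet R (p i)).card := by
  have h1 := sum_belowChain_eq_chainSum (fun c => schHeights R c c)
    (fun g => (q - 1) ^ (midSet R g).card) m c fun _ => True
  have h2 := sum_belowChain_eq_chainSum (fun c => dyckHeights R c c)
    (fun g => q ^ (valleySet R g).card) m c fun _ => True
  simp only [true_and, filter_true] at h1 h2
  change _ = ∑ D ∈ schHeights R c c, _ * schChainSum R q m (c + 2) D at h1
  change _ = ∑ D ∈ dyckHeights R c c, _ * dyckChainSum R q m (c + 2) D at h2
  have hac : Admissible R c c := ha.mono hc (by omega) (by omega)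
  have e : c + 2 - 2 = c := by ring
  rw [h1, h2, sum_schHeights_eq_sum_valleySet hac, mul_sum]
  refine sum_congr rfl fun D hD => ?_
  have hD := mem_dyckHeights.1 hD
  have h3 : ∀ A ∈ (valleySet R D).powerset, schChainSum R q m (c + 2) (D + bump A) = _ :=
    fun A hA => schChainSum_add_bump hD (mem_powerset.1 hA) q m
  rw [sum_congr rfl fun A hA => congrArg _ (h3 A hA), ← sum_mul, sum_powerset_pow,
    schChainSum_eq_dyckChainSum q m (by omega) (by rw [e]; exact ha) (by rw [e]; exact hD)]
  ring

end Chains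

section NonIntersecting

variable {R : ℤ}

theorem IsSchHeight.splice {l r l' r' τ : ℤ} {g h : ℤ → ℤ} (ha : Admissible R l r)
    (ha' : Admissible R l' r') (hg : IsSchHeight R l r g) (hh : IsSchHeight R l' r' h)
    (hτ : g τ = h τ) : IsSchHeight R l r' fun x => if x ≤ τ then g x else h x := by
  obtain ⟨_, _, _, _, _, _⟩ := ha
  obtain ⟨_, _, _, _, _, _⟩ := ha'
  have t1 := hg.left τ
  have t2 := hg.right τ
  have t3 := hg.nonneg τ
  have t4 := hh.left τ
  have t5 := hh.right τ
  have t6 := hh.nonneg τ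
  refine ⟨fun x hx => ?_, fun x hx => ?_, fun x hx hx' => ?_, fun x => ?_, fun x => ?_⟩
  · have := hg.left x
    have := hh.left x
    split_ifs <;> omega
  · have := hg.right x
    have := hh.right x
    rcases eq_or_ne x τ with rfl | hne
    · simp only [le_refl, if_true]; omega
    · split_ifs <;> omega
  · have := hg.nonneg x
    have := hh.nonneg x
    have := hg.right x
    have := hh.left x
    split_ifs <;> omega
  · have := hg.step x
    have := hh.step x
    rcases lt_trichotomy x τ with h1 | rfl | h1
    · simp only [h1.le, Int.add_one_le_iff.2 h1, if_true]; omega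
    · simp only [le_refl, if_true, if_neg (show ¬ x + 1 ≤ x by omega)]; omega
    · simp only [if_neg (show ¬ x ≤ τ by omega), if_neg (show ¬ x + 1 ≤ τ by omega)]; omega
  · have h2 := hg.mid x
    have h3 := hh.mid x
    simp only [IsMid] at h2 h3 ⊢
    rcases lt_trichotomy x τ with h1 | rfl | h1
    · simp only [h1.le, Int.add_one_le_iff.2 h1, if_true, if_pos (show x - 1 ≤ τ by omega)]
      exact h2
    · simp only [le_refl, if_true, if_neg (show ¬ x + 1 ≤ x by omega),
        if_pos (show x - 1 ≤ x by omega)]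
      omega
    · simp only [if_neg (show ¬ x ≤ τ by omega), if_neg (show ¬ x + 1 ≤ τ by omega)]
      split_ifs with h4
      · obtain rfl : τ = x - 1 := by omega
        rw [hτ]
        exact h3
      · exact h3

theorem IsSchHeight.below_of_ne {l r l' r' : ℤ} {g h : ℤ → ℤ} (ha : Admissible R l r)
    (ha' : Admissible R l' r') (hg : IsSchHeight R l r g) (hh : IsSchHeight R l' r' h)
    (hll : l < l') (hne : ∀ x, g x ≠ h x) : Below g h := by
  obtain ⟨_, _, _, _, _, _⟩ := ha
  obtain ⟨_, _, _, _, _, _⟩ := ha'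
  intro x
  rcases le_total x (-R) with hx | hx
  · rw [hg.left x (by omega), hh.left x (by omega)]
    omega
  · induction x, hx using Int.leInduction with
    | base =>
      rw [hg.left (-R) (by omega), hh.left (-R) (by omega)]
      omega
    | succ x _ ih =>
      have := hg.step x
      have := hh.step x
      have := hg.mid x
      have := hh.mid x
      have := hne (x + 1)
      simp only [IsMid] at *
      omega

variable {k : ℕ}

/-- Two members of the family `p` meet over `x`. -/
def Meets (p : Fin k → ℤ → ℤ) (x : ℤ) : Prop := ∃ i j, i ≠ j ∧ p i x = p j x

/-- A transposition exchanging two indices at which `v` takes the same value, if any. -/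
def meetSwap (v : Fin k → ℤ) : Equiv.Perm (Fin k) :=
  if h : ∃ ij : Fin k × Fin k, ij.1 ≠ ij.2 ∧ v ij.1 = v ij.2 then
    Equiv.swap h.choose.1 h.choose.2 else 1

theorem meetSwap_mul_self (v : Fin k → ℤ) : meetSwap v * meetSwap v = 1 := by
  unfold meetSwap
  split_ifs <;> simp

theorem meetSwap_meetSwap (v : Fin k → ℤ) (i : Fin k) : meetSwap v (meetSwap v i) = i := by
  rw [← Equiv.Perm.mul_apply, meetSwap_mul_self, Equiv.Perm.one_apply]

theorem apply_meetSwap (v : Fin k → ℤ) (i : Fin k) : v (meetSwap v i) = v i := by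
  unfold meetSwap
  split_ifs with h
  · rw [Equiv.swap_apply_def]
    split_ifs with h1 h2
    · rw [h1, h.choose_spec.2]
    · rw [h2, h.choose_spec.2]
    · rfl
  · rfl

theorem sign_meetSwap {v : Fin k → ℤ} (h : ∃ i j, i ≠ j ∧ v i = v j) :
    Equiv.Perm.sign (meetSwap v) = -1 := by
  obtain ⟨i, j, h⟩ := h
  have h' : ∃ ij : Fin k × Fin k, ij.1 ≠ ij.2 ∧ v ij.1 = v ij.2 := ⟨(i, j), h⟩
  rw [meetSwap, dif_pos h', Equiv.Perm.sign_swap h'.choose_spec.1]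

/-- The first abscissa over which two members of the family meet. -/
def firstMeet (p : Fin k → ℤ → ℤ) : ℤ := sInf {x | Meets p x}

/-- The transposition of two members meeting at the first meeting point. -/
def firstMeetSwap (p : Fin k → ℤ → ℤ) : Equiv.Perm (Fin k) :=
  meetSwap fun i => p i (firstMeet p)

theorem firstMeetSwap_mul_self (p : Fin k → ℤ → ℤ) : firstMeetSwap p * firstMeetSwap p = 1 :=
  meetSwap_mul_self _

/-- Exchange the tails after the first meeting point. -/
def tailSwap (p : Fin k → ℤ → ℤ) (i : Fin k) (x : ℤ) : ℤ :=
  if x ≤ firstMeet p then p i x else p (firstMeetSwap p i) x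

theorem tailSwap_firstMeet (p : Fin k → ℤ → ℤ) (i : Fin k) :
    tailSwap p i (firstMeet p) = p i (firstMeet p) := if_pos le_rfl

theorem meets_tailSwap_iff (p : Fin k → ℤ → ℤ) (x : ℤ) : Meets (tailSwap p) x ↔ Meets p x := by
  unfold Meets tailSwap
  split_ifs
  · rfl
  · constructor
    · rintro ⟨i, j, h, e⟩
      exact ⟨_, _, (firstMeetSwap p).injective.ne h, e⟩
    · rintro ⟨i, j, h, e⟩
      refine ⟨(firstMeetSwap p).symm i, (firstMeetSwap p).symm j,
        (firstMeetSwap p).symm.injective.ne h, ?_⟩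
      simpa using e

theorem firstMeet_tailSwap (p : Fin k → ℤ → ℤ) : firstMeet (tailSwap p) = firstMeet p := by
  unfold firstMeet
  simp only [meets_tailSwap_iff]

theorem firstMeetSwap_tailSwap (p : Fin k → ℤ → ℤ) :
    firstMeetSwap (tailSwap p) = firstMeetSwap p := by
  unfold firstMeetSwap
  simp only [firstMeet_tailSwap, tailSwap_firstMeet]

theorem tailSwap_tailSwap (p : Fin k → ℤ → ℤ) : tailSwap (tailSwap p) = p := by
  funext i x
  rw [tailSwap, firstMeet_tailSwap, firstMeetSwap_tailSwap]
  simp only [tailSwap]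
  split_ifs
  · rfl
  · rw [firstMeetSwap, meetSwap_meetSwap]

theorem sum_card_midSet_tailSwap (p : Fin k → ℤ → ℤ) :
    ∑ i, (midSet R (tailSwap p i)).card = ∑ i, (midSet R (p i)).card := by
  simp only [midSet, card_filter]
  rw [sum_comm, sum_comm (s := univ)]
  refine sum_congr rfl fun x _ => ?_
  by_cases h : x ≤ firstMeet p
  · exact sum_congr rfl fun i _ => if_congr (by simp [IsMid, tailSwap, h]) rfl rfl
  · exact (sum_congr rfl fun i _ => if_congr (by simp [IsMid, tailSwap, h]) rfl rfl).trans
      (Equiv.sum_comp (firstMeetSwap p) fun i => if IsMid R (p i) x then 1 else 0)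

/-- Families of little Schröder paths from `(-c i, 0)` to `(c (σ i), 0)`. -/
def schFamilies (R : ℤ) (c : Fin k → ℤ) (σ : Equiv.Perm (Fin k)) :
    Finset (Fin k → ℤ → ℤ) :=
  Fintype.piFinset fun i => schHeights R (c i) (c (σ i))

theorem mem_schFamilies {c : Fin k → ℤ} {σ : Equiv.Perm (Fin k)} {p : Fin k → ℤ → ℤ} :
    p ∈ schFamilies R c σ ↔ ∀ i, IsSchHeight R (c i) (c (σ i)) (p i) := by
  simp [schFamilies, mem_schHeights]

theorem tailSwap_mem_schFamilies {c : Fin k → ℤ} (ha : ∀ i j, Admissible R (c i) (c j))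
    {σ : Equiv.Perm (Fin k)} {p : Fin k → ℤ → ℤ} (hp : p ∈ schFamilies R c σ) :
    tailSwap p ∈ schFamilies R c (σ * firstMeetSwap p) := by
  rw [mem_schFamilies] at hp ⊢
  intro i
  exact (hp i).splice (ha _ _) (ha _ _) (hp (firstMeetSwap p i))
    (apply_meetSwap (fun i => p i (firstMeet p)) i).symm

theorem sign_firstMeetSwap {c : Fin k → ℤ} (hc : StrictMono c)
    (ha : ∀ i j, Admissible R (c i) (c j)) {σ : Equiv.Perm (Fin k)} {p : Fin k → ℤ → ℤ}
    (hp : p ∈ schFamilies R c σ) (hm : ∃ x, Meets p x) :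
    Equiv.Perm.sign (firstMeetSwap p) = -1 := by
  rw [mem_schFamilies] at hp
  refine sign_meetSwap (Int.csInf_mem (s := {x | Meets p x}) hm ⟨-R, ?_⟩)
  rintro x ⟨i, j, hij, e⟩
  by_contra hx
  have h1 := (ha i i).left_le
  have h2 := (ha j j).left_le
  rw [(hp i).left x (by omega), (hp j).left x (by omega)] at e
  exact hij (hc.injective (by omega))

theorem eq_one_of_not_meets {c : Fin k → ℤ} (hc : StrictMono c)
    (ha : ∀ i j, Admissible R (c i) (c j)) {σ : Equiv.Perm (Fin k)} {p : Fin k → ℤ → ℤ}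
    (hp : p ∈ schFamilies R c σ) (hm : ¬ ∃ x, Meets p x) : σ = 1 ∧ BelowChain p := by
  rw [mem_schFamilies] at hp
  have hb : ∀ i j, i < j → Below (p i) (p j) := fun i j hij =>
    (hp i).below_of_ne (ha _ _) (ha _ _) (hp j) (hc hij)
      fun x e => hm ⟨x, i, j, hij.ne, e⟩
  refine ⟨?_, fun i h => hb _ _ (by simp [Fin.lt_def])⟩
  have hσ : StrictMono σ := fun i j hij => by
    have h := hb i j hij R
    rw [(hp i).right R (ha (σ i) (σ i)).right_le, (hp j).right R (ha (σ j) (σ j)).right_le] at h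
    exact hc.lt_iff_lt.1 (by omega)
  have := Subsingleton.elim (hσ.orderIsoOfSurjective σ σ.surjective) (OrderIso.refl (Fin k))
  ext i
  exact congrArg Fin.val (DFunLike.congr_fun this i)

theorem BelowChain.not_meets {p : Fin k → ℤ → ℤ} (hp : BelowChain p) : ¬ ∃ x, Meets p x := by
  rintro ⟨x, i, j, hij, e⟩
  cases k with
  | zero => exact i.elim0
  | succ k =>
    have : StrictMono fun i => p i x :=
      Fin.strictMono_iff_lt_succ.2 fun i => hp i (by omega) x
    exact hij (this.injective e)

/-- The Lindström–Gessel–Viennot lemma for little Schröder paths. -/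
theorem det_sum_schHeights {𝔸 : Type*} [CommRing 𝔸] (q : 𝔸) {c : Fin k → ℤ}
    (hc : StrictMono c) (ha : ∀ i j, Admissible R (c i) (c j)) :
    (Matrix.of fun i j => ∑ g ∈ schHeights R (c i) (c j), (q - 1) ^ (midSet R g).card).det =
      ∑ p ∈ Fintype.piFinset (fun i => schHeights R (c i) (c i)) with BelowChain p,
        ∏ i, (q - 1) ^ (midSet R (p i)).card := by
  have h0 : ∑ a ∈ (univ : Finset (Equiv.Perm (Fin k))).sigma fun σ =>
      (schFamilies R c σ).filter fun p => ∃ x, Meets p x,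
      Equiv.Perm.sign a.1 • ∏ i, (q - 1) ^ (midSet R (a.2 i)).card = 0 := by
    refine sum_involution (fun a _ => ⟨a.1 * firstMeetSwap a.2, tailSwap a.2⟩) ?_ ?_ ?_ ?_
    · rintro ⟨σ, p⟩ h
      simp only [mem_sigma, mem_univ, true_and, mem_filter] at h
      simp only [prod_pow_eq_pow_sum, sum_card_midSet_tailSwap, Equiv.Perm.sign_mul,
        sign_firstMeetSwap hc ha h.1 h.2, mul_neg, mul_one, Units.neg_smul, add_neg_cancel]
    · rintro ⟨σ, p⟩ h _ e
      simp only [mem_sigma, mem_univ, true_and, mem_filter] at h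
      have hs := sign_firstMeetSwap hc ha h.1 h.2
      have e' : σ * firstMeetSwap p = σ := congrArg Sigma.fst e
      rw [mul_eq_left.1 e', Equiv.Perm.sign_one] at hs
      exact absurd hs (by decide)
    · rintro ⟨σ, p⟩ h
      simp only [mem_sigma, mem_univ, true_and, mem_filter, meets_tailSwap_iff] at h ⊢
      exact ⟨tailSwap_mem_schFamilies ha h.1, h.2⟩
    · rintro ⟨σ, p⟩ h
      simp [firstMeetSwap_tailSwap, tailSwap_tailSwap, mul_assoc, firstMeetSwap_mul_self]
  rw [sum_sigma] at h0
  rw [← Matrix.det_transpose, Matrix.det_apply]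
  simp only [Matrix.transpose_apply, Matrix.of_apply, prod_univ_sum]
  have h1 : ∀ σ : Equiv.Perm (Fin k),
      Equiv.Perm.sign σ • ∑ p ∈ Fintype.piFinset fun i => schHeights R (c i) (c (σ i)),
        ∏ i, (q - 1) ^ (midSet R (p i)).card =
      (∑ p ∈ schFamilies R c σ with ∃ x, Meets p x,
        Equiv.Perm.sign σ • ∏ i, (q - 1) ^ (midSet R (p i)).card) +
      ∑ p ∈ schFamilies R c σ with ¬ ∃ x, Meets p x,
        Equiv.Perm.sign σ • ∏ i, (q - 1) ^ (midSet R (p i)).card := fun σ => by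
    rw [smul_sum, sum_filter_add_sum_filter_not, schFamilies]
  rw [sum_congr rfl fun σ _ => h1 σ, sum_add_distrib, h0, zero_add,
    sum_eq_single 1 (fun σ _ hσ => ?_) (by simp)]
  · refine sum_congr ?_ fun p _ => by simp
    ext p
    simp only [mem_filter]
    exact and_congr_right fun hp =>
      ⟨fun hm => (eq_one_of_not_meets hc ha hp hm).2, BelowChain.not_meets⟩
  · rw [filter_eq_empty_iff.2 fun p hp hm => hσ (eq_one_of_not_meets hc ha hp hm).1, sum_empty]

end NonIntersecting

section Translation

variable {R : ℤ} {L : ℕ}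

theorem stepVal_cases (s : Fin L → Bool) {j : ℕ} (hj : j < L) :
    stepVal s j = 1 ∨ stepVal s j = -1 := by
  rw [stepVal, dif_pos hj]
  split_ifs <;> simp

theorem pht_succ (s : Fin L → Bool) (i : ℕ) : pht s (i + 1) = pht s i + stepVal s i :=
  sum_range_succ _ _

/-- The height function of the path `s` started at `(-l, 0)`. -/
def pathHeight (l : ℤ) (s : Fin L → Bool) (x : ℤ) : ℤ :=
  if x < -l then l + x else if x ≤ L - l then pht s (x + l).toNat else L - l - x

/-- The step sequence of the path with height function `g` started at `(-l, 0)`. -/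
def heightSteps (l : ℤ) (L : ℕ) (g : ℤ → ℤ) (j : Fin L) : Bool :=
  decide (g (-l + j + 1) = g (-l + j) + 1)

theorem pathHeight_natCast (l : ℤ) (s : Fin L → Bool) {i : ℕ} (hi : i ≤ L) :
    pathHeight l s (-l + i) = pht s i := by
  rw [pathHeight, if_neg (by omega), if_pos (by omega)]
  congr 1
  omega

theorem pathHeight_of_le {l : ℤ} {s : Fin L → Bool} {x : ℤ} (hx : x ≤ -l) :
    pathHeight l s x = l + x := by
  rcases hx.lt_or_eq with h | rfl
  · exact if_pos h
  · simpa [pht] using pathHeight_natCast l s (Nat.zero_le L)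

theorem IsDyck.pathHeight_of_ge {l : ℤ} {s : Fin L → Bool} (hs : IsDyck s)
    {x : ℤ} (hx : L - l ≤ x) : pathHeight l s x = L - l - x := by
  rcases hx.lt_or_eq with h | rfl
  · rw [pathHeight, if_neg (by omega), if_neg (by omega)]
  · have := pathHeight_natCast l s le_rfl
    rw [show (L : ℤ) - l = -l + L by ring, this, hs.2]
    ring

theorem IsDyck.pathHeight_succ {l : ℤ} {s : Fin L → Bool} (hs : IsDyck s) (x : ℤ) :
    pathHeight l s (x + 1) = pathHeight l s x + 1 ∨
      pathHeight l s (x + 1) = pathHeight l s x - 1 := by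
  rcases lt_or_ge x (-l) with h | h
  · rw [pathHeight_of_le (by omega), pathHeight_of_le (by omega)]
    omega
  rcases lt_or_ge x (L - l) with h' | h'
  · obtain ⟨i, hi⟩ : ∃ i : ℕ, x = -l + i := ⟨(x + l).toNat, by omega⟩
    subst hi
    have e := pathHeight_natCast l s (i := i + 1) (by omega)
    push_cast at e
    rw [add_assoc, e, pathHeight_natCast l s (by omega), pht_succ]
    have := stepVal_cases s (j := i) (by omega)
    omega
  · rw [hs.pathHeight_of_ge (by omega), hs.pathHeight_of_ge h']
    omega

theorem IsDyck.isDyckHeight {l r : ℤ} (ha : Admissible R l r) (hL : (L : ℤ) = l + r)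
    {s : Fin L → Bool} (hs : IsDyck s) : IsDyckHeight R l r (pathHeight l s) := by
  obtain ⟨_, _, _, _, _, _⟩ := ha
  have hp : ∀ x, (pathHeight l s x + x + R) % 2 = 0 := by
    intro x
    induction x using Int.inductionOn' (b := -l) with
    | zero => rw [pathHeight_of_le le_rfl]; omega
    | succ x _ ih => have := hs.pathHeight_succ (l := l) x; omega
    | pred x _ ih =>
      have := hs.pathHeight_succ (l := l) (x - 1)
      rw [sub_add_cancel] at this
      omega
  have hm : ∀ x, ¬ IsMid R (pathHeight l s) x := fun x h => by
    have := hp x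
    simp only [IsMid] at h
    omega
  refine ⟨⟨fun x hx => pathHeight_of_le hx, fun x hx => ?_, fun x hx hx' => ?_, fun x => ?_,
    fun x hx => absurd hx (hm x)⟩, hm⟩
  · rw [hs.pathHeight_of_ge (by omega)]
    omega
  · rw [pathHeight, if_neg (by omega), if_pos (by omega)]
    exact hs.1 _ (mem_range.2 (by omega))
  · have := hs.pathHeight_succ (l := l) x
    omega

theorem IsDyckHeight.pht_heightSteps {l r : ℤ} {g : ℤ → ℤ} (hg : IsDyckHeight R l r g) {i : ℕ}
    (hi : i ≤ L) : pht (heightSteps l L g) i = g (-l + i) := by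
  induction i with
  | zero => simp [pht, hg.1.left (-l) le_rfl]
  | succ i ih =>
    rw [pht_succ, ih (by omega), stepVal, dif_pos (by omega)]
    have := hg.step_cases (-l + i)
    push_cast
    rw [← add_assoc]
    simp only [heightSteps, decide_eq_true_eq]
    split_ifs <;> omega

theorem IsDyckHeight.isDyck_heightSteps {l r : ℤ} (hL : (L : ℤ) = l + r) {g : ℤ → ℤ}
    (hg : IsDyckHeight R l r g) : IsDyck (heightSteps l L g) := by
  refine ⟨fun i hi => ?_, ?_⟩
  · rw [mem_range] at hi
    rw [hg.pht_heightSteps (by omega)]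
    exact hg.1.nonneg _ (by omega) (by omega)
  · rw [hg.pht_heightSteps le_rfl, hg.1.right _ (by omega)]
    omega

theorem IsDyckHeight.pathHeight_heightSteps {l r : ℤ} (hL : (L : ℤ) = l + r) {g : ℤ → ℤ}
    (hg : IsDyckHeight R l r g) : pathHeight l (heightSteps l L g) = g := by
  funext x
  unfold pathHeight
  split_ifs with h1 h2
  · rw [hg.1.left x (by omega)]
  · rw [hg.pht_heightSteps (by omega)]
    congr 1
    omega
  · rw [hg.1.right x (by omega)]
    omega

theorem stepVal_eq_sub (l : ℤ) (s : Fin L → Bool) {j : ℕ} (hj : j < L) :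
    stepVal s j = pathHeight l s (-l + j + 1) - pathHeight l s (-l + j) := by
  have e := pathHeight_natCast l s (i := j + 1) (by omega)
  push_cast at e
  rw [add_assoc, e, pathHeight_natCast l s hj.le, pht_succ]
  ring

theorem heightSteps_pathHeight (l : ℤ) (s : Fin L → Bool) :
    heightSteps l L (pathHeight l s) = s := by
  funext j
  have h := stepVal_eq_sub l s j.2
  have h' : stepVal s j = if s j then 1 else -1 := dif_pos j.2
  rw [h'] at h
  rw [heightSteps]
  cases hj : s j <;> simp only [hj, if_true, Bool.false_eq_true, if_false] at h <;>
    simp only [decide_eq_true_eq, decide_eq_false_iff_not] <;> omega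

theorem IsDyck.card_valleys {l r : ℤ} (ha : Admissible R l r) (hL : (L : ℤ) = l + r)
    {s : Fin L → Bool} (hs : IsDyck s) :
    (valleySet R (pathHeight l s)).card = (valleys s).card := by
  have hd := (hs.isDyckHeight ha hL).1
  obtain ⟨_, _, _, _, _, _⟩ := ha
  refine card_bij' (fun x _ => (x + l).toNat) (fun i _ => (i : ℤ) - l) ?_ ?_ ?_ ?_
  all_goals simp only [valleySet, valleys, mem_filter, mem_Icc]
  · rintro x ⟨hx, h1, h2⟩
    have h3 : -l < x := by
      by_contra h
      rw [hd.left x (by omega), hd.left (x - 1) (by omega)] at h1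
      omega
    have h4 : x < r := by
      by_contra h
      rw [hd.right x (by omega), hd.right (x + 1) (by omega)] at h2
      omega
    have e1 := stepVal_eq_sub l s (j := (x + l).toNat) (by omega)
    have e2 := stepVal_eq_sub l s (j := (x + l).toNat - 1) (by omega)
    rw [show -l + ((x + l).toNat : ℤ) = x by omega] at e1
    rw [show -l + (((x + l).toNat - 1 : ℕ) : ℤ) = x - 1 by omega, sub_add_cancel] at e2
    omega
  · rintro i ⟨hi, h1, h2⟩
    have e1 := stepVal_eq_sub l s (j := i) (by omega)
    have e2 := stepVal_eq_sub l s (j := i - 1) (by omega)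
    rw [show -l + (i : ℤ) = i - l by ring] at e1
    rw [show -l + ((i - 1 : ℕ) : ℤ) = i - l - 1 by omega, sub_add_cancel] at e2
    omega
  · rintro x ⟨hx, h1, h2⟩
    by_contra h
    rw [hd.left x (by omega), hd.left (x - 1) (by omega)] at h1
    omega
  · intro i _
    omega

theorem sum_dyckHeights_eq_sum_dyckPaths {𝔸 : Type*} [CommRing 𝔸] (q : 𝔸) {l r : ℤ}
    (ha : Admissible R l r) (hL : (L : ℤ) = l + r) :
    ∑ g ∈ dyckHeights R l r, q ^ (valleySet R g).card =
      ∑ s ∈ dyckPaths L, q ^ (valleys s).card := by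
  have hmem : ∀ s : Fin L → Bool, s ∈ dyckPaths L ↔ IsDyck s := fun s => by simp [dyckPaths]
  refine sum_bij' (fun g _ => heightSteps l L g) (fun s _ => pathHeight l s) ?_ ?_ ?_ ?_ ?_
  · exact fun g hg => (hmem _).2 ((mem_dyckHeights.1 hg).isDyck_heightSteps hL)
  · exact fun s hs => mem_dyckHeights.2 (((hmem s).1 hs).isDyckHeight ha hL)
  · exact fun g hg => (mem_dyckHeights.1 hg).pathHeight_heightSteps hL
  · exact fun s _ => heightSteps_pathHeight l s
  · intro g hg
    have hg := mem_dyckHeights.1 hg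
    rw [← (hg.isDyck_heightSteps hL).card_valleys ha hL, hg.pathHeight_heightSteps hL]

theorem sum_schHeights_eq_sum_dyckPaths {𝔸 : Type*} [CommRing 𝔸] (q : 𝔸) {l r : ℤ}
    (ha : Admissible R l r) (hL : (L : ℤ) = l + r) :
    ∑ g ∈ schHeights R l r, (q - 1) ^ (midSet R g).card =
      ∑ s ∈ dyckPaths L, q ^ (valleys s).card := by
  have h := sum_schHeights_eq_sum_valleySet ha q fun _ => 1
  simp only [mul_one, sum_powerset_pow] at h
  rw [h, sum_dyckHeights_eq_sum_dyckPaths q ha hL]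

theorem pathLT_iff_below {m₁ m₂ L₁ L₂ : ℕ} (hm : m₂ = m₁ + 2) (h₁ : L₁ = 2 * m₁)
    (h₂ : L₂ = 2 * m₂) {s₁ : Fin L₁ → Bool} {s₂ : Fin L₂ → Bool} (hs₁ : IsDyck s₁)
    (hs₂ : IsDyck s₂) :
    PathLT m₁ m₂ s₁ s₂ ↔ Below (pathHeight m₁ s₁) (pathHeight m₂ s₂) := by
  have ha : Admissible (m₂ : ℤ) (m₂ : ℤ) (m₂ : ℤ) := by constructor <;> omega
  have d₁ := hs₁.isDyckHeight (ha.mono (c := m₁) (by omega) (by omega) (by omega)) (by omega)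
  have d₂ := hs₂.isDyckHeight ha (by omega)
  have e : ∀ x ∈ Icc (-(m₁ : ℤ)) m₁,
      aht m₁ s₁ x = pathHeight m₁ s₁ x ∧ aht m₂ s₂ x = pathHeight m₂ s₂ x := by
    intro x hx
    rw [mem_Icc] at hx
    constructor <;> rw [pathHeight, if_neg (by omega), if_pos (by omega), aht]
  constructor
  · intro h x
    by_cases hx : x ∈ Icc (-(m₁ : ℤ)) m₁
    · have := h x hx
      rwa [(e x hx).1, (e x hx).2] at this
    · subst hm
      push_cast at d₂ d₁ ⊢
      exact below_of_outside (by omega) d₁.1 d₂.1 hx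
  · intro h x hx
    rw [(e x hx).1, (e x hx).2]
    exact h x

theorem sum_dyck_belowChain_eq_sum_strictTuples {𝔸 : Type*} [CommRing 𝔸] (q : 𝔸) (n k : ℕ)
    (ha : ∀ i : Fin k, Admissible R (n + 2 * ((i : ℕ) : ℤ)) (n + 2 * ((i : ℕ) : ℤ))) :
    ∑ p ∈ Fintype.piFinset (fun i : Fin k =>
          dyckHeights R (n + 2 * ((i : ℕ) : ℤ)) (n + 2 * ((i : ℕ) : ℤ)))
        with BelowChain p, ∏ i, q ^ (valleySet R (p i)).card =
      ∑ D ∈ strictTuples n k, q ^ (∑ i : Fin k, (valleys (D i)).card) := by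
  have hL : ∀ i : Fin k, ((2 * (n + 2 * (i : ℕ)) : ℕ) : ℤ) =
      (n + 2 * ((i : ℕ) : ℤ)) + (n + 2 * ((i : ℕ) : ℤ)) := fun i => by push_cast; ring
  have hchain : ∀ D : DyckTuple n k, (∀ i, IsDyck (D i)) →
      ((∀ (i : ℕ) (h : i + 1 < k),
        PathLT (n + 2 * i) (n + 2 * (i + 1)) (D ⟨i, by omega⟩) (D ⟨i + 1, h⟩)) ↔
      BelowChain fun i : Fin k => pathHeight (n + 2 * ((i : ℕ) : ℤ)) (D i)) := by
    intro D hD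
    refine forall_congr' fun i => forall_congr' fun h => ?_
    have hi : i < k := by omega
    refine (pathLT_iff_below (m₁ := n + 2 * i) (m₂ := n + 2 * (i + 1)) (by ring) rfl rfl
      (hD ⟨i, hi⟩) (hD ⟨i + 1, h⟩)).trans ?_
    push_cast
    rfl
  have hinv : ∀ p : Fin k → ℤ → ℤ,
      (∀ i : Fin k, IsDyckHeight R (n + 2 * ((i : ℕ) : ℤ)) (n + 2 * ((i : ℕ) : ℤ)) (p i)) →
      (fun i : Fin k => pathHeight (n + 2 * ((i : ℕ) : ℤ))
        (heightSteps (n + 2 * ((i : ℕ) : ℤ)) (2 * (n + 2 * (i : ℕ))) (p i))) = p :=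
    fun p hp => funext fun i => (hp i).pathHeight_heightSteps (hL i)
  refine sum_bij'
    (fun p _ (i : Fin k) => heightSteps (n + 2 * ((i : ℕ) : ℤ)) (2 * (n + 2 * (i : ℕ))) (p i))
    (fun D _ (i : Fin k) => pathHeight (n + 2 * ((i : ℕ) : ℤ)) (D i)) ?_ ?_ ?_ ?_ ?_
  · intro p hp
    simp only [mem_filter, Fintype.mem_piFinset, mem_dyckHeights] at hp
    have hd := fun i => (hp.1 i).isDyck_heightSteps (hL i)
    refine mem_filter.2 ⟨mem_univ _, hd, (hchain _ hd).2 ?_⟩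
    rw [hinv p hp.1]
    exact hp.2
  · intro D hD
    obtain ⟨hd, hlt⟩ := (mem_filter.1 hD).2
    simp only [mem_filter, Fintype.mem_piFinset, mem_dyckHeights]
    exact ⟨fun i => (hd i).isDyckHeight (ha i) (hL i), (hchain D hd).1 hlt⟩
  · intro p hp
    simp only [mem_filter, Fintype.mem_piFinset, mem_dyckHeights] at hp
    exact hinv p hp.1
  · exact fun D _ => funext fun i => heightSteps_pathHeight _ _
  · intro p hp
    simp only [mem_filter, Fintype.mem_piFinset, mem_dyckHeights] at hp
    rw [prod_pow_eq_pow_sum]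
    congr 1
    refine sum_congr rfl fun i _ => ?_
    rw [← ((hp.1 i).isDyck_heightSteps (hL i)).card_valleys (ha i) (hL i),
      (hp.1 i).pathHeight_heightSteps (hL i)]

end Translation

theorem statement_14 (n k : ℕ) (hn : 0 < n) (hk : 0 < k) :
    (Matrix.of fun i j : Fin k =>
        ∑ s ∈ dyckPaths (2 * (n + (i : ℕ) + (j : ℕ))),
          (Polynomial.X : Polynomial ℤ) ^ (valleys s).card).det =
      Polynomial.X ^ (k * (k - 1) / 2) *
        ∑ D ∈ strictTuples n k,
          (Polynomial.X : Polynomial ℤ) ^ (∑ i : Fin k, (valleys (D i)).card) := by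
  obtain ⟨m, rfl⟩ : ∃ m, k = m + 1 := ⟨k - 1, by omega⟩
  let c : Fin (m + 1) → ℤ := fun i => n + 2 * ((i : ℕ) : ℤ)
  have ha : ∀ i j, Admissible (n + 2 * m : ℤ) (c i) (c j) := fun i j => by
    have := i.2
    have := j.2
    constructor <;> simp only [c] <;> omega
  have hc : StrictMono c := fun i j hij => by
    have : (i : ℕ) < j := hij
    simp only [c]
    omega
  have hdet := det_sum_schHeights (Polynomial.X : Polynomial ℤ) hc ha
  rw [sum_sch_belowChain_eq_sum_dyck_belowChain Polynomial.X m (by omega)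
      (ha (Fin.last m) (Fin.last m)),
    sum_dyck_belowChain_eq_sum_strictTuples Polynomial.X n (m + 1) fun i => ha i i,
    Nat.choose_two_right] at hdet
  rw [← hdet]
  congr 2
  ext1 i
  ext1 j
  refine (sum_schHeights_eq_sum_dyckPaths Polynomial.X (ha i j) ?_).symm
  simp only [c]
  push_cast
  ring

end Paper
end
end

section
/- For all positive integers n and k, the number of pleasant diagrams of the skew staircase shape δ_{n+2k}/δ_n satisfies p(δ_{n+2k}/δ_n) = 2^{k(k−1)/2} · det(𝔰_{n−2+i+j})_{i,j=1}^k, where 𝔰_m = p(δ_{m+2}/δ_m) is the number of pleasant diagrams of δ_{m+2}/δ_m. -/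
open Finset

attribute [local instance 10] Classical.propDecidable

noncomputable section

namespace Paper

/-! ### Toggling staircase arrays -/

/-- The minima of adjacent entries. -/
def minAdj {m : ℕ} (a : Fin (m + 1) → ℕ) : Fin m → ℕ :=
  fun j => min (a j.castSucc) (a j.succ)

/-- The maxima of adjacent entries, after padding with a zero on both sides. -/
def maxAdj {m : ℕ} (b : Fin m → ℕ) : Fin (m + 1) → ℕ :=
  fun j => max ((Fin.snoc b 0 : Fin (m + 1) → ℕ) j) ((Fin.cons 0 b : Fin (m + 1) → ℕ) j)

lemma le_minAdj_iff {m : ℕ} (a : Fin (m + 1) → ℕ) (b : Fin m → ℕ) :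
    b ≤ minAdj a ↔ maxAdj b ≤ a := by
  simp only [Pi.le_def, minAdj, maxAdj, le_min_iff, max_le_iff, forall_and]
  refine and_congr ?_ ?_
  · rw [Fin.forall_fin_succ' (P := fun j => (Fin.snoc b 0 : Fin (m + 1) → ℕ) j ≤ a j)]
    simp
  · rw [Fin.forall_fin_succ (P := fun j => (Fin.cons 0 b : Fin (m + 1) → ℕ) j ≤ a j)]
    simp

lemma sum_maxAdj_add_sum_minAdj {m : ℕ} (b : Fin (m + 1) → ℕ) :
    ∑ j, maxAdj b j + ∑ j, minAdj b j = 2 * ∑ j, b j := by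
  have h : ∑ j, maxAdj b j =
      b 0 + (∑ j : Fin m, max (b j.succ) (b j.castSucc) + b (Fin.last m)) := by
    rw [Fin.sum_univ_succ, Fin.sum_univ_castSucc]
    congr 1
    · simp [maxAdj, Fin.snoc]
    congr 1
    · refine sum_congr rfl fun j _ => ?_
      simp only [maxAdj, ← Fin.castSucc_succ, Fin.snoc_castSucc]
      rw [Fin.castSucc_succ, Fin.cons_succ]
    · simp only [maxAdj, Fin.succ_last, Fin.snoc_last]
      simp [← Fin.succ_last]
  have h2 : ∀ j : Fin m, max (b j.succ) (b j.castSucc) + minAdj b j = b j.succ + b j.castSucc := by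
    intro j
    rw [minAdj, min_comm, max_add_min]
  have h3 := sum_congr rfl fun j (_ : j ∈ univ) => h2 j
  rw [sum_add_distrib, sum_add_distrib] at h3
  have h4 := Fin.sum_univ_succ b
  have h5 := Fin.sum_univ_castSucc b
  omega

/-- The generating function of staircase arrays with `m` antidiagonals, the last one bounded
by `u`, in which the antidiagonals carry the weights `q, q⁻¹, q, …`, from the last one on. -/
def altSum : (m : ℕ) → ℚ → (Fin m → ℕ) → ℚ
  | 0, _, _ => 1
  | m + 1, q, u => ∑ a ∈ Iic u, q ^ (∑ j, a j) * altSum m q⁻¹ (minAdj a)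

lemma sum_Icc_toggle {m : ℕ} {q : ℚ} (hq : q ≠ 0) (v u : Fin m → ℕ) :
    ∑ a ∈ Icc v u, q ^ (∑ j, a j) =
      q ^ (∑ j, u j + ∑ j, v j) * ∑ a ∈ Icc v u, q⁻¹ ^ (∑ j, a j) := by
  rw [mul_sum]
  refine sum_nbij' (fun a => u + v - a) (fun a => u + v - a) ?_ ?_ ?_ ?_ ?_
  · intro a ha
    rw [mem_Icc] at ha ⊢
    refine ⟨fun j => ?_, fun j => ?_⟩ <;> have h1 : v j ≤ a j := ha.1 j <;>
      have h2 : a j ≤ u j := ha.2 j <;> simp only [Pi.sub_apply, Pi.add_apply] <;> omega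
  · intro a ha
    rw [mem_Icc] at ha ⊢
    refine ⟨fun j => ?_, fun j => ?_⟩ <;> have h1 : v j ≤ a j := ha.1 j <;>
      have h2 : a j ≤ u j := ha.2 j <;> simp only [Pi.sub_apply, Pi.add_apply] <;> omega
  · intro a ha
    rw [mem_Icc] at ha
    ext j
    have h2 : a j ≤ u j := ha.2 j
    simp only [Pi.sub_apply, Pi.add_apply]
    omega
  · intro a ha
    rw [mem_Icc] at ha
    ext j
    have h2 : a j ≤ u j := ha.2 j
    simp only [Pi.sub_apply, Pi.add_apply]
    omega
  · intro a ha
    rw [mem_Icc] at ha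
    have h : ∑ j, a j + ∑ j, (u + v - a) j = ∑ j, u j + ∑ j, v j := by
      rw [← sum_add_distrib, ← sum_add_distrib]
      refine sum_congr rfl fun j _ => ?_
      have h2 : a j ≤ u j := ha.2 j
      simp only [Pi.sub_apply, Pi.add_apply]
      omega
    rw [← h, pow_add, mul_assoc, ← mul_pow, mul_inv_cancel₀ hq, one_pow, mul_one]

lemma altSum_succ_succ (m : ℕ) (q : ℚ) (u : Fin (m + 2) → ℕ) :
    altSum (m + 2) q u = ∑ b ∈ Iic (minAdj u),
      (∑ a ∈ Icc (maxAdj b) u, q ^ (∑ j, a j)) *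
        (q⁻¹ ^ (∑ j, b j) * altSum m q (minAdj b)) := by
  simp only [altSum, inv_inv, mul_sum, sum_mul]
  refine sum_comm' fun a b => ?_
  simp only [mem_Iic, mem_Icc, le_minAdj_iff]
  exact ⟨fun h => ⟨⟨h.2, h.1⟩, h.2.trans h.1⟩, fun h => ⟨h.1.2, h.1.1⟩⟩

lemma altSum_eq_pow_mul_altSum_inv (m : ℕ) :
    ∀ {q : ℚ}, q ≠ 0 → ∀ u : Fin m → ℕ,
      altSum m q u = q ^ (∑ j, u j) * altSum m q⁻¹ u := by
  induction m using Nat.twoStepInduction with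
  | zero => intro q hq u; simp [altSum]
  | one =>
    intro q hq u
    have h := sum_Icc_toggle hq 0 u
    have h0 : Icc 0 u = Iic u := Finset.Icc_bot
    simp only [Pi.zero_apply, sum_const_zero, add_zero, h0] at h
    simpa [altSum] using h
  | more m ih _ =>
    intro q hq u
    rw [altSum_succ_succ, altSum_succ_succ, mul_sum]
    refine sum_congr rfl fun b _ => ?_
    rw [sum_Icc_toggle hq, ih hq (minAdj b), inv_inv]
    have h := sum_maxAdj_add_sum_minAdj b
    have h2 : q ^ (∑ j, maxAdj b j) * q ^ (∑ j, minAdj b j) * q⁻¹ ^ (∑ j, b j) =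
        q ^ (∑ j, b j) := by
      rw [← pow_add, h, two_mul, pow_add, mul_assoc, ← mul_pow, mul_inv_cancel₀ hq, one_pow,
        mul_one]
    rw [← h2, pow_add]
    ring


/-! ### Staircase arrays -/

/-- The arrays supported on `{(i, j) | i + j < N}` that increase weakly in both directions and
whose entries on the last antidiagonal are bounded by `u`. -/
structure IsStair (N : ℕ) (u : Fin N → ℕ) (π : ℕ → ℕ → ℕ) : Prop where
  eq_zero : ∀ i j, N ≤ i + j → π i j = 0
  le_succ_left : ∀ i j, i + j + 1 < N → π i j ≤ π (i + 1) j
  le_succ_right : ∀ i j, i + j + 1 < N → π i j ≤ π i (j + 1)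
  le_bound : ∀ i (j : Fin N), i + j + 1 = N → π i j ≤ u j

/-- Appending an antidiagonal to a staircase array. -/
def glue {N : ℕ} (a : Fin (N + 1) → ℕ) (π : ℕ → ℕ → ℕ) (i j : ℕ) : ℕ :=
  if h : i + j = N then a ⟨j, by omega⟩ else π i j

/-- The last antidiagonal of a staircase array. -/
def lastDiag (N : ℕ) (π : ℕ → ℕ → ℕ) (j : Fin N) : ℕ := π (N - 1 - j) j

/-- The finite set of staircase arrays with last antidiagonal bounded by `u`. -/
def stair : (N : ℕ) → (Fin N → ℕ) → Finset (ℕ → ℕ → ℕ)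
  | 0, _ => {0}
  | N + 1, u => (Iic u).biUnion fun a => (stair N (minAdj a)).image (glue a)

lemma isStair_glue {N : ℕ} {u a : Fin (N + 1) → ℕ} {π : ℕ → ℕ → ℕ} (ha : a ≤ u)
    (h : IsStair N (minAdj a) π) : IsStair (N + 1) u (glue a π) := by
  have key : ∀ i j (hj : j < N), i + j + 1 = N → π i j ≤ a ⟨j, by omega⟩ ∧
      π i j ≤ a ⟨j + 1, by omega⟩ := by
    intro i j hj hij
    exact le_min_iff.1 (h.le_bound i ⟨j, hj⟩ hij)
  refine ⟨fun i j hij => ?_, fun i j hij => ?_, fun i j hij => ?_, fun i j hij => ?_⟩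
  · rw [glue, dif_neg (by omega), h.eq_zero i j (by omega)]
  · rw [glue, dif_neg (by omega), glue]
    split_ifs with h1
    · exact (key i j (by omega) (by omega)).1
    · exact h.le_succ_left i j (by omega)
  · rw [glue, dif_neg (by omega), glue]
    split_ifs with h1
    · exact (key i j (by omega) (by omega)).2
    · exact h.le_succ_right i j (by omega)
  · rw [glue, dif_pos (by omega)]
    exact ha j

lemma mem_stair {N : ℕ} : ∀ {u : Fin N → ℕ} {π : ℕ → ℕ → ℕ}, π ∈ stair N u ↔ IsStair N u π := by
  induction N with
  | zero =>
    intro u π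
    rw [stair, mem_singleton]
    constructor
    · rintro rfl
      exact ⟨fun _ _ _ => rfl, fun _ _ _ => le_rfl, fun _ _ _ => le_rfl, fun _ j => j.elim0⟩
    · intro h
      ext i j
      exact h.eq_zero i j (Nat.zero_le _)
  | succ N ih =>
    intro u π
    simp only [stair, mem_biUnion, mem_Iic, mem_image]
    constructor
    · rintro ⟨a, ha, ρ, hρ, rfl⟩
      exact isStair_glue ha (ih.1 hρ)
    · intro h
      refine ⟨fun j => π (N - j) j, fun j => h.le_bound (N - j) j (by omega),
        fun i j => if i + j < N then π i j else 0, ih.2 ⟨fun i j hij => ?_, fun i j hij => ?_,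
          fun i j hij => ?_, fun i j hij => ?_⟩, ?_⟩
      · exact if_neg (by omega)
      · simp only [if_pos (show i + j < N by omega), if_pos (show i + 1 + j < N by omega)]
        exact h.le_succ_left i j (by omega)
      · simp only [if_pos (show i + j < N by omega), if_pos (show i + (j + 1) < N by omega)]
        exact h.le_succ_right i j (by omega)
      · rw [if_pos (by omega)]
        refine le_min ?_ ?_
        · have := h.le_succ_left i j (by omega)
          rwa [show i + 1 = N - j by omega] at this
        · have := h.le_succ_right i j (by omega)
          rw [show i = N - (j + 1) by omega] at this
          rw [show i = N - (j + 1) by omega]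
          exact this
      · ext i j
        simp only [glue]
        split_ifs with h1 h2
        · rw [show N - j = i by omega]
        · rfl
        · exact (h.eq_zero i j (by omega)).symm

lemma lastDiag_glue {N : ℕ} (a : Fin (N + 1) → ℕ) (π : ℕ → ℕ → ℕ) :
    lastDiag (N + 1) (glue a π) = a := by
  ext j
  simp only [lastDiag, glue]
  rw [dif_pos (by omega)]

lemma sum_stair_succ {M : Type*} [AddCommMonoid M] {N : ℕ} (u : Fin (N + 1) → ℕ)
    (f : (ℕ → ℕ → ℕ) → M) :
    ∑ π ∈ stair (N + 1) u, f π = ∑ a ∈ Iic u, ∑ π ∈ stair N (minAdj a), f (glue a π) := by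
  rw [stair, sum_biUnion]
  · refine sum_congr rfl fun a _ => sum_image ?_
    intro π hπ ρ hρ h
    have hπ := mem_stair.1 (mem_coe.1 hπ)
    have hρ := mem_stair.1 (mem_coe.1 hρ)
    ext i j
    rcases lt_or_ge (i + j) N with hij | hij
    · have := congrFun (congrFun h i) j
      simpa only [glue, dif_neg hij.ne] using this
    · rw [hπ.eq_zero i j hij, hρ.eq_zero i j hij]
  · intro a _ b _ hab
    rw [Function.onFun, disjoint_left]
    simp only [mem_image]
    rintro _ ⟨π, -, rfl⟩ ⟨ρ, -, h⟩
    apply hab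
    rw [← lastDiag_glue a π, ← h, lastDiag_glue]

/-- The larger one of the two neighbours of `(i, j)` with smaller coordinates. -/
def maxBelow (π : ℕ → ℕ → ℕ) (i j : ℕ) : ℕ :=
  max (if i = 0 then 0 else π (i - 1) j) (if j = 0 then 0 else π i (j - 1))

/-- The sum of the jumps of a staircase array. -/
def jumpSum (N : ℕ) (π : ℕ → ℕ → ℕ) : ℕ :=
  ∑ p ∈ (range N).sigma fun r => range (r + 1),
    (π (p.1 - p.2) p.2 - maxBelow π (p.1 - p.2) p.2)

/-- The alternating sum of the entries of a staircase array, by antidiagonals. -/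
def altWeight (N : ℕ) (π : ℕ → ℕ → ℕ) : ℤ :=
  ∑ p ∈ (range N).sigma fun r => range (r + 1), (-1) ^ (N - 1 - p.1) * (π (p.1 - p.2) p.2 : ℤ)

lemma maxBelow_glue_of_lt {N : ℕ} (a : Fin (N + 1) → ℕ) (π : ℕ → ℕ → ℕ) {i j : ℕ}
    (h : i + j < N) : maxBelow (glue a π) i j = maxBelow π i j := by
  simp only [maxBelow, glue]
  rw [dif_neg (by omega), dif_neg (by omega)]

lemma maxBelow_glue {N : ℕ} (a : Fin (N + 1) → ℕ) (π : ℕ → ℕ → ℕ) (j : Fin (N + 1)) :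
    maxBelow (glue a π) (N - j) j = maxAdj (lastDiag N π) j := by
  rw [maxBelow, maxAdj]
  congr 1
  · refine Fin.lastCases ?_ (fun i => ?_) j
    · simp
    · rw [Fin.snoc_castSucc, Fin.val_castSucc, if_neg (by omega), glue, dif_neg (by omega),
        lastDiag, show N - i - 1 = N - 1 - i by omega]
  · refine Fin.cases ?_ (fun i => ?_) j
    · simp
    · rw [Fin.cons_succ, Fin.val_succ, if_neg (by omega), glue, dif_neg (by omega),
        lastDiag, show N - 1 - i = N - (i + 1) by omega, Nat.add_sub_cancel]

lemma jumpSum_glue {N : ℕ} (a : Fin (N + 1) → ℕ) (π : ℕ → ℕ → ℕ) :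
    jumpSum (N + 1) (glue a π) = jumpSum N π + ∑ j, (a j - maxAdj (lastDiag N π) j) := by
  simp only [jumpSum, sum_sigma]
  rw [sum_range_succ]
  congr 1
  · refine sum_congr rfl fun r hr => sum_congr rfl fun j hj => ?_
    rw [mem_range] at hr hj
    rw [maxBelow_glue_of_lt a π (by omega), glue, dif_neg (by omega)]
  · rw [← Fin.sum_univ_eq_sum_range
      (fun j => glue a π (N - j) j - maxBelow (glue a π) (N - j) j) (N + 1)]
    refine sum_congr rfl fun j _ => ?_
    rw [maxBelow_glue, glue, dif_pos (by omega)]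

lemma altWeight_glue {N : ℕ} (a : Fin (N + 1) → ℕ) (π : ℕ → ℕ → ℕ) :
    altWeight (N + 1) (glue a π) = ∑ j, (a j : ℤ) - altWeight N π := by
  simp only [altWeight, sum_sigma]
  rw [sum_range_succ, add_comm, sub_eq_add_neg, ← sum_neg_distrib]
  congr 1
  · rw [← Fin.sum_univ_eq_sum_range
      (fun j => (-1) ^ (N + 1 - 1 - N) * (glue a π (N - j) j : ℤ)) (N + 1)]
    refine sum_congr rfl fun j _ => ?_
    rw [glue, dif_pos (by omega)]
    simp
  · refine sum_congr rfl fun r hr => ?_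
    rw [← sum_neg_distrib]
    refine sum_congr rfl fun j hj => ?_
    rw [mem_range] at hr hj
    rw [glue, dif_neg (by omega), show N + 1 - 1 - r = N - 1 - r + 1 by omega, pow_succ]
    ring

lemma sum_stair_zpow_altWeight {N : ℕ} : ∀ {q : ℚ}, q ≠ 0 → ∀ u : Fin N → ℕ,
    ∑ π ∈ stair N u, q ^ altWeight N π = altSum N q u := by
  induction N with
  | zero => intro q hq u; simp [stair, altWeight, altSum]
  | succ N ih =>
    intro q hq u
    rw [sum_stair_succ, altSum]
    refine sum_congr rfl fun a _ => ?_
    rw [← ih (inv_ne_zero hq), mul_sum]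
    refine sum_congr rfl fun π _ => ?_
    rw [altWeight_glue, sub_eq_add_neg, zpow_add₀ hq, inv_zpow', ← Nat.cast_sum, zpow_natCast]

lemma sum_stair_pow_jumpSum_mul {N : ℕ} {q : ℚ} (hq : q ≠ 0) :
    ∀ (u : Fin (N + 1) → ℕ) (φ : (Fin (N + 1) → ℕ) → ℚ),
    ∑ π ∈ stair (N + 1) u, φ (lastDiag (N + 1) π) * q ^ jumpSum (N + 1) π =
      ∑ a ∈ Iic u, φ a * (q ^ (∑ j, a j) * altSum N q⁻¹ (minAdj a)) := by
  induction N with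
  | zero =>
    intro u φ
    rw [sum_stair_succ]
    refine sum_congr rfl fun a _ => ?_
    have h0 : jumpSum 0 0 = 0 := rfl
    simp [stair, lastDiag_glue, jumpSum_glue, altSum, h0, maxAdj, Fin.snoc]
  | succ N ih =>
    intro u φ
    rw [sum_stair_succ]
    refine sum_congr rfl fun a _ => ?_
    have hle : ∀ π ∈ stair (N + 1) (minAdj a), maxAdj (lastDiag (N + 1) π) ≤ a := by
      intro π hπ
      rw [← le_minAdj_iff]
      exact fun j => (mem_stair.1 hπ).le_bound _ j (by omega)
    have key : ∀ π ∈ stair (N + 1) (minAdj a),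
        φ (lastDiag (N + 2) (glue a π)) * q ^ jumpSum (N + 2) (glue a π) =
          φ a * q ^ (∑ j, a j) *
            ((q⁻¹ ^ ∑ j, maxAdj (lastDiag (N + 1) π) j) * q ^ jumpSum (N + 1) π) := by
      intro π hπ
      have h : ∑ j, a j = ∑ j, (a j - maxAdj (lastDiag (N + 1) π) j) +
          ∑ j, maxAdj (lastDiag (N + 1) π) j := by
        rw [← sum_add_distrib]
        exact sum_congr rfl fun j _ => (Nat.sub_add_cancel (hle π hπ j)).symm
      rw [lastDiag_glue, jumpSum_glue, h, pow_add, pow_add, inv_pow]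
      field_simp
    rw [sum_congr rfl key, ← mul_sum, ih _ fun b => q⁻¹ ^ ∑ j, maxAdj b j, mul_assoc, altSum]
    congr 2
    refine sum_congr rfl fun b _ => ?_
    have h := sum_maxAdj_add_sum_minAdj b
    rw [inv_inv, altSum_eq_pow_mul_altSum_inv N hq (minAdj b), ← mul_assoc, ← mul_assoc]
    congr 1
    rw [inv_pow, inv_pow]
    field_simp
    rw [← pow_add, h, ← pow_mul, mul_comm]

lemma sum_stair_pow_jumpSum {N : ℕ} {q : ℚ} (hq : q ≠ 0) (u : Fin N → ℕ) :
    ∑ π ∈ stair N u, q ^ jumpSum N π = ∑ π ∈ stair N u, q ^ altWeight N π := by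
  rw [sum_stair_zpow_altWeight hq]
  cases N with
  | zero => simp [stair, jumpSum, altSum]
  | succ N => simpa [altSum] using sum_stair_pow_jumpSum_mul hq u fun _ => 1


/-! ### Weighted paths and determinants -/

/-- The weight of a step from height `y` to height `y'` when `s` steps remain: down-steps with an
even number of remaining steps have weight `q`, all other steps have weight `1`. -/
def stepWt (q : ℚ) (s : ℕ) (y y' : ℤ) : ℚ := if y' < y ∧ Even s then q else 1

/-- The weighted number of nonnegative paths with `s` steps from height `y` to height `0`. -/
def pathSum (q : ℚ) : ℕ → ℤ → ℚ
  | 0, y => if y = 0 then 1 else 0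
  | s + 1, y => if y < 0 then 0 else
      ∑ y' ∈ {y + 1, y - 1}, stepWt q (s + 1) y y' * pathSum q s y'

lemma pathSum_of_neg (q : ℚ) (s : ℕ) {y : ℤ} (hy : y < 0) : pathSum q s y = 0 := by
  cases s with
  | zero => exact if_neg hy.ne
  | succ s => exact if_pos hy

lemma pathSum_succ (q : ℚ) (s : ℕ) {y : ℤ} (hy : 0 ≤ y) : pathSum q (s + 1) y =
    pathSum q s (y + 1) + (if Even (s + 1) then q else 1) * pathSum q s (y - 1) := by
  rw [pathSum, if_neg (by omega), sum_pair (by omega)]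
  simp [stepWt]

lemma pathSum_of_lt (q : ℚ) (s : ℕ) : ∀ {y : ℤ}, (s : ℤ) < y → pathSum q s y = 0 := by
  induction s with
  | zero => intro y hy; exact if_neg (by omega)
  | succ s ih =>
    intro y hy
    push_cast at hy
    rw [pathSum_succ q s (by omega), ih (by omega), ih (by omega)]
    simp

lemma pathSum_two_mul_self (q : ℚ) (i : ℕ) : pathSum q (2 * i) (2 * i : ℕ) = q ^ i := by
  induction i with
  | zero => simp [pathSum]
  | succ i ih =>
    rw [show 2 * (i + 1) = 2 * i + 1 + 1 by ring, pathSum_succ _ _ (by positivity),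
      pathSum_of_lt _ _ (by push_cast; omega), if_pos (by grind), Nat.cast_succ,
      add_sub_cancel_right, Nat.cast_succ, pathSum_succ _ _ (by positivity),
      pathSum_of_lt _ _ (by push_cast; omega), if_neg (by grind), add_sub_cancel_right, ih]
    ring

/-- The weighted number of nonnegative paths with `2 j` steps from height `0` to height `2 m`,
the first step being one with an even number of remaining steps. -/
def riseSum (q : ℚ) : ℕ → ℕ → ℚ
  | 0, m => if m = 0 then 1 else 0
  | j + 1, 0 => riseSum q j 0 + q * riseSum q j 1
  | j + 1, m + 1 => riseSum q j m + (1 + q) * riseSum q j (m + 1) + q * riseSum q j (m + 2)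

lemma riseSum_of_lt (q : ℚ) (j : ℕ) : ∀ {m : ℕ}, j < m → riseSum q j m = 0 := by
  induction j with
  | zero => intro m hm; exact if_neg (by omega)
  | succ j ih =>
    intro m hm
    obtain ⟨m, rfl⟩ : ∃ m', m = m' + 1 := ⟨m - 1, by omega⟩
    rw [riseSum, ih (by omega), ih (by omega), ih (by omega)]
    simp

lemma riseSum_self (q : ℚ) (j : ℕ) : riseSum q j j = 1 := by
  induction j with
  | zero => simp [riseSum]
  | succ j ih => rw [riseSum, ih, riseSum_of_lt q j (by omega), riseSum_of_lt q j (by omega)]; simp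

lemma pathSum_add_two (q : ℚ) {a : ℕ} (ha : Even a) (m : ℕ) : pathSum q (a + 2) (2 * m : ℕ) =
    pathSum q a (2 * (m + 1) : ℕ) + (if m = 0 then 1 else 1 + q) * pathSum q a (2 * m : ℕ) +
      (if m = 0 then 0 else q * pathSum q a (2 * (m - 1) : ℕ)) := by
  have e1 : ¬ Even (a + 1) := by grind
  have e2 : Even (a + 1 + 1) := by grind
  have h1 : ((2 * m : ℕ) : ℤ) + 1 + 1 = (2 * (m + 1) : ℕ) := by push_cast; ring
  rw [pathSum_succ _ _ (by positivity), pathSum_succ _ _ (by positivity), h1, add_sub_cancel_right,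
    if_neg e1, if_pos e2]
  rcases Nat.eq_zero_or_pos m with rfl | hm
  · rw [pathSum_of_neg q (a + 1) (by simp)]
    simp
  · have h2 : ((2 * m : ℕ) : ℤ) - 1 - 1 = (2 * (m - 1) : ℕ) := by push_cast [hm]; omega
    rw [pathSum_succ q a (y := ((2 * m : ℕ) : ℤ) - 1) (by omega), h2, sub_add_cancel,
      if_neg e1, if_neg hm.ne', if_neg hm.ne']
    ring

lemma pathSum_add_two_mul (q : ℚ) (j : ℕ) : ∀ {a K : ℕ}, Even a → j < K →
    pathSum q (a + 2 * j) 0 = ∑ m ∈ range K, riseSum q j m * pathSum q a (2 * m : ℕ) := by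
  induction j with
  | zero =>
    intro a K ha hK
    rw [sum_eq_single_of_mem 0 (mem_range.2 hK)]
    · simp [riseSum]
    · intro m _ hm
      rw [riseSum, if_neg hm, zero_mul]
  | succ j ih =>
    intro a K ha hK
    obtain ⟨K, rfl⟩ : ∃ K', K = K' + 1 := ⟨K - 1, by omega⟩
    have key : ∀ L, ∑ m ∈ range (L + 1), riseSum q j m * pathSum q (a + 2) (2 * m : ℕ) +
        q * riseSum q j (L + 1) * pathSum q a (2 * L : ℕ) =
        ∑ m ∈ range (L + 1), riseSum q (j + 1) m * pathSum q a (2 * m : ℕ) +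
          riseSum q j L * pathSum q a (2 * (L + 1) : ℕ) := by
      intro L
      induction L with
      | zero =>
        simp only [zero_add, sum_range_one, pathSum_add_two q ha, riseSum, if_true]
        ring
      | succ L ihL =>
        rw [sum_range_succ, sum_range_succ _ (L + 1)]
        rw [pathSum_add_two q ha (L + 1), riseSum, if_neg (by omega), if_neg (by omega),
          Nat.add_sub_cancel]
        linear_combination ihL
    have h := key K
    rw [riseSum_of_lt q j (m := K + 1) (by omega)] at h
    rw [show a + 2 * (j + 1) = a + 2 + 2 * j by ring,
      ih (K := K + 1) (by grind) (by omega)]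
    rw [sum_range_succ _ K] at h ⊢
    rcases Nat.lt_or_ge j K with hj | hj
    · rw [riseSum_of_lt q j hj] at h ⊢
      linear_combination h
    · omega

lemma det_pathSum_hankel (q : ℚ) (n k : ℕ) :
    (Matrix.of fun i j : Fin k => pathSum q (2 * (n + i + j)) 0).det =
      (Matrix.of fun j i : Fin k => pathSum q (2 * n + 2 * i) (2 * j : ℕ)).det := by
  have h : (Matrix.of fun i j : Fin k => pathSum q (2 * (n + i + j)) 0) =
      (Matrix.of fun j m : Fin k => riseSum q j m) *
        (Matrix.of fun j i : Fin k => pathSum q (2 * n + 2 * i) (2 * j : ℕ)) := by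
    ext i j
    rw [Matrix.mul_apply, Matrix.of_apply,
      show 2 * (n + i + j) = 2 * n + 2 * (j : ℕ) + 2 * (i : ℕ) by ring,
      pathSum_add_two_mul q i (K := k) (by grind) i.2, ← Fin.sum_univ_eq_sum_range
        (fun m => riseSum q i m * pathSum q (2 * n + 2 * j) (2 * m : ℕ))]
    rfl
  rw [h, Matrix.det_mul, Matrix.det_of_isLowerTriangular, prod_eq_one, one_mul]
  · intro i _
    exact riseSum_self q i
  · intro i j hij
    exact riseSum_of_lt q i hij

/-- The families of `k` nonnegative nonintersecting paths with `s` steps that start at the heights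
`h` and end at the heights `0, 2, 4, …`, where they then stay. -/
def pathFamilies {k : ℕ} : ℕ → (Fin k → ℤ) → Finset (ℕ → Fin k → ℤ)
  | 0, h => if h = fun j : Fin k => 2 * ((j : ℕ) : ℤ) then {fun _ => h} else ∅
  | s + 1, h => ((Fintype.piFinset fun j => {h j + 1, h j - 1}).filter
      fun h' => StrictMono h' ∧ ∀ j, 0 ≤ h' j).biUnion
        fun h' => (pathFamilies s h').image fun Y t => Nat.casesOn t h Y

lemma mem_pathFamilies {k s : ℕ} : ∀ {h : Fin k → ℤ} {Y : ℕ → Fin k → ℤ},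
    Y ∈ pathFamilies s h ↔ Y 0 = h ∧
      (∀ t < s, (∀ j, Y (t + 1) j = Y t j + 1 ∨ Y (t + 1) j = Y t j - 1) ∧
        StrictMono (Y (t + 1)) ∧ ∀ j, 0 ≤ Y (t + 1) j) ∧
      ∀ t, s ≤ t → Y t = fun j : Fin k => 2 * ((j : ℕ) : ℤ) := by
  induction s with
  | zero =>
    intro h Y
    rw [pathFamilies]
    split_ifs with h0
    · rw [mem_singleton]
      constructor
      · rintro rfl
        exact ⟨rfl, by simp, fun _ _ => h0⟩
      · rintro ⟨-, -, h2⟩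
        ext1 t
        rw [h0, h2 t (Nat.zero_le _)]
    · simp only [notMem_empty, false_iff]
      rintro ⟨h1, -, h2⟩
      exact h0 (h1 ▸ h2 0 le_rfl)
  | succ s ih =>
    intro h Y
    simp only [pathFamilies, mem_biUnion, mem_filter, Fintype.mem_piFinset, mem_insert,
      mem_singleton, mem_image, ih]
    constructor
    · rintro ⟨h', ⟨h1, h2⟩, Y, ⟨rfl, h3, h4⟩, rfl⟩
      refine ⟨rfl, fun t ht => ?_, fun t ht => ?_⟩
      · cases t with
        | zero => exact ⟨h1, h2⟩
        | succ t => exact h3 t (by omega)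
      · obtain ⟨t, rfl⟩ : ∃ t', t = t' + 1 := ⟨t - 1, by omega⟩
        exact h4 t (by omega)
    · rintro ⟨rfl, h1, h2⟩
      refine ⟨Y 1, h1 0 (by omega), fun t => Y (t + 1), ⟨rfl, fun t ht => h1 (t + 1) (by omega),
        fun t ht => h2 (t + 1) (by omega)⟩, ?_⟩
      ext1 t
      cases t <;> rfl

lemma sum_pathFamilies_succ {k s : ℕ} (h : Fin k → ℤ) (f : (ℕ → Fin k → ℤ) → ℚ) :
    ∑ Y ∈ pathFamilies (s + 1) h, f Y =
      ∑ h' ∈ (Fintype.piFinset fun j => {h j + 1, h j - 1}).filter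
        fun h' => StrictMono h' ∧ ∀ j, 0 ≤ h' j,
        ∑ Y ∈ pathFamilies s h', f fun t => Nat.casesOn t h Y := by
  rw [pathFamilies, sum_biUnion]
  · refine sum_congr rfl fun h' _ => sum_image ?_
    intro Y _ Z _ hYZ
    ext1 t
    exact congrFun hYZ (t + 1)
  · intro a _ b _ hab
    rw [Function.onFun, disjoint_left]
    simp only [mem_image]
    rintro _ ⟨Y, hY, rfl⟩ ⟨Z, hZ, h⟩
    apply hab
    rw [← (mem_pathFamilies.1 hY).1, ← (mem_pathFamilies.1 hZ).1]
    exact (congrFun h 1).symm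

/-- The weight of a family of paths with `s` steps. -/
def familyWt {k : ℕ} (q : ℚ) (s : ℕ) (Y : ℕ → Fin k → ℤ) : ℚ :=
  ∏ t ∈ range s, ∏ j, stepWt q (s - t) (Y t j) (Y (t + 1) j)

lemma familyWt_succ {k : ℕ} (q : ℚ) (s : ℕ) (h : Fin k → ℤ) (Y : ℕ → Fin k → ℤ) :
    familyWt q (s + 1) (fun t => Nat.casesOn t h Y) =
      (∏ j, stepWt q (s + 1) (h j) (Y 0 j)) * familyWt q s Y := by
  rw [familyWt, prod_range_succ', mul_comm, familyWt]
  congr 1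
  refine prod_congr rfl fun t _ => ?_
  rw [Nat.add_sub_add_right]

lemma two_mul_le_of_strictMono {k : ℕ} {h : Fin k → ℤ} (hm : StrictMono h)
    (h0 : ∀ j, 0 ≤ h j) (hp : ∀ j, Even (h j)) (j : Fin k) : 2 * ((j : ℕ) : ℤ) ≤ h j := by
  obtain ⟨j, hj⟩ := j
  induction j with
  | zero => simpa using h0 _
  | succ j ih =>
    have h1 := ih (by omega)
    have h2 : h ⟨j, by omega⟩ < h ⟨j + 1, hj⟩ := hm (by simp)
    have h3 := hp ⟨j, by omega⟩
    have h4 := hp ⟨j + 1, hj⟩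
    push_cast at h1 ⊢
    grind

lemma det_pathSum_zero {k : ℕ} (q : ℚ) {h : Fin k → ℤ} (hm : StrictMono h)
    (h0 : ∀ j, 0 ≤ h j) (hp : ∀ j, Even (h j)) :
    (Matrix.of fun j i : Fin k => pathSum q (2 * i) (h j)).det =
      if h = fun j : Fin k => 2 * ((j : ℕ) : ℤ) then q ^ (k * (k - 1) / 2) else 0 := by
  have hle := two_mul_le_of_strictMono hm h0 hp
  rw [Matrix.det_of_isUpperTriangular]
  · split_ifs with h1
    · subst h1
      have h2 : ∀ i : Fin k, pathSum q (2 * i) (2 * ((i : ℕ) : ℤ)) = q ^ (i : ℕ) := by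
        intro i
        rw [← pathSum_two_mul_self]
        push_cast
        rfl
      simp only [Matrix.of_apply, h2]
      rw [Fin.prod_univ_eq_prod_range (fun i => q ^ i), prod_pow_eq_pow_sum, sum_range_id]
    · obtain ⟨j, hj⟩ := Function.ne_iff.1 h1
      have h3 : h j ≠ 2 * ((j : ℕ) : ℤ) := hj
      refine prod_eq_zero (mem_univ j) (pathSum_of_lt _ _ ?_)
      have h2 : 2 * ((j : ℕ) : ℤ) ≤ h j := hle j
      push_cast
      omega
  · intro j i hij
    refine pathSum_of_lt _ _ ?_
    have h2 : 2 * ((j : ℕ) : ℤ) ≤ h j := hle j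
    have : (i : ℕ) < j := hij
    push_cast
    omega

/-- The Lindström–Gessel–Viennot lemma for `pathFamilies`. -/
lemma sum_familyWt {k : ℕ} (q : ℚ) (s : ℕ) : ∀ {h : Fin k → ℤ}, StrictMono h → (∀ j, 0 ≤ h j) →
    (∀ j, Even (h j + s)) →
    (∑ Y ∈ pathFamilies s h, familyWt q s Y) * q ^ (k * (k - 1) / 2) =
      (Matrix.of fun j i : Fin k => pathSum q (s + 2 * i) (h j)).det := by
  induction s with
  | zero =>
    intro h hm h0 hp
    simp only [zero_add]
    rw [det_pathSum_zero q hm h0 (by simpa using hp), pathFamilies]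
    split_ifs <;> simp [familyWt]
  | succ s ih =>
    intro h hm h0 hp
    have hrow : (Matrix.of fun j i : Fin k => pathSum q (s + 1 + 2 * i) (h j)) =
        fun j => ∑ y ∈ {h j + 1, h j - 1},
          stepWt q (s + 1) (h j) y • fun i : Fin k => pathSum q (s + 2 * i) y := by
      ext j i
      rw [Matrix.of_apply, add_right_comm, pathSum, if_neg (by have := h0 j; omega),
        Finset.sum_apply]
      refine sum_congr rfl fun y _ => ?_
      have : Even (s + 2 * (i : ℕ) + 1) ↔ Even (s + 1) := by grind
      simp only [stepWt, this, Pi.smul_apply, smul_eq_mul]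
    rw [hrow]
    change _ = Matrix.detRowAlternating.toMultilinearMap _
    rw [MultilinearMap.map_sum_finset, sum_pathFamilies_succ, sum_mul, sum_filter]
    refine sum_congr rfl fun h' hh' => ?_
    rw [Fintype.mem_piFinset] at hh'
    simp only [mem_insert, mem_singleton] at hh'
    rw [MultilinearMap.map_smul_univ]
    have hp' : ∀ j, Even (h' j + s) := by
      intro j
      have := hp j
      have := hh' j
      grind
    split_ifs with hc
    · have := ih hc.1 hc.2 hp'
      change _ = _ • Matrix.det (Matrix.of fun j i : Fin k => pathSum q (s + 2 * i) (h' j))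
      rw [← this, smul_eq_mul, ← mul_assoc, mul_sum]
      congr 1
      refine sum_congr rfl fun Y hY => ?_
      rw [familyWt_succ, (mem_pathFamilies.1 hY).1]
    · symm
      rw [smul_eq_mul]
      refine mul_eq_zero_of_right _ ?_
      change Matrix.det (Matrix.of fun j i : Fin k => pathSum q (s + 2 * i) (h' j)) = 0
      by_cases hneg : ∃ j, h' j < 0
      · obtain ⟨j, hj⟩ := hneg
        exact Matrix.det_eq_zero_of_row_eq_zero j fun i => pathSum_of_neg _ _ hj
      · have hns : ¬ StrictMono h' := fun hs => hc ⟨hs, by simpa using hneg⟩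
        rw [StrictMono] at hns
        push Not at hns
        obtain ⟨a, b, hab, hle⟩ := hns
        refine Matrix.det_zero_of_row_eq hab.ne (funext fun i => ?_)
        have h1 := hm hab
        have h2 := hh' a
        have h3 := hh' b
        have h4 := hp a
        have h5 := hp b
        have h6 : h' a = h' b := by grind
        simp only [Matrix.of_apply, h6]


/-! ### Staircase arrays and families of paths -/

lemma lt_card_filter_range_iff {p : ℕ → Prop} [DecidablePred p] {M : ℕ}
    (hp : ∀ s, s + 1 < M → p (s + 1) → p s) (s : ℕ) : s < #{s ∈ range M | p s} ↔ s < M ∧ p s := by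
  have hle : ∀ d s, s + d < M → p (s + d) → p s := by
    intro d
    induction d with
    | zero => exact fun _ _ h => h
    | succ d ih => exact fun s hs h => ih s (by omega) (hp _ hs h)
  by_cases h : s < M ∧ p s
  · refine iff_of_true ?_ h
    rw [← Nat.succ_le_iff, ← card_range s.succ]
    refine card_le_card fun r hr => ?_
    rw [mem_range] at hr
    obtain ⟨d, rfl⟩ := Nat.exists_eq_add_of_le (Nat.le_of_lt_succ hr)
    exact mem_filter.2 ⟨mem_range.2 (by omega), hle d r h.1 h.2⟩
  · refine iff_of_false ?_ h
    rw [not_lt]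
    conv_rhs => rw [← card_range s]
    refine card_le_card fun r hr => ?_
    rw [mem_filter, mem_range] at hr
    rw [mem_range]
    by_contra hsr
    obtain ⟨d, rfl⟩ := Nat.exists_eq_add_of_le (not_lt.1 hsr)
    exact h ⟨by omega, hle d s hr.1 hr.2⟩

lemma sub_le_card_filter_iff {k : ℕ} {p : Fin k → Prop} [DecidablePred p]
    (hp : ∀ a b, a ≤ b → p a → p b) (l : Fin k) : k - l ≤ #{l | p l} ↔ p l := by
  by_cases h : p l
  · refine iff_of_true ?_ h
    rw [← Fin.card_Ici]
    exact card_le_card fun b hb => mem_filter.2 ⟨mem_univ _, hp l b (mem_Ici.1 hb) h⟩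
  · refine iff_of_false ?_ h
    have h1 : #{l | p l} ≤ #(Ioi l) := by
      refine card_le_card fun b hb => mem_Ioi.2 (lt_of_not_ge fun hbl => h ?_)
      exact hp b l hbl (mem_filter.1 hb).2
    rw [Fin.card_Ioi] at h1
    omega

lemma card_filter_sub_le {k c : ℕ} (hc : c ≤ k) : #{l : Fin k | k - (l : ℕ) ≤ c} = c := by
  have h2 : (univ.filter fun l : Fin k => k - (l : ℕ) ≤ c) =
      (univ.filter fun l : Fin k => (l : ℕ) < c).image Fin.rev := by
    ext l
    simp only [mem_filter, mem_univ, true_and, mem_image]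
    constructor
    · intro hl
      exact ⟨Fin.rev l, by rw [Fin.val_rev]; omega, Fin.rev_rev l⟩
    · rintro ⟨a, ha, rfl⟩
      rw [Fin.val_rev]
      omega
  rw [h2, card_image_of_injective _ Fin.rev_injective, Fin.card_filter_val_lt, min_eq_right hc]

namespace IsStair

variable {N k : ℕ} {π : ℕ → ℕ → ℕ}

lemma le_diag {u : Fin N → ℕ} (h : IsStair N u π) {i j : ℕ} (hij : i + j + 2 < N) :
    π i j ≤ π (i + 1) (j + 1) :=
  (h.le_succ_left i j (by omega)).trans (h.le_succ_right (i + 1) j (by omega))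

lemma le_const (h : IsStair N (fun _ => k) π) (i j : ℕ) : π i j ≤ k := by
  rcases Nat.lt_or_ge (i + j) N with hij | hij
  · obtain ⟨d, hd⟩ : ∃ d, i + j + d + 1 = N := ⟨N - (i + j) - 1, by omega⟩
    induction d generalizing i with
    | zero => exact h.le_bound i ⟨j, by omega⟩ (by simpa using hd)
    | succ d ih => exact (h.le_succ_left i j (by omega)).trans (ih (i + 1) (by omega) (by omega))
  · rw [h.eq_zero i j hij]
    exact Nat.zero_le k

end IsStair

/-- The length of the `t`-th diagonal of a staircase array. -/
def diagLen (N t : ℕ) : ℕ := min (N + 1 - (t + 1) / 2) (t / 2)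

/-- The entries of the `t`-th diagonal of a staircase array, from the largest one on. -/
def diagEntry (N : ℕ) (π : ℕ → ℕ → ℕ) (t s : ℕ) : ℕ := π (N - (t + 1) / 2 - s) (t / 2 - 1 - s)

/-- The number of entries of size at least `k - l` on the `t`-th diagonal of an array. -/
def diagCount (N k : ℕ) (π : ℕ → ℕ → ℕ) (t l : ℕ) : ℕ :=
  #{s ∈ range (diagLen N t) | k - l ≤ diagEntry N π t s}

lemma lt_diagCount_iff {N k : ℕ} {u : Fin N → ℕ} {π : ℕ → ℕ → ℕ} (h : IsStair N u π)
    (t l s : ℕ) : s < diagCount N k π t l ↔ s < diagLen N t ∧ k - l ≤ diagEntry N π t s := by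
  refine lt_card_filter_range_iff (fun s hs (h1 : k - l ≤ diagEntry N π t (s + 1)) => h1.trans ?_) s
  rw [diagLen] at hs
  have := h.le_diag (i := N - (t + 1) / 2 - (s + 1)) (j := t / 2 - 1 - (s + 1)) (by omega)
  rwa [show N - (t + 1) / 2 - (s + 1) + 1 = N - (t + 1) / 2 - s by omega,
    show t / 2 - 1 - (s + 1) + 1 = t / 2 - 1 - s by omega] at this

/-- The family of paths of a staircase array. -/
def stairToPaths (N k : ℕ) (π : ℕ → ℕ → ℕ) (t : ℕ) (l : Fin k) : ℤ :=
  2 * ((l : ℕ) : ℤ) + if t ≤ 2 * (N + 1) then ((t % 2 + 2 * diagCount N k π t l : ℕ) : ℤ) else 0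

/-- The staircase array of a family of paths. -/
def pathsToStair {k : ℕ} (N : ℕ) (Y : ℕ → Fin k → ℤ) (i j : ℕ) : ℕ :=
  if i + j < N then
    #{l : Fin k | ((N + 1 - i - j : ℕ) : ℤ) + 2 * ((l : ℕ) : ℤ) ≤ Y (N + 1 - i + j) l} else 0

lemma diagCount_even {N k : ℕ} {u : Fin N → ℕ} {π : ℕ → ℕ → ℕ} (h : IsStair N u π)
    {a : ℕ} (ha : a < N + 1) (l : ℕ) : diagCount N k π (2 * a + 1) l ≤ diagCount N k π (2 * a) l ∧
      diagCount N k π (2 * a) l ≤ diagCount N k π (2 * a + 1) l + 1 := by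
  constructor
  · refine le_of_forall_lt fun s hs => ?_
    rw [lt_diagCount_iff h, diagLen, diagEntry] at hs ⊢
    rw [show (2 * a + 1 + 1) / 2 = a + 1 by omega, show (2 * a + 1) / 2 = a by omega] at hs
    rw [show (2 * a + 1) / 2 = a by omega, show 2 * a / 2 = a by omega]
    have := h.le_succ_left (N - (a + 1) - s) (a - 1 - s) (by omega)
    rw [show N - (a + 1) - s + 1 = N - a - s by omega] at this
    omega
  · by_contra! hlt
    have h1 := (lt_diagCount_iff h (2 * a) l _).1 hlt
    refine lt_irrefl (diagCount N k π (2 * a + 1) l) ((lt_diagCount_iff h _ l _).2 ?_)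
    generalize diagCount N k π (2 * a + 1) l = s at h1
    rw [diagLen, diagEntry] at h1 ⊢
    rw [show (2 * a + 1 + 1) / 2 = a + 1 by omega, show (2 * a + 1) / 2 = a by omega]
    rw [show (2 * a + 1) / 2 = a by omega, show 2 * a / 2 = a by omega] at h1
    have := h.le_succ_right (N - a - (s + 1)) (a - 1 - (s + 1)) (by omega)
    rw [show a - 1 - (s + 1) + 1 = a - 1 - s by omega,
      show N - a - (s + 1) = N - (a + 1) - s by omega] at this
    rw [show N - a - (s + 1) = N - (a + 1) - s by omega] at h1
    omega

lemma diagCount_odd {N k : ℕ} {u : Fin N → ℕ} {π : ℕ → ℕ → ℕ} (h : IsStair N u π)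
    {a : ℕ} (ha : a < N + 1) (l : ℕ) :
    diagCount N k π (2 * a + 1) l ≤ diagCount N k π (2 * a + 2) l ∧
      diagCount N k π (2 * a + 2) l ≤ diagCount N k π (2 * a + 1) l + 1 := by
  constructor
  · refine le_of_forall_lt fun s hs => ?_
    rw [lt_diagCount_iff h, diagLen, diagEntry] at hs ⊢
    rw [show (2 * a + 1 + 1) / 2 = a + 1 by omega, show (2 * a + 1) / 2 = a by omega] at hs
    rw [show (2 * a + 2 + 1) / 2 = a + 1 by omega, show (2 * a + 2) / 2 = a + 1 by omega]
    have := h.le_succ_right (N - (a + 1) - s) (a - 1 - s) (by omega)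
    rw [show a - 1 - s + 1 = a + 1 - 1 - s by omega] at this
    omega
  · by_contra! hlt
    have h1 := (lt_diagCount_iff h (2 * a + 2) l _).1 hlt
    refine lt_irrefl (diagCount N k π (2 * a + 1) l) ((lt_diagCount_iff h _ l _).2 ?_)
    generalize diagCount N k π (2 * a + 1) l = s at h1
    rw [diagLen, diagEntry] at h1 ⊢
    rw [show (2 * a + 1 + 1) / 2 = a + 1 by omega, show (2 * a + 1) / 2 = a by omega]
    rw [show (2 * a + 2 + 1) / 2 = a + 1 by omega, show (2 * a + 2) / 2 = a + 1 by omega] at h1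
    have := h.le_succ_left (N - (a + 1) - (s + 1)) (a - 1 - s) (by omega)
    rw [show N - (a + 1) - (s + 1) + 1 = N - (a + 1) - s by omega] at this
    rw [show a + 1 - 1 - (s + 1) = a - 1 - s by omega] at h1
    omega

lemma diagCount_mono {N k : ℕ} (π : ℕ → ℕ → ℕ) (t : ℕ) : Monotone (diagCount N k π t) :=
  fun a _ hab => card_le_card (monotone_filter_right _ fun _ _ (hs : k - a ≤ _) =>
    (Nat.sub_le_sub_left hab k).trans hs)

lemma stairToPaths_mem {N k : ℕ} {π : ℕ → ℕ → ℕ} (h : IsStair N (fun _ => k) π) :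
    stairToPaths N k π ∈ pathFamilies (2 * (N + 1)) fun l : Fin k => 2 * ((l : ℕ) : ℤ) := by
  rw [mem_pathFamilies]
  refine ⟨?_, fun t ht => ⟨fun l => ?_, fun a b hab => ?_, fun l => ?_⟩, fun t ht => ?_⟩
  · ext l
    simp [stairToPaths, diagCount, diagLen]
  · rw [stairToPaths, stairToPaths, if_pos (by omega), if_pos (by omega)]
    obtain ⟨a, rfl | rfl⟩ := Nat.even_or_odd' t
    · have := diagCount_even (k := k) h (a := a) (by omega) l
      omega
    · have := diagCount_odd (k := k) h (a := a) (by omega) l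
      rw [show 2 * a + 1 + 1 = 2 * a + 2 by omega]
      omega
  · rw [stairToPaths, stairToPaths, if_pos (by omega), if_pos (by omega)]
    have h1 : (a : ℕ) < b := hab
    have h2 := diagCount_mono (N := N) (k := k) π (t + 1) h1.le
    omega
  · rw [stairToPaths]
    positivity
  · ext l
    rw [stairToPaths]
    split_ifs with h1
    · obtain rfl : t = 2 * (N + 1) := le_antisymm h1 ht
      have h0 : diagLen N (2 * (N + 1)) = 0 := by rw [diagLen]; omega
      simp [diagCount, h0]
    · rw [add_zero]

section pathFamilies

variable {N k : ℕ} {Y : ℕ → Fin k → ℤ}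

lemma pathFamilies_strictMono
    (hY : Y ∈ pathFamilies (2 * (N + 1)) fun l : Fin k => 2 * ((l : ℕ) : ℤ)) (t : ℕ) :
    StrictMono (Y t) ∧ ∀ l, 0 ≤ Y t l := by
  have hd : StrictMono (fun l : Fin k => 2 * ((l : ℕ) : ℤ)) ∧
      ∀ l : Fin k, 0 ≤ 2 * ((l : ℕ) : ℤ) := by
    refine ⟨fun a b hab => ?_, fun l => by positivity⟩
    have h1 : (a : ℕ) < b := hab
    simpa using h1
  obtain ⟨h0, h1, h2⟩ := mem_pathFamilies.1 hY
  cases t with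
  | zero => rwa [h0]
  | succ t =>
    by_cases ht : t < 2 * (N + 1)
    · exact (h1 t ht).2
    · rwa [h2 _ (by omega)]

lemma pathFamilies_le
    (hY : Y ∈ pathFamilies (2 * (N + 1)) fun l : Fin k => 2 * ((l : ℕ) : ℤ)) (l : Fin k) {t : ℕ}
    (ht : t ≤ 2 * (N + 1)) : Y t l ≤ 2 * l + t ∧ (Y t l - t) % 2 = 0 := by
  obtain ⟨h0, h1, -⟩ := mem_pathFamilies.1 hY
  induction t with
  | zero => simp [h0]
  | succ t ih =>
    have := (h1 t ht).1 l
    have := ih (by omega)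
    push_cast
    omega

lemma pathFamilies_le'
    (hY : Y ∈ pathFamilies (2 * (N + 1)) fun l : Fin k => 2 * ((l : ℕ) : ℤ)) (l : Fin k) {t : ℕ}
    (ht : t ≤ 2 * (N + 1)) : Y (2 * (N + 1) - t) l ≤ 2 * l + t := by
  obtain ⟨-, h1, h2⟩ := mem_pathFamilies.1 hY
  induction t with
  | zero => simp [h2]
  | succ t ih =>
    have h3 := (h1 (2 * (N + 1) - (t + 1)) (by omega)).1 l
    rw [show 2 * (N + 1) - (t + 1) + 1 = 2 * (N + 1) - t by omega] at h3
    have := ih (by omega)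
    push_cast
    omega

lemma pathFamilies_mono
    (hY : Y ∈ pathFamilies (2 * (N + 1)) fun l : Fin k => 2 * ((l : ℕ) : ℤ)) {t : ℕ}
    (ht : t ≤ 2 * (N + 1)) : Monotone fun l : Fin k => Y t l - 2 * l := by
  have key : ∀ d, ∀ a b : Fin k, (a : ℕ) + d = b → Y t a - 2 * a ≤ Y t b - 2 * b := by
    intro d
    induction d with
    | zero =>
      intro a b hab
      rw [Fin.ext (show (a : ℕ) = b from hab)]
    | succ d ih =>
      intro a b hab
      have h1 := ih a ⟨a + d, by omega⟩ rfl
      have h2 : Y t ⟨a + d, by omega⟩ < Y t b :=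
        (pathFamilies_strictMono hY t).1 (by rw [Fin.lt_def]; simp only; omega)
      have h3 := (pathFamilies_le hY b ht).2
      have h4 := (pathFamilies_le hY ⟨a + d, by omega⟩ ht).2
      simp only at h1
      omega
  intro a b hab
  exact key (b - a) a b (Nat.add_sub_cancel' hab)

lemma two_mul_add_le_of_mem_pathFamilies
    (hY : Y ∈ pathFamilies (2 * (N + 1)) fun l : Fin k => 2 * ((l : ℕ) : ℤ)) (l : Fin k) {t : ℕ}
    (ht : t ≤ 2 * (N + 1)) : 2 * (l : ℤ) + (t % 2 : ℕ) ≤ Y t l := by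
  have h1 := pathFamilies_mono hY ht (show ⟨0, l.pos⟩ ≤ l from Nat.zero_le _)
  have h2 := (pathFamilies_strictMono hY t).2 ⟨0, l.pos⟩
  have h3 := (pathFamilies_le hY ⟨0, l.pos⟩ ht).2
  simp only at h1
  omega

lemma isStair_pathsToStair
    (hY : Y ∈ pathFamilies (2 * (N + 1)) fun l : Fin k => 2 * ((l : ℕ) : ℤ)) :
    IsStair N (fun _ => k) (pathsToStair N Y) := by
  obtain ⟨-, h1, -⟩ := mem_pathFamilies.1 hY
  refine ⟨fun i j hij => if_neg (by omega), fun i j hij => ?_, fun i j hij => ?_,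
    fun i j hij => ?_⟩
  · rw [pathsToStair, pathsToStair, if_pos (by omega), if_pos (by omega)]
    refine card_le_card (monotone_filter_right _ fun l _ hl => ?_)
    have h2 := (h1 (N + 1 - (i + 1) + j) (by omega)).1 l
    rw [show N + 1 - (i + 1) + j + 1 = N + 1 - i + j by omega] at h2
    omega
  · rw [pathsToStair, pathsToStair, if_pos (by omega), if_pos (by omega)]
    refine card_le_card (monotone_filter_right _ fun l _ hl => ?_)
    have h2 := (h1 (N + 1 - i + j) (by omega)).1 l
    rw [show N + 1 - i + j + 1 = N + 1 - i + (j + 1) by omega] at h2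
    omega
  · rw [pathsToStair, if_pos (by omega)]
    exact (card_filter_le _ _).trans (by simp)

lemma pathsToStair_stairToPaths {π : ℕ → ℕ → ℕ} (h : IsStair N (fun _ => k) π) :
    pathsToStair N (stairToPaths N k π) = π := by
  ext i j
  rw [pathsToStair]
  split_ifs with hij
  · rw [← card_filter_sub_le (h.le_const i j)]
    congr 1
    refine filter_congr fun l _ => ?_
    have h1 := lt_diagCount_iff (k := k) h (N + 1 - i + j) l ((N - 1 - i - j) / 2)
    rw [diagLen, diagEntry, show N - (N + 1 - i + j + 1) / 2 - (N - 1 - i - j) / 2 = i by omega,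
      show (N + 1 - i + j) / 2 - 1 - (N - 1 - i - j) / 2 = j by omega] at h1
    rw [stairToPaths, if_pos (by omega)]
    omega
  · exact (h.eq_zero i j (by omega)).symm

lemma stairToPaths_pathsToStair
    (hY : Y ∈ pathFamilies (2 * (N + 1)) fun l : Fin k => 2 * ((l : ℕ) : ℤ)) :
    stairToPaths N k (pathsToStair N Y) = Y := by
  have hS := isStair_pathsToStair hY
  ext t l
  rw [stairToPaths]
  split_ifs with ht
  · have h1 : ∀ s, s < diagCount N k (pathsToStair N Y) t l ↔
        2 * (l : ℤ) + (t % 2 : ℕ) + 2 * s + 2 ≤ Y t l := by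
      intro s
      have hb := (pathFamilies_le hY l ht).1
      have hb' := pathFamilies_le' hY l (t := 2 * (N + 1) - t) (by omega)
      rw [show 2 * (N + 1) - (2 * (N + 1) - t) = t by omega] at hb'
      rw [lt_diagCount_iff hS]
      by_cases hs : s < diagLen N t
      · rw [and_iff_right hs]
        rw [diagLen] at hs
        rw [diagEntry, pathsToStair, if_pos (by omega), sub_le_card_filter_iff,
          show N + 1 - (N - (t + 1) / 2 - s) + (t / 2 - 1 - s) = t by omega]
        · omega
        · intro a b hab h2
          rw [show N + 1 - (N - (t + 1) / 2 - s) + (t / 2 - 1 - s) = t by omega] at h2 ⊢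
          have h3 := pathFamilies_mono hY ht hab
          simp only at h3
          omega
      · refine iff_of_false (fun h => hs h.1) fun h => hs ?_
        rw [diagLen]
        omega
    have h2 := two_mul_add_le_of_mem_pathFamilies hY l ht
    have h3 := (pathFamilies_le hY l ht).2
    have h4 := h1 (diagCount N k (pathsToStair N Y) t l)
    have h5 := h1 (diagCount N k (pathsToStair N Y) t l - 1)
    omega
  · obtain ⟨-, -, h2⟩ := mem_pathFamilies.1 hY
    rw [h2 t (by omega), add_zero]

end pathFamilies

lemma sum_diagCount {N k : ℕ} {π : ℕ → ℕ → ℕ} (h : IsStair N (fun _ => k) π) (t : ℕ) :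
    ∑ l : Fin k, diagCount N k π t l = ∑ s ∈ range (diagLen N t), diagEntry N π t s := by
  simp only [diagCount, card_filter]
  rw [sum_comm]
  refine sum_congr rfl fun s _ => ?_
  rw [← card_filter]
  exact card_filter_sub_le (h.le_const _ _)

lemma altWeight_eq_sum_diagEntry (N : ℕ) (π : ℕ → ℕ → ℕ) : altWeight N π =
    ∑ p ∈ (range (2 * (N + 1))).sigma fun t => range (diagLen N t),
      (-1) ^ p.1 * (diagEntry N π p.1 p.2 : ℤ) := by
  refine sum_bij' (fun p _ => ⟨N + 1 - p.1 + 2 * p.2, (N - 1 - p.1) / 2⟩)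
    (fun p _ => ⟨N - 1 - p.1 % 2 - 2 * p.2, p.1 / 2 - 1 - p.2⟩) ?_ ?_ ?_ ?_ ?_
  · rintro ⟨r, j⟩ h
    simp only [mem_sigma, mem_range, diagLen] at h ⊢
    omega
  · rintro ⟨t, s⟩ h
    simp only [mem_sigma, mem_range, diagLen] at h ⊢
    omega
  · rintro ⟨r, j⟩ h
    simp only [mem_sigma, mem_range] at h
    congr 1 <;> dsimp only <;> omega
  · rintro ⟨t, s⟩ h
    simp only [mem_sigma, mem_range, diagLen] at h
    congr 1 <;> dsimp only <;> omega
  · rintro ⟨r, j⟩ h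
    simp only [mem_sigma, mem_range] at h ⊢
    rw [diagEntry, show N - (N + 1 - r + 2 * j + 1) / 2 - (N - 1 - r) / 2 = r - j by omega,
      show (N + 1 - r + 2 * j) / 2 - 1 - (N - 1 - r) / 2 = j by omega,
      show N + 1 - r + 2 * j = N - 1 - r + 2 * (j + 1) by omega, pow_add, pow_mul]
    simp

lemma sum_range_two_mul_alternating (f : ℕ → ℤ) (n : ℕ) :
    ∑ t ∈ range (2 * n), (-1) ^ t * f t = ∑ a ∈ range n, (f (2 * a) - f (2 * a + 1)) := by
  induction n with
  | zero => simp
  | succ n ih =>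
    rw [show 2 * (n + 1) = 2 * n + 1 + 1 by ring, sum_range_succ, sum_range_succ, ih,
      sum_range_succ, pow_succ, pow_mul]
    simp
    ring

lemma prod_range_two_mul {M : Type*} [CommMonoid M] (f : ℕ → M) (n : ℕ) :
    ∏ t ∈ range (2 * n), f t = ∏ a ∈ range n, (f (2 * a) * f (2 * a + 1)) := by
  induction n with
  | zero => simp
  | succ n ih =>
    rw [show 2 * (n + 1) = 2 * n + 1 + 1 by ring, prod_range_succ, prod_range_succ, ih,
      prod_range_succ, mul_assoc]

lemma familyWt_stairToPaths {N k : ℕ} {q : ℚ} (hq : q ≠ 0) {π : ℕ → ℕ → ℕ}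
    (h : IsStair N (fun _ => k) π) :
    familyWt q (2 * (N + 1)) (stairToPaths N k π) = q ^ altWeight N π := by
  have h1 : altWeight N π = ∑ a ∈ range (N + 1), ∑ l : Fin k,
      ((diagCount N k π (2 * a) l : ℤ) - diagCount N k π (2 * a + 1) l) := by
    rw [altWeight_eq_sum_diagEntry, sum_sigma]
    simp only [← mul_sum, sum_sub_distrib, ← Nat.cast_sum, sum_diagCount h]
    rw [sum_range_two_mul_alternating
      fun t => ((∑ s ∈ range (diagLen N t), diagEntry N π t s : ℕ) : ℤ), sum_sub_distrib, Nat.cast_sum,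
      Nat.cast_sum]
  have hz : ∀ {ι : Type} (s : Finset ι) (f : ι → ℤ), q ^ (∑ i ∈ s, f i) = ∏ i ∈ s, q ^ f i := by
    intro ι s f
    induction s using Finset.induction_on with
    | empty => simp
    | insert a s ha ih => rw [sum_insert ha, prod_insert ha, zpow_add₀ hq, ih]
  rw [h1, familyWt, prod_range_two_mul, hz]
  refine prod_congr rfl fun a ha => ?_
  rw [mem_range] at ha
  rw [hz, ← prod_mul_distrib]
  refine prod_congr rfl fun l _ => ?_
  rw [stepWt, stepWt, if_neg (show ¬ (_ ∧ Even (2 * (N + 1) - (2 * a + 1))) from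
    fun h2 => by have := h2.2; grind), mul_one]
  have he : Even (2 * (N + 1) - 2 * a) := by grind
  have hd := diagCount_even (k := k) h ha l
  simp only [he, and_true, stairToPaths, if_pos (show 2 * a ≤ 2 * (N + 1) by omega),
    if_pos (show 2 * a + 1 ≤ 2 * (N + 1) by omega)]
  generalize diagCount N k π (2 * a + 1) l = x at hd ⊢
  generalize diagCount N k π (2 * a) l = y at hd ⊢
  obtain rfl | rfl : y = x ∨ y = x + 1 := by omega
  · rw [if_neg (by omega), sub_self, zpow_zero]
  · rw [if_pos (by omega), Nat.cast_succ, add_sub_cancel_left, zpow_one]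

lemma sum_stair_zpow_altWeight_eq_sum_familyWt {N k : ℕ} {q : ℚ} (hq : q ≠ 0) :
    ∑ π ∈ stair N (fun _ => k), q ^ altWeight N π =
      ∑ Y ∈ pathFamilies (2 * (N + 1)) fun l : Fin k => 2 * ((l : ℕ) : ℤ),
        familyWt q (2 * (N + 1)) Y :=
  sum_nbij' (stairToPaths N k) (pathsToStair N) (fun _ h => stairToPaths_mem (mem_stair.1 h))
    (fun _ h => mem_stair.2 (isStair_pathsToStair h))
    (fun _ h => pathsToStair_stairToPaths (mem_stair.1 h))
    (fun _ h => stairToPaths_pathsToStair h)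
    fun _ h => (familyWt_stairToPaths hq (mem_stair.1 h)).symm

/-! ### Excited and pleasant diagrams of staircases -/

lemma mem_deltaCells {m a b : ℕ} : (a, b) ∈ deltaCells m ↔ 1 ≤ a ∧ 1 ≤ b ∧ a + b ≤ m := by
  simp only [deltaCells, mem_filter, mem_product, mem_Icc]
  omega

lemma two_mul_card_deltaCells (m : ℕ) : 2 * #(deltaCells (m + 1)) = (m + 1) * m := by
  induction m with
  | zero => simp [deltaCells]
  | succ m ih =>
    have h : deltaCells (m + 1 + 1) =
        deltaCells (m + 1) ∪ (Icc 1 (m + 1)).image fun a => (a, m + 2 - a) := by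
      ext ⟨a, b⟩
      simp only [mem_union, mem_deltaCells, mem_image, mem_Icc, Prod.mk.injEq]
      constructor
      · intro h
        by_cases hab : a + b ≤ m + 1
        · exact Or.inl ⟨h.1, h.2.1, hab⟩
        · exact Or.inr ⟨a, by omega, rfl, by omega⟩
      · rintro (h | ⟨c, h1, rfl, rfl⟩) <;> omega
    rw [h, card_union_of_disjoint, card_image_of_injective, mul_add, ih, Nat.card_Icc]
    · rw [Nat.add_sub_cancel]
      ring
    · exact fun a b hab => congrArg Prod.fst hab
    · rw [disjoint_left]
      rintro ⟨a, b⟩ h1 h2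
      simp only [mem_deltaCells, mem_image, mem_Icc, Prod.mk.injEq] at h1 h2
      obtain ⟨c, h2, rfl, rfl⟩ := h2
      omega

/-- The index set `{(i, j) | i + j < N}` of staircase arrays. -/
def triCells (N : ℕ) : Finset (ℕ × ℕ) := {c ∈ range N ×ˢ range N | c.1 + c.2 < N}

lemma mem_triCells {N : ℕ} {c : ℕ × ℕ} : c ∈ triCells N ↔ c.1 + c.2 < N := by
  simp only [triCells, mem_filter, mem_product, mem_range]
  omega

/-- The diagram obtained by moving each cell of a staircase diagonally, as far as prescribed by
an array. -/
def movedCells (N : ℕ) (π : ℕ → ℕ → ℕ) : Finset (ℕ × ℕ) :=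
  (triCells N).image fun c => (c.1 + 1 + π c.1 c.2, c.2 + 1 + π c.1 c.2)

lemma mem_movedCells {N : ℕ} {π : ℕ → ℕ → ℕ} {a b : ℕ} : (a, b) ∈ movedCells N π ↔
    ∃ i j, i + j < N ∧ i + 1 + π i j = a ∧ j + 1 + π i j = b := by
  simp [movedCells, mem_triCells]

/-- Changing one entry of an array. -/
def updateEntry (π : ℕ → ℕ → ℕ) (i j v : ℕ) (a b : ℕ) : ℕ := if a = i ∧ b = j then v else π a b

lemma updateEntry_self (π : ℕ → ℕ → ℕ) (i j v : ℕ) : updateEntry π i j v i j = v :=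
  if_pos ⟨rfl, rfl⟩

lemma updateEntry_of_ne (π : ℕ → ℕ → ℕ) {i j a b : ℕ} (v : ℕ) (h : ¬ (a = i ∧ b = j)) :
    updateEntry π i j v a b = π a b :=
  if_neg h

lemma maxBelow_le_iff {π : ℕ → ℕ → ℕ} {i j v : ℕ} : maxBelow π i j ≤ v ↔
    (∀ i', i = i' + 1 → π i' j ≤ v) ∧ ∀ j', j = j' + 1 → π i j' ≤ v := by
  rw [maxBelow, max_le_iff]
  refine and_congr ?_ ?_
  · cases i <;> simp
  · cases j <;> simp

namespace IsStair

variable {N k : ℕ} {π : ℕ → ℕ → ℕ}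

lemma maxBelow_le {u : Fin N → ℕ} (h : IsStair N u π) {i j : ℕ} (hij : i + j < N) :
    maxBelow π i j ≤ π i j := by
  rw [maxBelow_le_iff]
  constructor
  · rintro i rfl
    exact h.le_succ_left i j (by omega)
  · rintro j rfl
    exact h.le_succ_right i j (by omega)

lemma le_diag_add {u : Fin N → ℕ} (h : IsStair N u π) {i j : ℕ} (d : ℕ)
    (hij : i + j + 2 * d < N) : π i j ≤ π (i + d) (j + d) := by
  induction d with
  | zero => exact le_rfl
  | succ d ih => exact (ih (by omega)).trans (h.le_diag (by omega))

lemma le_maxBelow {u : Fin N → ℕ} (h : IsStair N u π) {i j : ℕ} (d : ℕ)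
    (hij : i + j + 2 * (d + 1) < N) : π i j ≤ maxBelow π (i + d + 1) (j + d + 1) := by
  have h1 := (maxBelow_le_iff.1 (le_refl (maxBelow π (i + d + 1) (j + d + 1)))).1 _ rfl
  exact ((h.le_diag_add d (by omega)).trans (h.le_succ_right _ _ (by omega))).trans h1

lemma isStair_updateEntry (h : IsStair N (fun _ => k) π) {i j v : ℕ} (hij : i + j < N)
    (h1 : maxBelow π i j ≤ v) (h2 : i + j + 1 < N → v ≤ π (i + 1) j ∧ v ≤ π i (j + 1))
    (h3 : i + j + 1 = N → v ≤ k) : IsStair N (fun _ => k) (updateEntry π i j v) := by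
  rw [maxBelow_le_iff] at h1
  refine ⟨fun a b hab => ?_, fun a b hab => ?_, fun a b hab => ?_, fun a b hab => ?_⟩
  · rw [updateEntry_of_ne _ _ (by omega), h.eq_zero a b hab]
  · have := h.le_succ_left a b hab
    rw [updateEntry, updateEntry]
    split_ifs with h4 h5 h5
    · omega
    · obtain ⟨rfl, rfl⟩ := h4
      exact (h2 (by omega)).1
    · obtain ⟨rfl, rfl⟩ := h5
      exact h1.1 a rfl
    · exact this
  · have := h.le_succ_right a b hab
    rw [updateEntry, updateEntry]
    split_ifs with h4 h5 h5
    · omega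
    · obtain ⟨rfl, rfl⟩ := h4
      exact (h2 (by omega)).2
    · obtain ⟨rfl, rfl⟩ := h5
      exact h1.2 b rfl
    · exact this
  · rw [updateEntry]
    split_ifs with h4
    · exact h3 (by omega)
    · exact h.le_const a b

lemma moved_inj {u : Fin N → ℕ} (h : IsStair N u π) {i j i' j' : ℕ} (hij : i + j < N)
    (hij' : i' + j' < N) (h1 : i + 1 + π i j = i' + 1 + π i' j')
    (h2 : j + 1 + π i j = j' + 1 + π i' j') : i = i' ∧ j = j' := by
  rcases le_total i i' with hi | hi
  · obtain ⟨d, rfl⟩ := Nat.exists_eq_add_of_le hi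
    obtain rfl : j' = j + d := by omega
    have := h.le_diag_add d (i := i) (j := j) (by omega)
    omega
  · obtain ⟨d, rfl⟩ := Nat.exists_eq_add_of_le hi
    obtain rfl : j = j' + d := by omega
    have := h.le_diag_add d (i := i') (j := j') (by omega)
    omega

lemma card_movedCells {u : Fin N → ℕ} (h : IsStair N u π) :
    #(movedCells N π) = #(triCells N) := by
  refine card_image_of_injOn fun c hc c' hc' hcc => ?_
  rw [mem_coe, mem_triCells] at hc hc'
  have := h.moved_inj hc hc' (congrArg Prod.fst hcc) (congrArg Prod.snd hcc)
  exact Prod.ext this.1 this.2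

lemma movedCells_updateEntry {u : Fin N → ℕ} (h : IsStair N u π) {i j : ℕ} (hij : i + j < N)
    (v : ℕ) : movedCells N (updateEntry π i j v) =
      insert (i + 1 + v, j + 1 + v)
        ((movedCells N π).erase (i + 1 + π i j, j + 1 + π i j)) := by
  ext ⟨a, b⟩
  rw [mem_insert, mem_erase, mem_movedCells, mem_movedCells]
  constructor
  · rintro ⟨i', j', h1, rfl, rfl⟩
    by_cases hc : i' = i ∧ j' = j
    · obtain ⟨rfl, rfl⟩ := hc
      left
      rw [updateEntry_self]
    · right
      rw [updateEntry_of_ne _ _ hc]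
      refine ⟨fun heq => hc ?_, i', j', h1, rfl, rfl⟩
      exact h.moved_inj h1 hij (congrArg Prod.fst heq) (congrArg Prod.snd heq)
  · rintro (heq | ⟨hne, i', j', h1, rfl, rfl⟩)
    · rw [Prod.mk.injEq] at heq
      exact ⟨i, j, hij, by rw [updateEntry_self, heq.1], by rw [updateEntry_self, heq.2]⟩
    · refine ⟨i', j', h1, ?_⟩
      rw [updateEntry_of_ne]
      · exact ⟨rfl, rfl⟩
      · rintro ⟨rfl, rfl⟩
        exact hne rfl

lemma movedCells_subset (h : IsStair N (fun _ => k) π) :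
    movedCells N π ⊆ deltaCells (N + 1 + 2 * k) := by
  rintro ⟨a, b⟩ hab
  obtain ⟨i, j, hij, rfl, rfl⟩ := mem_movedCells.1 hab
  have := h.le_const i j
  exact mem_deltaCells.2 (by omega)

end IsStair

lemma movedCells_zero (N : ℕ) : movedCells N 0 = deltaCells (N + 1) := by
  ext ⟨a, b⟩
  rw [mem_movedCells, mem_deltaCells]
  simp only [Pi.zero_apply, add_zero]
  constructor
  · rintro ⟨i, j, h, rfl, rfl⟩
    omega
  · intro h
    exact ⟨a - 1, b - 1, by omega, by omega, by omega⟩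

lemma isStair_zero (N : ℕ) (u : Fin N → ℕ) : IsStair N u 0 :=
  ⟨fun _ _ _ => rfl, fun _ _ _ => le_rfl, fun _ _ _ => le_rfl, fun _ _ _ => Nat.zero_le _⟩

lemma IsStair.exists_of_excitedStep {N k : ℕ} {π : ℕ → ℕ → ℕ} (h : IsStair N (fun _ => k) π)
    {D : Finset (ℕ × ℕ)} (hD : ExcitedStep (deltaCells (N + 1 + 2 * k)) (movedCells N π) D) :
    ∃ ρ, IsStair N (fun _ => k) ρ ∧ D = movedCells N ρ := by
  obtain ⟨a, b, h1, h2, h3, -, h4, rfl⟩ := hD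
  obtain ⟨i, j, hij, rfl, rfl⟩ := mem_movedCells.1 h1
  refine ⟨updateEntry π i j (π i j + 1),
    h.isStair_updateEntry hij ((h.maxBelow_le hij).trans (by omega))
    (fun hij' => ⟨?_, ?_⟩) (fun hij' => ?_), (h.movedCells_updateEntry hij (π i j + 1)).symm⟩
  · refine lt_of_le_of_ne (h.le_succ_left i j hij') fun heq => h2 ?_
    exact mem_movedCells.2 ⟨i + 1, j, by omega, by omega, by omega⟩
  · refine lt_of_le_of_ne (h.le_succ_right i j hij') fun heq => h3 ?_
    exact mem_movedCells.2 ⟨i, j + 1, by omega, by omega, by omega⟩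
  · rw [mem_deltaCells] at h4
    omega

/-- Decreasing an inclusion-minimal nonzero entry undoes an excited move. -/
lemma IsStair.excitedStep_updateEntry {N k : ℕ} {π : ℕ → ℕ → ℕ} (h : IsStair N (fun _ => k) π)
    {i j : ℕ} (hij : i + j < N) (hpos : 0 < π i j)
    (hmin : ∀ i' j', i' + j' < i + j → π i' j' = 0) :
    IsStair N (fun _ => k) (updateEntry π i j (π i j - 1)) ∧
      ExcitedStep (deltaCells (N + 1 + 2 * k)) (movedCells N (updateEntry π i j (π i j - 1)))
        (movedCells N π) := by
  have hS : IsStair N (fun _ => k) (updateEntry π i j (π i j - 1)) := by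
    refine h.isStair_updateEntry hij ?_ (fun hij' => ⟨?_, ?_⟩) fun _ => ?_
    · rw [maxBelow_le_iff]
      constructor
      · rintro i rfl
        rw [hmin i j (by omega)]
        exact Nat.zero_le _
      · rintro j rfl
        rw [hmin i j (by omega)]
        exact Nat.zero_le _
    · exact (Nat.sub_le _ _).trans (h.le_succ_left i j hij')
    · exact (Nat.sub_le _ _).trans (h.le_succ_right i j hij')
    · exact (Nat.sub_le _ _).trans (h.le_const i j)
  have hback : updateEntry (updateEntry π i j (π i j - 1)) i j (π i j) = π := by
    ext a b
    simp only [updateEntry]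
    split_ifs with hab
    · rw [hab.1, hab.2]
    · rfl
  have hk := h.le_const i j
  refine ⟨hS, i + π i j, j + π i j, ?_, ?_, ?_, ?_, mem_deltaCells.2 (by omega), ?_⟩
  · exact mem_movedCells.2 ⟨i, j, hij, by rw [updateEntry_self]; omega,
      by rw [updateEntry_self]; omega⟩
  · intro hc
    obtain ⟨i', j', hij', h1, h2⟩ := mem_movedCells.1 hc
    have hne : ¬(i' = i ∧ j' = j) := by omega
    rw [updateEntry_of_ne _ _ hne] at h1 h2
    rcases Nat.lt_or_ge i i' with hi | hi
    · obtain ⟨d, rfl⟩ := Nat.exists_eq_add_of_le (show i + 1 ≤ i' from hi)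
      obtain rfl : j' = j + d := by omega
      have h3 := h.le_succ_left i j (by omega)
      have h4 := h.le_diag_add d (i := i + 1) (j := j) (by omega)
      omega
    · have := hmin i' j' (by omega)
      omega
  · intro hc
    obtain ⟨i', j', hij', h1, h2⟩ := mem_movedCells.1 hc
    have hne : ¬(i' = i ∧ j' = j) := by omega
    rw [updateEntry_of_ne _ _ hne] at h1 h2
    rcases Nat.lt_or_ge j j' with hj | hj
    · obtain ⟨d, rfl⟩ := Nat.exists_eq_add_of_le (show j + 1 ≤ j' from hj)
      obtain rfl : i' = i + d := by omega
      have h3 := h.le_succ_right i j (by omega)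
      have h4 := h.le_diag_add d (i := i) (j := j + 1) (by omega)
      omega
    · have := hmin i' j' (by omega)
      omega
  · intro hc
    obtain ⟨i', j', hij', h1, h2⟩ := mem_movedCells.1 hc
    rcases Nat.lt_trichotomy i i' with hi | rfl | hi
    · rw [updateEntry_of_ne _ _ (by omega)] at h1 h2
      obtain ⟨d, rfl⟩ := Nat.exists_eq_add_of_le hi.le
      obtain rfl : j' = j + d := by omega
      have h4 := h.le_diag_add d (i := i) (j := j) (by omega)
      omega
    · obtain rfl : j = j' := by omega
      rw [updateEntry_self] at h1
      omega
    · rw [updateEntry_of_ne _ _ (by omega)] at h1 h2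
      have := hmin i' j' (by omega)
      omega
  · have := hS.movedCells_updateEntry hij (π i j)
    rw [hback, updateEntry_self, show i + 1 + (π i j - 1) = i + π i j by omega,
      show j + 1 + (π i j - 1) = j + π i j by omega] at this
    rw [this, add_right_comm i, add_right_comm j]

lemma sum_updateEntry_lt {N i j v : ℕ} {π : ℕ → ℕ → ℕ} (hij : i + j < N) (hv : v < π i j) :
    ∑ c ∈ triCells N, updateEntry π i j v c.1 c.2 < ∑ c ∈ triCells N, π c.1 c.2 := by
  refine sum_lt_sum (fun c _ => ?_) ⟨(i, j), mem_triCells.2 hij, ?_⟩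
  · rw [updateEntry]
    split_ifs with h
    · rw [h.1, h.2]
      exact hv.le
    · exact le_rfl
  · rwa [updateEntry_self]

lemma IsStair.isExcited {N k : ℕ} : ∀ {π : ℕ → ℕ → ℕ}, IsStair N (fun _ => k) π →
    IsExcited (deltaCells (N + 1 + 2 * k)) (deltaCells (N + 1)) (movedCells N π) := by
  suffices H : ∀ M, ∀ π : ℕ → ℕ → ℕ, ∑ c ∈ triCells N, π c.1 c.2 = M → IsStair N (fun _ => k) π →
      IsExcited (deltaCells (N + 1 + 2 * k)) (deltaCells (N + 1)) (movedCells N π) from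
    fun {_} h => H _ _ rfl h
  intro M
  induction M using Nat.strong_induction_on with
  | _ M ih =>
    rintro π rfl h
    by_cases hz : π = 0
    · rw [hz, movedCells_zero]
      exact Relation.ReflTransGen.refl
    · have hex : ∃ r, ∃ i j, i + j = r ∧ 0 < π i j := by
        by_contra! hc
        exact hz (funext₂ fun i j => Nat.le_zero.1 (hc _ i j rfl))
      obtain ⟨i, j, hr, hpos⟩ := Nat.find_spec hex
      have hmin : ∀ i' j', i' + j' < i + j → π i' j' = 0 := by
        intro i' j' hlt
        by_contra hne
        rw [hr] at hlt
        exact Nat.find_min hex hlt ⟨i', j', rfl, Nat.pos_of_ne_zero hne⟩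
      have hij : i + j < N := by
        by_contra hge
        rw [h.eq_zero i j (not_lt.1 hge)] at hpos
        exact lt_irrefl 0 hpos
      obtain ⟨hS, hstep⟩ := h.excitedStep_updateEntry hij hpos hmin
      exact (ih _ (sum_updateEntry_lt hij (Nat.sub_lt hpos one_pos)) _ rfl hS).tail hstep

lemma isExcited_iff {N k : ℕ} {D : Finset (ℕ × ℕ)} :
    IsExcited (deltaCells (N + 1 + 2 * k)) (deltaCells (N + 1)) D ↔
      ∃ π, IsStair N (fun _ => k) π ∧ D = movedCells N π := by
  constructor
  · intro h
    induction h with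
    | refl => exact ⟨0, isStair_zero _ _, (movedCells_zero N).symm⟩
    | tail _ hstep ih =>
      obtain ⟨π, hπ, rfl⟩ := ih
      exact hπ.exists_of_excitedStep hstep
  · rintro ⟨π, hπ, rfl⟩
    exact hπ.isExcited

/-- The cells swept by the last moves of each cell, up to where it is blocked by its neighbours. -/
def jumpCells (N : ℕ) (π : ℕ → ℕ → ℕ) : Finset (ℕ × ℕ) :=
  ((triCells N).sigma fun c => Ico (maxBelow π c.1 c.2) (π c.1 c.2)).image
    fun p => (p.1.1 + 1 + p.2, p.1.2 + 1 + p.2)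

lemma mem_jumpCells {N : ℕ} {π : ℕ → ℕ → ℕ} {a b : ℕ} : (a, b) ∈ jumpCells N π ↔
    ∃ i j v, i + j < N ∧ maxBelow π i j ≤ v ∧ v < π i j ∧ i + 1 + v = a ∧ j + 1 + v = b := by
  simp only [jumpCells, mem_image, mem_sigma, mem_triCells, mem_Ico, Sigma.exists, Prod.exists,
    Prod.mk.injEq, and_assoc]

lemma jumpSum_eq_sum_triCells (N : ℕ) (π : ℕ → ℕ → ℕ) :
    jumpSum N π = ∑ c ∈ triCells N, (π c.1 c.2 - maxBelow π c.1 c.2) := by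
  refine sum_bij' (fun p _ => (p.1 - p.2, p.2)) (fun c _ => ⟨c.1 + c.2, c.2⟩) ?_ ?_ ?_ ?_ ?_
  · rintro ⟨r, j⟩ h
    simp only [mem_sigma, mem_range, mem_triCells] at h ⊢
    omega
  · rintro ⟨i, j⟩ h
    simp only [mem_sigma, mem_range, mem_triCells] at h ⊢
    omega
  · rintro ⟨r, j⟩ h
    simp only [mem_sigma, mem_range] at h
    congr 1
    dsimp only
    omega
  · rintro ⟨i, j⟩ h
    simp
  · exact fun _ _ => rfl

namespace IsStair

variable {N k : ℕ} {π : ℕ → ℕ → ℕ}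

lemma card_jumpCells {u : Fin N → ℕ} (h : IsStair N u π) : #(jumpCells N π) = jumpSum N π := by
  rw [jumpCells, card_image_of_injOn, card_sigma, jumpSum_eq_sum_triCells]
  · simp only [Nat.card_Ico]
  · have key : ∀ i j d v v', i + j + 2 * (d + 1) < N → v < π i j →
        maxBelow π (i + d + 1) (j + d + 1) ≤ v' → i + 1 + v ≠ i + d + 1 + 1 + v' := by
      intro i j d v v' h1 h2 h3
      have := h.le_maxBelow d h1
      omega
    rintro ⟨⟨i, j⟩, v⟩ hc ⟨⟨i', j'⟩, v'⟩ hc' heq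
    simp only [coe_sigma, Set.mem_sigma_iff, mem_coe, mem_triCells, mem_Ico] at hc hc'
    simp only [Prod.mk.injEq] at heq
    rcases Nat.lt_trichotomy i i' with hi | rfl | hi
    · obtain ⟨d, rfl⟩ := Nat.exists_eq_add_of_lt hi
      obtain rfl : j' = j + d + 1 := by omega
      exact absurd heq.1 (key i j d v v' (by omega) hc.2.2 hc'.2.1)
    · obtain rfl : v = v' := by omega
      obtain rfl : j = j' := by omega
      rfl
    · obtain ⟨d, rfl⟩ := Nat.exists_eq_add_of_lt hi
      obtain rfl : j = j' + d + 1 := by omega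
      exact absurd heq.1.symm (key i' j' d v' v (by omega) hc'.2.2 hc.2.1)

lemma jumpCells_subset (h : IsStair N (fun _ => k) π) :
    jumpCells N π ⊆ deltaCells (N + 1 + 2 * k) \ movedCells N π := by
  rintro ⟨a, b⟩ hab
  obtain ⟨i, j, v, hij, h1, h2, rfl, rfl⟩ := mem_jumpCells.1 hab
  have hk := h.le_const i j
  rw [mem_sdiff, mem_deltaCells, mem_movedCells]
  refine ⟨by omega, ?_⟩
  rintro ⟨i', j', hij', h3, h4⟩
  rcases Nat.lt_or_ge i' i with hi | hi
  · obtain ⟨d, rfl⟩ := Nat.exists_eq_add_of_lt hi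
    obtain rfl : j = j' + d + 1 := by omega
    have := h.le_maxBelow d (i := i') (j := j') (by omega)
    omega
  · obtain ⟨d, rfl⟩ := Nat.exists_eq_add_of_le hi
    obtain rfl : j' = j + d := by omega
    have := h.le_diag_add d (i := i) (j := j) (by omega)
    omega

lemma card_deltaCells_sdiff_movedCells (h : IsStair N (fun _ => k) π) :
    #(deltaCells (N + 1 + 2 * k) \ movedCells N π) = k * (2 * N + 2 * k + 1) := by
  have h1 := card_sdiff_add_card_eq_card h.movedCells_subset
  have h2 := two_mul_card_deltaCells (N + 2 * k)
  have h3 := two_mul_card_deltaCells N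
  rw [← movedCells_zero, (isStair_zero N fun _ => k).card_movedCells, ← h.card_movedCells] at h3
  rw [show N + 2 * k + 1 = N + 1 + 2 * k by ring] at h2
  nlinarith

lemma eq_of_mem_Icc {ρ : ℕ → ℕ → ℕ} {u u' : Fin N → ℕ} (hπ : IsStair N u π) (hρ : IsStair N u' ρ)
    {lam P : Finset (ℕ × ℕ)} (h1 : P ∈ Icc (jumpCells N π) (lam \ movedCells N π))
    (h2 : P ∈ Icc (jumpCells N ρ) (lam \ movedCells N ρ)) : π = ρ := by
  rw [mem_Icc] at h1 h2
  have key : ∀ {π ρ : ℕ → ℕ → ℕ} {u' : Fin N → ℕ}, IsStair N u' ρ → jumpCells N π ≤ P →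
      P ≤ lam \ movedCells N ρ → ∀ i j, i + j < N → maxBelow π i j = maxBelow ρ i j →
      π i j ≤ ρ i j := by
    intro π ρ u' hρ h1 h2 i j hij heq
    by_contra! hlt
    have h3 := h2 (h1 (mem_jumpCells.2 ⟨i, j, ρ i j, hij, heq ▸ hρ.maxBelow_le hij, hlt, rfl, rfl⟩))
    exact (mem_sdiff.1 h3).2 (mem_movedCells.2 ⟨i, j, hij, rfl, rfl⟩)
  have main : ∀ r i j, i + j = r → π i j = ρ i j := by
    intro r
    induction r using Nat.strong_induction_on with
    | _ r ih =>
      rintro i j rfl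
      rcases Nat.lt_or_ge (i + j) N with hij | hij
      · have heq : maxBelow π i j = maxBelow ρ i j := by
          rw [maxBelow, maxBelow]
          congr 1
          · split_ifs with hi
            · rfl
            · exact ih _ (by omega) _ _ rfl
          · split_ifs with hj
            · rfl
            · exact ih _ (by omega) _ _ rfl
        exact le_antisymm (key hρ h1.1 h2.2 i j hij heq) (key hπ h2.1 h1.2 i j hij heq.symm)
      · rw [hπ.eq_zero i j hij, hρ.eq_zero i j hij]
  exact funext₂ fun i j => main _ i j rfl

end IsStair

lemma isPleasant_iff {N k : ℕ} {P : Finset (ℕ × ℕ)} :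
    IsPleasant (deltaCells (N + 1 + 2 * k)) (deltaCells (N + 1)) P ↔
      ∃ π ∈ stair N (fun _ => k),
        P ∈ Icc (jumpCells N π) (deltaCells (N + 1 + 2 * k) \ movedCells N π) := by
  constructor
  · rintro ⟨D, hD, hP⟩
    obtain ⟨ρ, hρ, rfl⟩ := isExcited_iff.1 hD
    obtain ⟨π, hπ, hmin⟩ := exists_min_image
      ({π ∈ stair N (fun _ => k) | P ⊆ deltaCells (N + 1 + 2 * k) \ movedCells N π})
      (fun π => ∑ c ∈ triCells N, π c.1 c.2) ⟨ρ, mem_filter.2 ⟨mem_stair.2 hρ, hP⟩⟩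
    rw [mem_filter] at hπ
    refine ⟨π, hπ.1, mem_Icc.2 ⟨?_, hπ.2⟩⟩
    rintro ⟨a, b⟩ hab
    obtain ⟨i, j, v, hij, h1, h2, rfl, rfl⟩ := mem_jumpCells.1 hab
    by_contra hnot
    have hS := mem_stair.1 hπ.1
    have hS' : IsStair N (fun _ => k) (updateEntry π i j v) :=
      hS.isStair_updateEntry hij h1 (fun hij' => ⟨h2.le.trans (hS.le_succ_left i j hij'),
        h2.le.trans (hS.le_succ_right i j hij')⟩) fun _ => h2.le.trans (hS.le_const i j)
    refine (hmin _ (mem_filter.2 ⟨mem_stair.2 hS', fun x hx => ?_⟩)).not_gt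
      (sum_updateEntry_lt hij h2)
    have hx' := mem_sdiff.1 (hπ.2 hx)
    rw [mem_sdiff, hS.movedCells_updateEntry hij, mem_insert, mem_erase]
    refine ⟨hx'.1, ?_⟩
    rintro (rfl | h3)
    · exact hnot hx
    · exact hx'.2 h3.2
  · rintro ⟨π, hπ, hP⟩
    exact ⟨movedCells N π, (mem_stair.1 hπ).isExcited, (mem_Icc.1 hP).2⟩

lemma pleasantCount_eq_sum_stair (N k : ℕ) :
    (pleasantCount (deltaCells (N + 1 + 2 * k)) (deltaCells (N + 1)) : ℚ) =
      2 ^ (k * (2 * N + 2 * k + 1)) * ∑ π ∈ stair N (fun _ => k), (1 / 2 : ℚ) ^ jumpSum N π := by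
  have h : {P | IsPleasant (deltaCells (N + 1 + 2 * k)) (deltaCells (N + 1)) P} =
      ((stair N (fun _ => k)).biUnion fun π =>
        Icc (jumpCells N π) (deltaCells (N + 1 + 2 * k) \ movedCells N π) :
        Finset (Finset (ℕ × ℕ))) := by
    ext P
    rw [Set.mem_ofPred_eq, isPleasant_iff, mem_coe, mem_biUnion]
  rw [pleasantCount, h, Set.ncard_coe_finset, card_biUnion, Nat.cast_sum, mul_sum]
  · refine sum_congr rfl fun π hπ => ?_
    have hS := mem_stair.1 hπ
    rw [card_Icc_finset hS.jumpCells_subset, hS.card_jumpCells,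
      hS.card_deltaCells_sdiff_movedCells, Nat.cast_pow, Nat.cast_ofNat, one_div, inv_pow,
      pow_sub₀ _ two_ne_zero]
    rw [← hS.card_jumpCells, ← hS.card_deltaCells_sdiff_movedCells]
    exact card_le_card hS.jumpCells_subset
  · intro π hπ ρ hρ hne
    refine disjoint_left.2 fun P h1 h2 => hne ?_
    exact (mem_stair.1 hπ).eq_of_mem_Icc (mem_stair.1 hρ) h1 h2

/-! ### The determinant formula -/

lemma pleasantCount_eq_det_pathSum (N k : ℕ) :
    (pleasantCount (deltaCells (N + 1 + 2 * k)) (deltaCells (N + 1)) : ℚ) =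
      2 ^ (k * (k - 1) / 2) * (2 ^ (k * (2 * N + 2 * k + 1)) *
        (Matrix.of fun i j : Fin k => pathSum (1 / 2) (2 * (N + 1 + i + j)) 0).det) := by
  have hq : (1 / 2 : ℚ) ≠ 0 := by norm_num
  have h := sum_familyWt (1 / 2 : ℚ) (2 * (N + 1)) (h := fun l : Fin k => 2 * ((l : ℕ) : ℤ))
    (fun a b hab => by have h1 : (a : ℕ) < b := hab; simpa using h1) (fun l => by positivity)
    (fun l => by grind)
  rw [pleasantCount_eq_sum_stair, sum_stair_pow_jumpSum hq,
    sum_stair_zpow_altWeight_eq_sum_familyWt hq, det_pathSum_hankel]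
  push_cast
  rw [← h, one_div, inv_pow]
  field_simp

lemma prod_two_pow_mul (N k : ℕ) :
    (∏ i : Fin k, (2 : ℚ) ^ (2 * N + 3 + 2 * (i : ℕ))) * ∏ i : Fin k, (2 : ℚ) ^ (2 * (i : ℕ)) =
      2 ^ (k * (2 * N + 2 * k + 1)) := by
  rw [← prod_mul_distrib, Fin.prod_univ_eq_prod_range
    (fun i => (2 : ℚ) ^ (2 * N + 3 + 2 * i) * (2 : ℚ) ^ (2 * i))]
  induction k with
  | zero => simp
  | succ k ih =>
    rw [prod_range_succ, ih, ← pow_add, ← pow_add]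
    congr 1
    ring

theorem statement_15 (n k : ℕ) (hn : 0 < n) (hk : 0 < k) :
    (pleasantCount (deltaCells (n + 2 * k)) (deltaCells n) : ℤ) =
      2 ^ (k * (k - 1) / 2) *
        (Matrix.of fun i j : Fin k =>
          (pleasantCount (deltaCells (n + (i : ℕ) + (j : ℕ) + 2))
            (deltaCells (n + (i : ℕ) + (j : ℕ))) : ℤ)).det := by
  obtain ⟨N, rfl⟩ : ∃ N, n = N + 1 := ⟨n - 1, by omega⟩
  set A := Matrix.of fun i j : Fin k => pathSum (1 / 2) (2 * (N + 1 + i + j)) 0 with hA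
  have hentry : ∀ i j : Fin k, (pleasantCount (deltaCells (N + 1 + (i : ℕ) + (j : ℕ) + 2))
      (deltaCells (N + 1 + (i : ℕ) + (j : ℕ))) : ℚ) =
        2 ^ (2 * N + 3 + 2 * (i : ℕ)) * (2 ^ (2 * (j : ℕ)) * A i j) := by
    intro i j
    have h := pleasantCount_eq_det_pathSum (N + i + j) 1
    rw [Matrix.det_unique] at h
    rw [show N + 1 + (i : ℕ) + j = N + i + j + 1 by ring, hA, Matrix.of_apply,
      show N + 1 + (i : ℕ) + j = N + i + j + 1 by ring]
    rw [mul_one] at h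
    rw [h]
    simp
    ring
  have hdet : ((Matrix.of fun i j : Fin k =>
      (pleasantCount (deltaCells (N + 1 + (i : ℕ) + (j : ℕ) + 2))
        (deltaCells (N + 1 + (i : ℕ) + (j : ℕ))) : ℤ)).det : ℚ) =
      2 ^ (k * (2 * N + 2 * k + 1)) * A.det := by
    rw [← prod_two_pow_mul, mul_assoc, ← Matrix.det_mul_row, ← Matrix.det_mul_column]
    refine ((Int.castRingHom ℚ).map_det _).trans (congrArg Matrix.det ?_)
    ext i j
    simpa using hentry i j
  rw [← Int.cast_inj (α := ℚ), Int.cast_mul, hdet, Int.cast_natCast,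
    pleasantCount_eq_det_pathSum]
  push_cast
  rfl

end Paper
end
end
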